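/- Long time estimate, small energy regime: there exist absolute constants c₀ > 0 and C_{L,0} > 0 such that for every compact time interval J, every classical solution u of ∂ₜₜu − Δu = −f(u) on J with energy E and a priori bound sup_{t∈J} ‖u(t,·)‖_{H̃²(ℝ³)} ≤ M, if E ≤ c₀·g(M)^{−1/2} then ‖u‖⁴_{L⁴ₜL¹²ₓ(J×ℝ³)} ≤ C_{L,0}. -/

import Mathlib

open MeasureTheory Set

noncomputable section

abbrev Space : Type := EuclideanSpace ℝ (Fin 3)

/-- The loglog weight `g(u) = (log log (10 + u²))^c`. -/
def g (c u : ℝ) : ℝ := Real.log (Real.log (10 + u ^ 2)) ^ c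

/-- The nonlinearity `f(u) = u⁵ g(u)`. -/
def f (c u : ℝ) : ℝ := u ^ 5 * g c u

/-- The potential `F(u) = ∫₀ᵘ f(v) dv`. -/
def Fpot (c u : ℝ) : ℝ := ∫ v in (0:ℝ)..u, f c v

/-- First time derivative `∂ₜ u`. -/
def dt1 (u : ℝ → Space → ℝ) (t : ℝ) (x : Space) : ℝ := deriv (fun s => u s x) t

/-- Second time derivative `∂ₜₜ u`. -/
def dt2 (u : ℝ → Space → ℝ) (t : ℝ) (x : Space) : ℝ := deriv (fun s => dt1 u s x) t

/-- The spatial Laplacian. -/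
def lap (h : Space → ℝ) (x : Space) : ℝ :=
  ∑ i : Fin 3, fderiv ℝ (fun y => fderiv ℝ h y (EuclideanSpace.single i 1)) x
    (EuclideanSpace.single i 1)

/-- A classical solution of `∂ₜₜ u - Δ u = -f(u)` on the time interval `J`:
infinitely differentiable, compactly supported in space for each fixed time,
and satisfying the equation. -/
structure IsClassicalSol (c : ℝ) (J : Set ℝ) (u : ℝ → Space → ℝ) : Prop where
  smooth : ContDiffOn ℝ (⊤ : ℕ∞) (fun p : ℝ × Space => u p.1 p.2) (J ×ˢ (Set.univ : Set Space))
  compactSpt : ∀ t ∈ J, HasCompactSupport (u t)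
  eqn : ∀ t ∈ J, ∀ x : Space, dt2 u t x - lap (u t) x = - f c (u t x)

/-- The conserved energy. -/
def energy (c : ℝ) (u : ℝ → Space → ℝ) (t : ℝ) : ℝ :=
  (1/2) * (∫ x : Space, (dt1 u t x) ^ 2)
    + (1/2) * (∫ x : Space, ‖gradient (u t) x‖ ^ 2)
    + ∫ x : Space, Fpot c (u t x)

/-- Spatial `L^r` norm. -/
def LxNorm (r : ℝ) (h : Space → ℝ) : ℝ := (∫ x : Space, |h x| ^ r) ^ (1 / r)

/-- Mixed norm `L^q_t L^r_x (J × ℝ³)`. -/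
def LtLxNorm (q r : ℝ) (J : Set ℝ) (u : ℝ → Space → ℝ) : ℝ :=
  (∫ t in J, (LxNorm r (u t)) ^ q) ^ (1 / q)

/-- The homogeneous `H̃² = Ḣ² ∩ Ḣ¹` norm. -/
def H2tildeNorm (h : Space → ℝ) : ℝ :=
  (∫ x : Space, ‖iteratedFDeriv ℝ 2 h x‖ ^ 2) ^ ((1:ℝ)/2)
    + (∫ x : Space, ‖gradient h x‖ ^ 2) ^ ((1:ℝ)/2)

/-- The inhomogeneous `H¹` norm. -/
def H1Norm (h : Space → ℝ) : ℝ :=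
  (∫ x : Space, (h x) ^ 2) ^ ((1:ℝ)/2)
    + (∫ x : Space, ‖gradient h x‖ ^ 2) ^ ((1:ℝ)/2)

/-- Spatial `L^r` norm restricted to the interior of the light cone at time `t`,
i.e. the norm of `h · 1_{|x| < t}`. -/
def LxConeNorm (r t : ℝ) (h : Space → ℝ) : ℝ :=
  (∫ x in Metric.ball (0:Space) t, |h x| ^ r) ^ (1 / r)

/-- Mixed norm `L^q_t L^r_x (Γ₊(J))` on the truncated forward light cone. -/
def LtLxConeNorm (q r : ℝ) (J : Set ℝ) (u : ℝ → Space → ℝ) : ℝ :=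
  (∫ t in J, (LxConeNorm r t (u t)) ^ q) ^ (1 / q)

/-- The local energy `e(t)` (integral over the ball `|x| ≤ t`). -/
def locEnergy (c : ℝ) (u : ℝ → Space → ℝ) (t : ℝ) : ℝ :=
  (1/2) * (∫ x in Metric.closedBall (0:Space) t, (dt1 u t x) ^ 2)
    + (1/2) * (∫ x in Metric.closedBall (0:Space) t, ‖gradient (u t) x‖ ^ 2)
    + ∫ x in Metric.closedBall (0:Space) t, Fpot c (u t x)

/-!
Kirchhoff's formula has positive kernels, so it bounds `|u|` pointwise by spherical waves of the
data and of `|f(u)|`. The Strichartz estimate `L⁴_t L¹²_x` for spherical waves follows by duality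
from an `L²` bound on the advanced potential, whose square is computed in bipolar coordinates: two
spheres of radii `t, t'` around `x, x'` meet only if `|t - t'| ≤ |x - x'|`, so the resulting kernel
is handled by Young's inequality in space and the Hardy–Littlewood–Sobolev inequality in time.

Write `X = ‖u‖⁴` for the norm in `L⁴_t L¹²_x`. The Sobolev bounds `‖u‖_{L⁶} ≲ √E` and
`|u| ≤ K ‖u‖_{H̃²}` control `‖f(u)‖` in `L¹_t L²_x` by `√E g(K M) X`, whence
`X^{1/4} ≲ √E (1 + g(K M) X)`. Since `E² g(M)` is small and `g(K M)` is comparable to `g(M)`, a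
continuity argument bounds `X`, forwards and backwards from a time at which `∂ₜu` has compact
support.
-/

open scoped ENNReal NNReal Topology

section PolarCoordinates

variable {E : Type*} [NormedAddCommGroup E] [NormedSpace ℝ E] [FiniteDimensional ℝ E]
  [MeasurableSpace E] [BorelSpace E] (μ : Measure E) [μ.IsAddHaarMeasure]

omit [FiniteDimensional ℝ E] [MeasurableSpace E] [BorelSpace E] in
lemma norm_smul_sphere {r : ℝ} (hr : 0 ≤ r) (w : Metric.sphere (0 : E) 1) : ‖r • (w : E)‖ = r := by
  rw [norm_smul, norm_eq_of_mem_sphere w, mul_one, Real.norm_of_nonneg hr]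

variable [Nontrivial E]

theorem lintegral_eq_lintegral_toSphere {F : E → ℝ≥0∞} (hF : Measurable F) :
    ∫⁻ y, F y ∂μ = ∫⁻ r in Ioi (0 : ℝ),
      ENNReal.ofReal r ^ (Module.finrank ℝ E - 1) * ∫⁻ w, F (r • (w : E)) ∂μ.toSphere := by
  let polar := (homeomorphUnitSphereProd E).toMeasurableEquiv
  let G : ({(0 : E)}ᶜ : Set E) → ℝ≥0∞ := fun y => F y
  have hG : Measurable G := hF.comp measurable_subtype_coe
  have hGpolar : Measurable (G ∘ polar.symm) := hG.comp polar.symm.measurable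
  calc ∫⁻ y, F y ∂μ
      = ∫⁻ y, G y ∂(μ.comap Subtype.val) := by
        rw [lintegral_subtype_comap (measurableSet_singleton _).compl F, restrict_compl_singleton]
    _ = ∫⁻ p, G (polar.symm p)
          ∂(μ.toSphere.prod (Measure.volumeIoiPow (Module.finrank ℝ E - 1))) :=
        ((μ.measurePreserving_homeomorphUnitSphereProd.symm polar).lintegral_comp hG).symm
    _ = ∫⁻ r : Ioi (0 : ℝ), ∫⁻ w, F ((r : ℝ) • (w : E)) ∂μ.toSphere
          ∂(Measure.volumeIoiPow (Module.finrank ℝ E - 1)) :=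
        lintegral_prod_symm _ hGpolar.aemeasurable
    _ = _ := by
        have hsphere : Measurable fun r : Ioi (0 : ℝ) =>
            ∫⁻ w, F ((r : ℝ) • (w : E)) ∂μ.toSphere := hGpolar.lintegral_prod_left'
        rw [Measure.volumeIoiPow, lintegral_withDensity_eq_lintegral_mul₀' (by fun_prop)
          hsphere.aemeasurable, ← lintegral_subtype_comap measurableSet_Ioi]
        refine lintegral_congr fun r => ?_
        rw [Pi.mul_apply, ENNReal.ofReal_pow (mem_Ioi.1 r.2).le]

theorem lintegral_fun_norm {φ : ℝ → ℝ≥0∞} (hφ : Measurable φ) :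
    ∫⁻ y, φ ‖y‖ ∂μ = μ.toSphere univ *
      ∫⁻ r in Ioi (0 : ℝ), ENNReal.ofReal r ^ (Module.finrank ℝ E - 1) * φ r := by
  rw [lintegral_eq_lintegral_toSphere μ (F := fun y => φ ‖y‖) (by fun_prop),
    ← lintegral_const_mul _ (by fun_prop)]
  refine setLIntegral_congr_fun measurableSet_Ioi fun r (hr : 0 < r) => ?_
  simp only [norm_smul_sphere hr.le, lintegral_const]
  ring

theorem setLIntegral_enorm_sub_rpow (x : E) {A : Set ℝ} (hA : MeasurableSet A) (s : ℝ) :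
    ∫⁻ y in {y | ‖x - y‖ ∈ A}, ‖x - y‖ₑ ^ s ∂μ = μ.toSphere univ *
      ∫⁻ r in A ∩ Ioi 0, ENNReal.ofReal (r ^ (Module.finrank ℝ E - 1 + s)) := by
  have hdim : ((Module.finrank ℝ E - 1 : ℕ) : ℝ) = Module.finrank ℝ E - 1 :=
    Nat.cast_pred Module.finrank_pos
  have hset : MeasurableSet {y | ‖x - y‖ ∈ A} := (by fun_prop : Measurable fun y => ‖x - y‖) hA
  calc ∫⁻ y in {y | ‖x - y‖ ∈ A}, ‖x - y‖ₑ ^ s ∂μ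
      = ∫⁻ y, A.indicator (fun r => ENNReal.ofReal r ^ s) ‖x - y‖ ∂μ := by
        rw [← lintegral_indicator hset]
        simp only [indicator, ofReal_norm]
        rfl
    _ = _ := by
        rw [lintegral_sub_left_eq_self
          (fun y => A.indicator (fun r => ENNReal.ofReal r ^ s) ‖y‖),
          lintegral_fun_norm μ ((by fun_prop : Measurable _).indicator hA),
          ← setLIntegral_indicator hA]
        congr 1
        refine setLIntegral_congr_fun measurableSet_Ioi fun r (hr : 0 < r) => ?_
        by_cases hrA : r ∈ A
        · rw [indicator_of_mem hrA, indicator_of_mem hrA, ENNReal.ofReal_rpow_of_pos hr,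
            ← ENNReal.ofReal_pow hr.le, ← ENNReal.ofReal_mul (by positivity),
            ← Real.rpow_natCast, ← Real.rpow_add hr, hdim]
        · rw [indicator_of_notMem hrA, indicator_of_notMem hrA, mul_zero]

theorem exists_setLIntegral_ball_enorm_sub_rpow_le {s : ℝ} (hs : s < Module.finrank ℝ E) :
    ∃ C : ℝ≥0, ∀ (x : E) (ρ : ℝ), 0 < ρ → ∫⁻ y in Metric.ball x ρ, ‖x - y‖ₑ ^ (-s) ∂μ ≤
      C * ENNReal.ofReal ρ ^ (Module.finrank ℝ E - s) := by
  refine ⟨(μ.toSphere univ).toNNReal * (Module.finrank ℝ E - s)⁻¹.toNNReal, fun x ρ hρ => ?_⟩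
  have hexp : -1 < Module.finrank ℝ E - 1 + -s := by linarith
  have hradial : ∫⁻ r in Iio ρ ∩ Ioi 0, ENNReal.ofReal (r ^ (Module.finrank ℝ E - 1 + -s)) =
      ENNReal.ofReal (ρ ^ (Module.finrank ℝ E - s) * (Module.finrank ℝ E - s)⁻¹) := by
    rw [inter_comm, Ioi_inter_Iio, setLIntegral_congr Ioo_ae_eq_Ioc,
      ← ofReal_integral_eq_lintegral_ofReal
        (intervalIntegral.intervalIntegrable_rpow' hexp).1
        ((ae_restrict_mem measurableSet_Ioc).mono fun r hr => Real.rpow_nonneg hr.1.le _),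
      ← intervalIntegral.integral_of_le hρ.le, integral_rpow (.inl hexp)]
    have : Module.finrank ℝ E - 1 + -s + 1 = Module.finrank ℝ E - s := by ring
    rw [this, Real.zero_rpow (by linarith), sub_zero, div_eq_mul_inv]
  have hball : Metric.ball x ρ = {y | ‖x - y‖ ∈ Iio ρ} := by
    ext y
    rw [Metric.mem_ball', dist_eq_norm, mem_ofPred_eq, mem_Iio]
  rw [hball, setLIntegral_enorm_sub_rpow μ x measurableSet_Iio, hradial, ENNReal.ofReal_mul
    (by positivity), ← ENNReal.ofReal_rpow_of_pos hρ, ENNReal.coe_mul,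
    ENNReal.coe_toNNReal (measure_ne_top _ _), ENNReal.ofNNReal_toNNReal]
  exact (by ring : _ = _ * _ * _).le

theorem exists_setLIntegral_compl_ball_enorm_sub_rpow_le {s : ℝ} (hs : Module.finrank ℝ E < s) :
    ∃ C : ℝ≥0, ∀ (x : E) (ρ : ℝ), 0 < ρ → ∫⁻ y in (Metric.ball x ρ)ᶜ, ‖x - y‖ₑ ^ (-s) ∂μ ≤
      C * ENNReal.ofReal ρ ^ (Module.finrank ℝ E - s) := by
  refine ⟨(μ.toSphere univ).toNNReal * (s - Module.finrank ℝ E)⁻¹.toNNReal, fun x ρ hρ => ?_⟩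
  have hexp : Module.finrank ℝ E - 1 + -s < -1 := by linarith
  have hradial : ∫⁻ r in Ici ρ ∩ Ioi 0, ENNReal.ofReal (r ^ (Module.finrank ℝ E - 1 + -s)) =
      ENNReal.ofReal (ρ ^ (Module.finrank ℝ E - s) * (s - Module.finrank ℝ E)⁻¹) := by
    rw [inter_eq_left.2 (Ici_subset_Ioi.2 hρ), setLIntegral_congr Ioi_ae_eq_Ici.symm,
      ← ofReal_integral_eq_lintegral_ofReal (integrableOn_Ioi_rpow_of_lt hexp hρ)
        ((ae_restrict_mem measurableSet_Ioi).mono fun r hr => Real.rpow_nonneg (hρ.trans hr).le _),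
      integral_Ioi_rpow_of_lt hexp hρ]
    have : Module.finrank ℝ E - 1 + -s + 1 = Module.finrank ℝ E - s := by ring
    rw [this, ← div_eq_mul_inv, ← neg_sub s, neg_div, div_neg, neg_neg]
  have hcompl : (Metric.ball x ρ)ᶜ = {y | ‖x - y‖ ∈ Ici ρ} := by
    ext y
    rw [mem_compl_iff, Metric.mem_ball', dist_eq_norm, mem_ofPred_eq, mem_Ici, not_lt]
  rw [hcompl, setLIntegral_enorm_sub_rpow μ x measurableSet_Ici, hradial, ENNReal.ofReal_mul
    (by positivity), ← ENNReal.ofReal_rpow_of_pos hρ, ENNReal.coe_mul,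
    ENNReal.coe_toNNReal (measure_ne_top _ _), ENNReal.ofNNReal_toNNReal]
  exact (by ring : _ = _ * _ * _).le

end PolarCoordinates

section YoungInequality

lemma mul_rpow_mul_mul_rpow_mul_mul_rpow (a b c : ℝ≥0∞) {l m n : ℝ} (hl : 0 ≤ l) (hm : 0 ≤ m)
    (hn : 0 ≤ n) :
    (b * c) ^ l * (a * c) ^ m * (a * b) ^ n = a ^ (m + n) * b ^ (l + n) * c ^ (l + m) := by
  rw [ENNReal.rpow_add_of_nonneg _ _ hm hn, ENNReal.rpow_add_of_nonneg _ _ hl hn,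
    ENNReal.rpow_add_of_nonneg _ _ hl hm, ENNReal.mul_rpow_of_nonneg _ _ hl,
    ENNReal.mul_rpow_of_nonneg _ _ hm, ENNReal.mul_rpow_of_nonneg _ _ hn]
  ring

theorem lintegral_mul_rpow_le_of_add_eq_one {α : Type*} [MeasurableSpace α] {μ : Measure α}
    {F G H : α → ℝ≥0∞} (hF : AEMeasurable F μ) (hG : AEMeasurable G μ) (hH : AEMeasurable H μ)
    {l m n : ℝ} (hl : 0 ≤ l) (hm : 0 ≤ m) (hn : 0 ≤ n) (h : l + m + n = 1) :
    ∫⁻ x, F x ^ l * G x ^ m * H x ^ n ∂μ ≤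
      (∫⁻ x, F x ∂μ) ^ l * (∫⁻ x, G x ∂μ) ^ m * (∫⁻ x, H x ∂μ) ^ n := by
  have := ENNReal.lintegral_prod_norm_pow_le (μ := μ) Finset.univ (f := ![F, G, H])
    (p := ![l, m, n]) (by simp [Fin.forall_fin_succ, hF, hG, hH])
    (by simpa [Fin.sum_univ_three] using h) (by simp [Fin.forall_fin_succ, hl, hm, hn])
  simpa [Fin.prod_univ_three] using this

variable {E : Type*} [AddCommGroup E] [MeasurableSpace E] [MeasurableAdd₂ E] [MeasurableNeg E]
  (μ : Measure E) [SFinite μ] [μ.IsAddLeftInvariant] [μ.IsNegInvariant]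

omit [μ.IsNegInvariant] in
lemma lintegral_prod_snd_mul_sub {Q k : E → ℝ≥0∞} (hQ : Measurable Q) (hk : Measurable k) :
    ∫⁻ z : E × E, Q z.2 * k (z.1 - z.2) ∂μ.prod μ = (∫⁻ y, Q y ∂μ) * ∫⁻ y, k y ∂μ := by
  rw [lintegral_prod_symm _ (by fun_prop), ← lintegral_mul_const _ hQ]
  refine lintegral_congr fun y => ?_
  simp only
  rw [lintegral_const_mul _ (by fun_prop), lintegral_sub_right_eq_self k]

lemma lintegral_prod_fst_mul_sub {P k : E → ℝ≥0∞} (hP : Measurable P) (hk : Measurable k) :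
    ∫⁻ z : E × E, P z.1 * k (z.1 - z.2) ∂μ.prod μ = (∫⁻ x, P x ∂μ) * ∫⁻ y, k y ∂μ := by
  rw [lintegral_prod _ (by fun_prop), ← lintegral_mul_const _ hP]
  refine lintegral_congr fun x => ?_
  simp only
  rw [lintegral_const_mul _ (by fun_prop), lintegral_sub_left_eq_self k]

theorem lintegral_lintegral_mul_mul_sub_le {P Q k : E → ℝ≥0∞} (hP : Measurable P)
    (hQ : Measurable Q) (hk : Measurable k) {p q r : ℝ} (hp : 1 ≤ p) (hq : 1 ≤ q) (hr : 1 ≤ r)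
    (hpqr : p⁻¹ + q⁻¹ + r⁻¹ = 2) :
    ∫⁻ x, ∫⁻ y, P x * Q y * k (x - y) ∂μ ∂μ ≤
      eLpNorm' P p μ * eLpNorm' Q q μ * eLpNorm' k r μ := by
  have hp' : 0 ≤ 1 - p⁻¹ := sub_nonneg.2 (inv_le_one_of_one_le₀ hp)
  have hq' : 0 ≤ 1 - q⁻¹ := sub_nonneg.2 (inv_le_one_of_one_le₀ hq)
  have hr' : 0 ≤ 1 - r⁻¹ := sub_nonneg.2 (inv_le_one_of_one_le₀ hr)
  have hsum : (1 - p⁻¹) + (1 - q⁻¹) + (1 - r⁻¹) = 1 := by linarith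
  have hcollect (a b c : ℝ≥0∞) :
      (b * c) ^ (1 - p⁻¹) * (a * c) ^ (1 - q⁻¹) * (a * b) ^ (1 - r⁻¹) =
        a ^ p⁻¹ * b ^ q⁻¹ * c ^ r⁻¹ := by
    rw [mul_rpow_mul_mul_rpow_mul_mul_rpow a b c hp' hq' hr']
    congr 3 <;> linarith
  have hPQ : ∫⁻ z : E × E, P z.1 ^ p * Q z.2 ^ q ∂μ.prod μ =
      (∫⁻ y, P y ^ p ∂μ) * ∫⁻ y, Q y ^ q ∂μ :=
    lintegral_prod_mul (hP.pow_const p).aemeasurable (hQ.pow_const q).aemeasurable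
  have hsplit (z : E × E) : P z.1 * Q z.2 * k (z.1 - z.2) =
      (Q z.2 ^ q * k (z.1 - z.2) ^ r) ^ (1 - p⁻¹) * (P z.1 ^ p * k (z.1 - z.2) ^ r) ^ (1 - q⁻¹) *
        (P z.1 ^ p * Q z.2 ^ q) ^ (1 - r⁻¹) := by
    rw [hcollect, ENNReal.rpow_rpow_inv (by positivity), ENNReal.rpow_rpow_inv (by positivity),
      ENNReal.rpow_rpow_inv (by positivity)]
  rw [← lintegral_prod (fun z : E × E => P z.1 * Q z.2 * k (z.1 - z.2)) (by fun_prop)]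
  simp only [hsplit]
  refine (lintegral_mul_rpow_le_of_add_eq_one (by fun_prop) (by fun_prop) (by fun_prop) hp' hq'
    hr' hsum).trans_eq ?_
  rw [lintegral_prod_snd_mul_sub μ (hQ.pow_const q) (hk.pow_const r),
    lintegral_prod_fst_mul_sub μ (hP.pow_const p) (hk.pow_const r), hPQ, hcollect]
  simp only [eLpNorm'_eq_lintegral_enorm, enorm_eq_self, one_div]

end YoungInequality

section HardyLittlewoodSobolev

variable {E : Type*} [NormedAddCommGroup E] [NormedSpace ℝ E] [FiniteDimensional ℝ E]
  [Nontrivial E] [MeasurableSpace E] [BorelSpace E] (μ : Measure E) [μ.IsAddHaarMeasure]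

theorem exists_setLIntegral_compl_ball_mul_enorm_sub_rpow_le {α p q : ℝ} (hpq : p.HolderConjugate q)
    (hα : Module.finrank ℝ E < α * q) :
    ∃ C : ℝ≥0, ∀ φ : E → ℝ≥0∞, Measurable φ → ∀ (x : E) (ρ : ℝ), 0 < ρ →
      ∫⁻ y in (Metric.ball x ρ)ᶜ, φ y * ‖x - y‖ₑ ^ (-α) ∂μ ≤
        C * (eLpNorm' φ p μ * ENNReal.ofReal ρ ^ (Module.finrank ℝ E / q - α)) := by
  obtain ⟨C, hC⟩ := exists_setLIntegral_compl_ball_enorm_sub_rpow_le μ hα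
  refine ⟨C ^ (1 / q), fun φ hφ x ρ hρ => ?_⟩
  have hq : 0 < q := hpq.symm.pos
  calc ∫⁻ y in (Metric.ball x ρ)ᶜ, φ y * ‖x - y‖ₑ ^ (-α) ∂μ
      ≤ (∫⁻ y in (Metric.ball x ρ)ᶜ, φ y ^ p ∂μ) ^ (1 / p) *
          (∫⁻ y in (Metric.ball x ρ)ᶜ, (‖x - y‖ₑ ^ (-α)) ^ q ∂μ) ^ (1 / q) :=
        ENNReal.lintegral_mul_le_Lp_mul_Lq _ hpq hφ.aemeasurable (by fun_prop)
    _ ≤ eLpNorm' φ p μ *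
          (C * ENNReal.ofReal ρ ^ (Module.finrank ℝ E - α * q)) ^ (1 / q) := by
        simp only [← ENNReal.rpow_mul, neg_mul, eLpNorm'_eq_lintegral_enorm, enorm_eq_self]
        gcongr
        · exact one_div_nonneg.2 hpq.nonneg
        · exact Measure.restrict_le_self
        · exact hC x ρ hρ
    _ = _ := by
        rw [ENNReal.mul_rpow_of_nonneg _ _ (by positivity), ← ENNReal.rpow_mul,
          ENNReal.coe_rpow_of_nonneg _ (by positivity), mul_left_comm]
        congr 4
        field_simp

theorem exists_setLIntegral_le_mul_enorm_sub_rpow_le_radius {α p q : ℝ}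
    (hpq : p.HolderConjugate q) (hα : α < Module.finrank ℝ E) (hαq : Module.finrank ℝ E < α * q) :
    ∃ C : ℝ≥0, ∀ φ : E → ℝ≥0∞, Measurable φ → ∀ (a : ℝ≥0∞) (x : E) (ρ : ℝ), 0 < ρ →
      ∫⁻ y in {y | φ y ≤ a}, φ y * ‖x - y‖ₑ ^ (-α) ∂μ ≤
        C * (a * ENNReal.ofReal ρ ^ (Module.finrank ℝ E - α) +
          eLpNorm' φ p μ * ENNReal.ofReal ρ ^ (Module.finrank ℝ E / q - α)) := by
  obtain ⟨C₁, hC₁⟩ := exists_setLIntegral_ball_enorm_sub_rpow_le μ hα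
  obtain ⟨C₂, hC₂⟩ := exists_setLIntegral_compl_ball_mul_enorm_sub_rpow_le μ hpq hαq
  refine ⟨max C₁ C₂, fun φ hφ a x ρ hρ => ?_⟩
  rw [← lintegral_inter_add_sdiff _ _ (Metric.isOpen_ball (x := x) (ε := ρ)).measurableSet, mul_add]
  refine add_le_add ?_ ?_
  · calc ∫⁻ y in {y | φ y ≤ a} ∩ Metric.ball x ρ, φ y * ‖x - y‖ₑ ^ (-α) ∂μ
        ≤ ∫⁻ y in {y | φ y ≤ a} ∩ Metric.ball x ρ, a * ‖x - y‖ₑ ^ (-α) ∂μ :=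
          setLIntegral_mono (by fun_prop) fun y hy => mul_le_mul_left hy.1 _
      _ ≤ ∫⁻ y in Metric.ball x ρ, a * ‖x - y‖ₑ ^ (-α) ∂μ := lintegral_mono_set inter_subset_right
      _ ≤ a * (C₁ * ENNReal.ofReal ρ ^ (Module.finrank ℝ E - α)) := by
          rw [lintegral_const_mul _ (by fun_prop)]
          gcongr
          exact hC₁ x ρ hρ
      _ ≤ _ := by
          rw [mul_left_comm]
          gcongr
          exact le_max_left _ _
  · calc ∫⁻ y in {y | φ y ≤ a} \ Metric.ball x ρ, φ y * ‖x - y‖ₑ ^ (-α) ∂μ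
        ≤ ∫⁻ y in (Metric.ball x ρ)ᶜ, φ y * ‖x - y‖ₑ ^ (-α) ∂μ :=
          lintegral_mono_set fun y hy => hy.2
      _ ≤ _ := hC₂ φ hφ x ρ hρ
      _ ≤ _ := by
          gcongr
          exact le_max_right _ _

lemma exists_radius_balance {a S : ℝ≥0∞} (ha0 : a ≠ 0) (ha : a ≠ ∞) (hS0 : S ≠ 0) (hS : S ≠ ∞)
    {α n p : ℝ} (hn : 0 < n) (hp0 : 0 < p) (hp : 2 / p + α / n = 2) :
    ∃ ρ : ℝ, 0 < ρ ∧ a * ENNReal.ofReal ρ ^ (n - α) = a ^ (p - 1) * S ^ (1 - α / n) ∧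
      S ^ (1 / p) * ENNReal.ofReal ρ ^ (-(α / 2)) = a ^ (p - 1) * S ^ (1 - α / n) := by
  have hap0 : a ^ (-p) ≠ 0 := (ENNReal.rpow_pos ha0.bot_lt ha).ne'
  have hap : a ^ (-p) ≠ ∞ := ENNReal.rpow_ne_top_of_ne_zero ha0 ha
  set R := (S * a ^ (-p)) ^ n⁻¹ with hR
  have hRpow (e : ℝ) : R ^ e = S ^ (n⁻¹ * e) * a ^ (-p * (n⁻¹ * e)) := by
    rw [hR, ← ENNReal.rpow_mul, ENNReal.mul_rpow_of_ne_top hS hap, ← ENNReal.rpow_mul]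
  have hSa0 : S * a ^ (-p) ≠ 0 := mul_ne_zero hS0 hap0
  have hSa : S * a ^ (-p) ≠ ∞ := ENNReal.mul_ne_top hS hap
  have hRtop : R ≠ ∞ := ENNReal.rpow_ne_top_of_ne_zero hSa0 hSa
  field_simp at hp
  refine ⟨R.toReal, ENNReal.toReal_pos (ENNReal.rpow_pos hSa0.bot_lt hSa).ne' hRtop, ?_, ?_⟩ <;>
    rw [ENNReal.ofReal_toReal hRtop, hRpow]
  · nth_rewrite 1 [← ENNReal.rpow_one a]
    rw [mul_left_comm, mul_comm, ← ENNReal.rpow_add _ _ ha0 ha]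
    congr 2
    · field_simp
      linarith
    · field_simp
  · rw [← mul_assoc, ← ENNReal.rpow_add _ _ hS0 hS, mul_comm]
    congr 2
    · field_simp
      linarith
    · field_simp
      linarith

-- The radius balances the contribution of the ball, where `φ ≤ a`, against that of its complement.
theorem exists_setLIntegral_le_mul_enorm_sub_rpow_le {α p : ℝ} (hα : 0 < α)
    (hαn : α < Module.finrank ℝ E) (hp : 2 / p + α / Module.finrank ℝ E = 2) :
    ∃ C : ℝ≥0, ∀ φ : E → ℝ≥0∞, Measurable φ → ∫⁻ y, φ y ^ p ∂μ ≠ 0 → ∫⁻ y, φ y ^ p ∂μ ≠ ∞ →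
      ∀ a : ℝ≥0∞, a ≠ 0 → a ≠ ∞ → ∀ x : E,
        ∫⁻ y in {y | φ y ≤ a}, φ y * ‖x - y‖ₑ ^ (-α) ∂μ ≤
          C * (a ^ (p - 1) * (∫⁻ y, φ y ^ p ∂μ) ^ (1 - α / Module.finrank ℝ E)) := by
  have hn : (0 : ℝ) < Module.finrank ℝ E := by exact_mod_cast Module.finrank_pos
  set n := (Module.finrank ℝ E : ℝ)
  have hp_inv : p⁻¹ = 1 - α / n / 2 := by rw [div_eq_mul_inv] at hp; linarith
  have hαn' : α / n < 1 := (div_lt_one hn).2 hαn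
  have hp0 : 0 < p := inv_pos.1 (by linarith)
  have hpq : p.HolderConjugate (2 * n / α) := by
    refine Real.holderConjugate_iff.2 ⟨(inv_lt_one_iff₀.1 ?_).resolve_left hp0.not_ge, ?_⟩
    · linarith [div_pos hα hn]
    · rw [hp_inv, inv_div]
      field_simp
      ring
  obtain ⟨C, hC⟩ := exists_setLIntegral_le_mul_enorm_sub_rpow_le_radius μ hpq hαn
    (by rw [mul_div_cancel₀ _ hα.ne']; linarith)
  refine ⟨2 * C, fun φ hφ hS0 hS a ha0 ha x => ?_⟩
  obtain ⟨ρ, hρ, hnear, hfar⟩ := exists_radius_balance ha0 ha hS0 hS hn hp0 hp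
  refine (hC φ hφ a x ρ hρ).trans_eq ?_
  have hexp : n / (2 * n / α) - α = -(α / 2) := by
    field_simp
    ring
  simp only [eLpNorm'_eq_lintegral_enorm, enorm_eq_self]
  rw [hexp, hnear, hfar, ENNReal.coe_mul, ENNReal.coe_ofNat]
  ring

theorem lintegral_lintegral_le_two_mul_of_symm {X : Type*} [MeasurableSpace X] {ν : Measure X}
    [SFinite ν] {K : X → X → ℝ≥0∞} (hK : Measurable (Function.uncurry K))
    (hsymm : ∀ x y, K x y = K y x) {φ : X → ℝ≥0∞} (hφ : Measurable φ) :
    ∫⁻ x, ∫⁻ y, K x y ∂ν ∂ν ≤ 2 * ∫⁻ x, ∫⁻ y in {y | φ y ≤ φ x}, K x y ∂ν ∂ν := by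
  let A : X → X → ℝ≥0∞ := fun x => {y | φ y ≤ φ x}.indicator (K x)
  have hA : Measurable (Function.uncurry A) :=
    hK.ite (measurableSet_le (hφ.comp measurable_snd) (hφ.comp measurable_fst)) measurable_const
  have hKA (x y : X) : K x y ≤ A x y + A y x := by
    rcases le_total (φ y) (φ x) with h | h
    · exact (indicator_of_mem (s := {y | φ y ≤ φ x}) h (K x)).ge.trans le_self_add
    · rw [hsymm]
      exact (indicator_of_mem (s := {z | φ z ≤ φ y}) h (K y)).ge.trans le_add_self
  calc ∫⁻ x, ∫⁻ y, K x y ∂ν ∂ν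
      ≤ ∫⁻ x, ∫⁻ y, (A x y + A y x) ∂ν ∂ν :=
        lintegral_mono fun x => lintegral_mono fun y => hKA x y
    _ = (∫⁻ x, ∫⁻ y, A x y ∂ν ∂ν) + ∫⁻ x, ∫⁻ y, A y x ∂ν ∂ν := by
        rw [← lintegral_add_left (f := fun x => ∫⁻ y, A x y ∂ν) hA.lintegral_prod_right']
        exact lintegral_congr fun x => lintegral_add_left hA.of_uncurry_left _
    _ = 2 * ∫⁻ x, ∫⁻ y, A x y ∂ν ∂ν := by
        rw [← lintegral_lintegral_swap hA.aemeasurable, two_mul]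
    _ = _ := by
        simp only [A, lintegral_indicator (measurableSet_le hφ measurable_const)]

lemma pos_of_two_div_add_eq_two {p β : ℝ} (hβ : β < 1) (hp : 2 / p + β = 2) : 0 < p := by
  have : 0 < 2 / p := by linarith
  exact (div_pos_iff_of_pos_left two_pos).1 this

theorem exists_lintegral_setLIntegral_le_mul_enorm_sub_rpow_le {α p : ℝ} (hα : 0 < α)
    (hαn : α < Module.finrank ℝ E) (hp : 2 / p + α / Module.finrank ℝ E = 2) :
    ∃ C : ℝ≥0, ∀ φ : E → ℝ≥0∞, Measurable φ → ∫⁻ y, φ y ^ p ∂μ ≠ 0 → ∫⁻ y, φ y ^ p ∂μ ≠ ∞ →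
      ∫⁻ x, ∫⁻ y in {y | φ y ≤ φ x}, φ x * φ y * ‖x - y‖ₑ ^ (-α) ∂μ ∂μ ≤
        C * (∫⁻ y, φ y ^ p ∂μ) ^ (2 / p) := by
  have hn : (0 : ℝ) < Module.finrank ℝ E := by exact_mod_cast Module.finrank_pos
  have hp0 : 0 < p := pos_of_two_div_add_eq_two ((div_lt_one hn).2 hαn) hp
  obtain ⟨C, hC⟩ := exists_setLIntegral_le_mul_enorm_sub_rpow_le μ hα hαn hp
  refine ⟨C, fun φ hφ hS0 hS => ?_⟩
  have hinner : ∀ᵐ x ∂μ, ∫⁻ y in {y | φ y ≤ φ x}, φ x * φ y * ‖x - y‖ₑ ^ (-α) ∂μ ≤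
      C * (∫⁻ y, φ y ^ p ∂μ) ^ (1 - α / Module.finrank ℝ E) * φ x ^ p := by
    filter_upwards [ae_lt_top (hφ.pow_const p) hS] with x hx
    rcases eq_or_ne (φ x) 0 with h0 | h0
    · simp [h0]
    have htop : φ x ≠ ∞ := fun h => by simp [h, hp0] at hx
    simp only [mul_assoc (φ x)]
    rw [lintegral_const_mul _ (by fun_prop)]
    grw [hC φ hφ hS0 hS (φ x) h0 htop x]
    rw [mul_left_comm, ← mul_assoc (φ x), mul_assoc (C : ℝ≥0∞), mul_comm (_ ^ (1 - _))]
    nth_rewrite 1 [← ENNReal.rpow_one (φ x)]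
    rw [← ENNReal.rpow_add _ _ h0 htop, add_sub_cancel]
  have hexp : 2 / p = 1 - α / Module.finrank ℝ E + 1 := by linarith
  refine (lintegral_mono_ae hinner).trans_eq ?_
  rw [lintegral_const_mul _ (hφ.pow_const p), hexp, ENNReal.rpow_add _ _ hS0 hS, ENNReal.rpow_one,
    mul_assoc]

theorem exists_lintegral_lintegral_mul_enorm_sub_rpow_le {α p : ℝ} (hα : 0 < α)
    (hαn : α < Module.finrank ℝ E) (hp : 2 / p + α / Module.finrank ℝ E = 2) :
    ∃ C : ℝ≥0, ∀ φ : E → ℝ≥0∞, Measurable φ →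
      ∫⁻ x, ∫⁻ y, φ x * φ y * ‖x - y‖ₑ ^ (-α) ∂μ ∂μ ≤ C * eLpNorm' φ p μ ^ 2 := by
  have hn : (0 : ℝ) < Module.finrank ℝ E := by exact_mod_cast Module.finrank_pos
  have hp0 : 0 < p := pos_of_two_div_add_eq_two ((div_lt_one hn).2 hαn) hp
  obtain ⟨C, hC⟩ := exists_lintegral_setLIntegral_le_mul_enorm_sub_rpow_le μ hα hαn hp
  refine ⟨max 1 (2 * C), fun φ hφ => ?_⟩
  have hnorm : eLpNorm' φ p μ ^ 2 = (∫⁻ y, φ y ^ p ∂μ) ^ (2 / p) := by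
    simp only [eLpNorm'_eq_lintegral_enorm, enorm_eq_self]
    rw [← ENNReal.rpow_natCast, ← ENNReal.rpow_mul]
    congr 1
    push_cast
    ring
  rcases eq_or_ne (∫⁻ y, φ y ^ p ∂μ) 0 with hS0 | hS0
  · refine (lintegral_eq_zero_of_ae_eq_zero ?_).trans_le zero_le
    filter_upwards [(lintegral_eq_zero_iff (hφ.pow_const p)).1 hS0] with x hx
    simp [(ENNReal.rpow_eq_zero_iff_of_pos hp0).1 hx]
  rcases eq_or_ne (∫⁻ y, φ y ^ p ∂μ) ∞ with hS | hS
  · rw [hnorm, hS, ENNReal.top_rpow_of_pos (by positivity), ENNReal.mul_top (by positivity)]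
    exact le_top
  calc ∫⁻ x, ∫⁻ y, φ x * φ y * ‖x - y‖ₑ ^ (-α) ∂μ ∂μ
      ≤ 2 * ∫⁻ x, ∫⁻ y in {y | φ y ≤ φ x}, φ x * φ y * ‖x - y‖ₑ ^ (-α) ∂μ ∂μ :=
        lintegral_lintegral_le_two_mul_of_symm (by fun_prop)
          (fun x y => by rw [enorm_sub_rev, mul_comm (φ x)]) hφ
    _ ≤ 2 * (C * eLpNorm' φ p μ ^ 2) := by
        rw [hnorm]
        gcongr
        exact hC φ hφ hS0 hS
    _ ≤ _ := by
        rw [← mul_assoc]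
        gcongr
        exact_mod_cast le_max_right 1 (2 * C)

end HardyLittlewoodSobolev

section BipolarCoordinates

lemma sq_add_sq_pos_of_pos (a : ℝ) {ρ : ℝ} (hρ : 0 < ρ) : 0 < a ^ 2 + ρ ^ 2 := by positivity

lemma image_sqrt_sq_add_sq_Ioi (a : ℝ) : (fun ρ => √(a ^ 2 + ρ ^ 2)) '' Ioi 0 = Ioi |a| := by
  ext r
  constructor
  · rintro ⟨ρ, hρ : 0 < ρ, rfl⟩
    exact Real.lt_sqrt_of_sq_lt (by rw [sq_abs]; exact lt_add_of_pos_right _ (pow_pos hρ 2))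
  · intro hr
    have hsq : a ^ 2 < r ^ 2 := sq_lt_sq.2 (hr.trans_le (le_abs_self r))
    refine ⟨√(r ^ 2 - a ^ 2), Real.sqrt_pos.2 (sub_pos.2 hsq), ?_⟩
    simp only [Real.sq_sqrt (sub_pos.2 hsq).le, add_sub_cancel]
    exact Real.sqrt_sq ((abs_nonneg a).trans (mem_Ioi.1 hr).le)

lemma injOn_sqrt_sq_add_sq (a : ℝ) : InjOn (fun ρ => √(a ^ 2 + ρ ^ 2)) (Ioi 0) := by
  intro ρ hρ σ hσ h
  rw [Real.sqrt_inj (by positivity) (by positivity), add_right_inj] at h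
  exact (pow_left_inj₀ (mem_Ioi.1 hρ).le (mem_Ioi.1 hσ).le two_ne_zero).1 h

lemma hasDerivAt_sqrt_sq_add_sq (a : ℝ) {ρ : ℝ} (hρ : 0 < ρ) :
    HasDerivAt (fun ρ => √(a ^ 2 + ρ ^ 2)) (ρ / √(a ^ 2 + ρ ^ 2)) ρ := by
  have hsq : HasDerivAt (fun ρ : ℝ => a ^ 2 + ρ ^ 2) (2 * ρ) ρ := by
    simpa using (hasDerivAt_pow 2 ρ).const_add (a ^ 2)
  have := hsq.sqrt (sq_add_sq_pos_of_pos a hρ).ne'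
  rwa [mul_div_mul_left _ _ two_ne_zero] at this

lemma lintegral_Ioi_comp_sqrt_sq_add_sq (a : ℝ) (φ : ℝ → ℝ≥0∞) :
    ∫⁻ ρ in Ioi 0, ENNReal.ofReal ρ * φ √(a ^ 2 + ρ ^ 2) =
      ∫⁻ r in Ioi |a|, ENNReal.ofReal r * φ r := by
  rw [← image_sqrt_sq_add_sq_Ioi, lintegral_image_eq_lintegral_abs_deriv_mul measurableSet_Ioi
    (fun ρ hρ => (hasDerivAt_sqrt_sq_add_sq a hρ).hasDerivWithinAt) (injOn_sqrt_sq_add_sq a)]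
  refine setLIntegral_congr_fun measurableSet_Ioi fun ρ (hρ : 0 < ρ) => ?_
  have hsqrt : 0 < √(a ^ 2 + ρ ^ 2) := Real.sqrt_pos.2 (sq_add_sq_pos_of_pos a hρ)
  rw [← mul_assoc, ← ENNReal.ofReal_mul (abs_nonneg _), abs_of_pos (by positivity),
    div_mul_cancel₀ _ hsqrt.ne']

lemma lintegral_fun_sq_add_sq {φ : ℝ → ℝ≥0∞} (hφ : Measurable φ) :
    ∫⁻ q : ℝ × ℝ, φ (q.1 ^ 2 + q.2 ^ 2) =
      ENNReal.ofReal (2 * Real.pi) * ∫⁻ ρ in Ioi (0 : ℝ), ENNReal.ofReal ρ * φ (ρ ^ 2) := by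
  have hpolar (p : ℝ × ℝ) : (p.1 * Real.cos p.2) ^ 2 + (p.1 * Real.sin p.2) ^ 2 = p.1 ^ 2 := by
    linear_combination p.1 ^ 2 * Real.sin_sq_add_cos_sq p.2
  rw [← lintegral_comp_polarCoord_symm]
  simp only [polarCoord_symm_apply, hpolar, smul_eq_mul]
  rw [polarCoord_target, Measure.volume_eq_prod, ← Measure.prod_restrict,
    lintegral_prod _ (by fun_prop)]
  simp only [lintegral_const, Measure.restrict_apply_univ, Real.volume_Ioo]
  rw [lintegral_mul_const _ (by fun_prop), mul_comm, sub_neg_eq_add, ← two_mul]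

lemma lintegral_space_eq_lintegral_lintegral {F : Space → ℝ≥0∞} (hF : Measurable F) :
    ∫⁻ x, F x = ∫⁻ s : ℝ, ∫⁻ q : ℝ × ℝ, F !₂[s, q.1, q.2] := by
  let coords := (PiLp.volume_preserving_toLp (Fin 3)).comp
    ((volume_preserving_piFinSuccAbove (fun _ : Fin 3 => ℝ) 0).symm.comp
      ((MeasurePreserving.id volume).prod (volume_preserving_finTwoArrow ℝ).symm))
  have hcoords (p : ℝ × ℝ × ℝ) : (WithLp.toLp 2 ((MeasurableEquiv.piFinSuccAbove
      (fun _ : Fin 3 => ℝ) 0).symm (p.1, MeasurableEquiv.finTwoArrow.symm p.2)) : Space) =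
        !₂[p.1, p.2.1, p.2.2] := by
    ext i
    fin_cases i <;> rfl
  rw [← coords.lintegral_comp hF]
  refine (lintegral_congr fun p => congrArg F (hcoords p)).trans (lintegral_prod _ ?_)
  exact (hF.comp (by fun_prop)).aemeasurable

theorem lintegral_fun_norm_coord {H : ℝ × ℝ → ℝ≥0∞} (hH : Measurable H) :
    ∫⁻ x : Space, H (‖x‖, x 0) = ENNReal.ofReal (2 * Real.pi) *
      ∫⁻ s : ℝ, ∫⁻ r in Ioi |s|, ENNReal.ofReal r * H (r, s) := by
  rw [lintegral_space_eq_lintegral_lintegral (by fun_prop),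
    ← lintegral_const_mul' _ _ ENNReal.ofReal_ne_top]
  refine lintegral_congr fun s => ?_
  rw [← lintegral_Ioi_comp_sqrt_sq_add_sq s fun r => H (r, s),
    ← lintegral_fun_sq_add_sq (φ := fun v => H (√(s ^ 2 + v), s)) (by fun_prop)]
  refine lintegral_congr fun q => ?_
  simp [EuclideanSpace.norm_eq, Fin.sum_univ_three, add_assoc]

lemma exists_linearIsometryEquiv_map_eq_single (e : Space) :
    ∃ A : Space ≃ₗᵢ[ℝ] Space, A e = EuclideanSpace.single 0 ‖e‖ :=
  ⟨_, Submodule.reflection_sub (v := e) (w := EuclideanSpace.single 0 ‖e‖) (by simp)⟩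

theorem lintegral_fun_norm_inner {H : ℝ × ℝ → ℝ≥0∞} (hH : Measurable H) {u : Space}
    (hu : ‖u‖ = 1) :
    ∫⁻ x : Space, H (‖x‖, inner ℝ x u) = ENNReal.ofReal (2 * Real.pi) *
      ∫⁻ s : ℝ, ∫⁻ r in Ioi |s|, ENNReal.ofReal r * H (r, s) := by
  obtain ⟨A, hA⟩ := exists_linearIsometryEquiv_map_eq_single u
  rw [← lintegral_fun_norm_coord hH,
    ← A.measurePreserving.lintegral_comp (f := fun y => H (‖y‖, y 0)) (by fun_prop)]
  refine lintegral_congr fun x => ?_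
  rw [A.norm_map, ← A.inner_map_map, hA, hu, EuclideanSpace.inner_single_right]
  simp

/-- The third side of a triangle with sides `r` and `d`, where `s` is the length of the projection
of the side `r` onto the side `d`. -/
def thirdSide (d r s : ℝ) : ℝ := √(r ^ 2 - 2 * d * s + d ^ 2)

lemma measurable_thirdSide (d : ℝ) : Measurable fun p : ℝ × ℝ => thirdSide d p.1 p.2 := by
  unfold thirdSide
  fun_prop

lemma norm_sub_eq_thirdSide {V : Type*} [NormedAddCommGroup V] [InnerProductSpace ℝ V] (x : V)
    {d : ℝ} (hd : 0 ≤ d) {u : V} (hu : ‖u‖ = 1) :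
    ‖x - d • u‖ = thirdSide d ‖x‖ (inner ℝ x u) := by
  rw [thirdSide, ← Real.sqrt_sq (norm_nonneg (x - d • u)), norm_sub_sq_real, norm_smul, hu,
    inner_smul_right, Real.norm_of_nonneg hd]
  ring_nf

section ThirdSide

variable {d r s : ℝ}

lemma thirdSide_radicand_pos (hd : 0 < d) (h : |s| < r) : 0 < r ^ 2 - 2 * d * s + d ^ 2 := by
  nlinarith [sq_nonneg (r - d), mul_pos hd (sub_pos.2 (lt_of_abs_lt h))]

lemma thirdSide_pos (hd : 0 < d) (h : |s| < r) : 0 < thirdSide d r s :=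
  Real.sqrt_pos.2 (thirdSide_radicand_pos hd h)

lemma abs_sub_thirdSide_le (hd : 0 < d) (h : |s| < r) : |r - thirdSide d r s| ≤ d := by
  obtain ⟨hs, hs'⟩ := abs_lt.1 h
  have hlower : r - d ≤ thirdSide d r s := Real.le_sqrt_of_sq_le (by nlinarith)
  have hupper : thirdSide d r s ≤ r + d := Real.sqrt_le_iff.2 ⟨by linarith, by nlinarith⟩
  exact abs_sub_le_iff.2 ⟨by linarith, by linarith⟩

lemma hasDerivAt_thirdSide (hd : 0 < d) (h : |s| < r) :
    HasDerivAt (thirdSide d r) (-(d / thirdSide d r s)) s := by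
  have hradicand : HasDerivAt (fun s : ℝ => r ^ 2 - 2 * d * s + d ^ 2) (-(2 * d)) s := by
    simpa using (((hasDerivAt_id s).const_mul (2 * d)).const_sub (r ^ 2)).add_const (d ^ 2)
  have := hradicand.sqrt (thirdSide_radicand_pos hd h).ne'
  rwa [neg_div, mul_div_mul_left _ _ two_ne_zero] at this

lemma injOn_thirdSide (hd : 0 < d) : InjOn (thirdSide d r) (Ioo (-r) r) := by
  intro s hs s' hs' h
  rw [thirdSide, thirdSide, Real.sqrt_inj (thirdSide_radicand_pos hd (abs_lt.2 hs)).le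
    (thirdSide_radicand_pos hd (abs_lt.2 hs')).le] at h
  exact mul_left_cancel₀ (by positivity : 2 * d ≠ 0) (by linarith)

/-- The change of variables `t = thirdSide d r s` has Jacobian `d / t`. -/
lemma setLIntegral_Ioo_comp_thirdSide_le (hd : 0 < d) (r : ℝ) (φ : ℝ → ℝ≥0∞) :
    ∫⁻ s in Ioo (-r) r, φ (thirdSide d r s) * (ENNReal.ofReal (thirdSide d r s))⁻¹ ≤
      (ENNReal.ofReal d)⁻¹ * ∫⁻ t in Ioi 0, if |r - t| ≤ d then φ t else 0 := by
  have hd' : ENNReal.ofReal d ≠ 0 := (ENNReal.ofReal_pos.2 hd).ne'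
  have hmaps : thirdSide d r '' Ioo (-r) r ⊆ Ioi 0 := by
    rintro _ ⟨s, hs, rfl⟩
    exact thirdSide_pos hd (abs_lt.2 hs)
  calc ∫⁻ s in Ioo (-r) r, φ (thirdSide d r s) * (ENNReal.ofReal (thirdSide d r s))⁻¹
      = (ENNReal.ofReal d)⁻¹ * ∫⁻ s in Ioo (-r) r, ENNReal.ofReal |(-(d / thirdSide d r s))| *
          if |r - thirdSide d r s| ≤ d then φ (thirdSide d r s) else 0 := by
        rw [← lintegral_const_mul' _ _ (ENNReal.inv_ne_top.2 hd')]
        refine setLIntegral_congr_fun measurableSet_Ioo fun s hs => ?_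
        have ht := thirdSide_pos hd (abs_lt.2 hs)
        rw [if_pos (abs_sub_thirdSide_le hd (abs_lt.2 hs)), abs_neg, abs_of_pos (by positivity),
          ENNReal.ofReal_div_of_pos ht, div_eq_mul_inv, ← mul_assoc, ← mul_assoc,
          ENNReal.inv_mul_cancel hd' ENNReal.ofReal_ne_top, one_mul, mul_comm]
    _ = (ENNReal.ofReal d)⁻¹ * ∫⁻ t in thirdSide d r '' Ioo (-r) r,
          if |r - t| ≤ d then φ t else 0 := by
        rw [lintegral_image_eq_lintegral_abs_deriv_mul measurableSet_Ioo
          (fun s hs => (hasDerivAt_thirdSide hd (abs_lt.2 hs)).hasDerivWithinAt)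
          (injOn_thirdSide hd)]
    _ ≤ _ := by gcongr

end ThirdSide

lemma lintegral_lintegral_Ioi_abs_swap {G : ℝ → ℝ → ℝ≥0∞}
    (hG : Measurable fun p : ℝ × ℝ => G p.1 p.2) :
    ∫⁻ s : ℝ, ∫⁻ r in Ioi |s|, G r s = ∫⁻ r in Ioi (0 : ℝ), ∫⁻ s in Ioo (-r) r, G r s := by
  have hmem (r s : ℝ) : (Ioi |s|).indicator (fun r => G r s) r =
      (Ioo (-r) r).indicator (fun s => G r s) s := by
    simp only [indicator, mem_Ioi, mem_Ioo, abs_lt]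
  have hIoo : (Function.support fun r => ∫⁻ s in Ioo (-r) r, G r s) ⊆ Ioi 0 := fun r hr => by
    by_contra h
    rw [mem_Ioi, not_lt] at h
    exact hr (by simp [Ioo_eq_empty (by linarith : ¬-r < r)])
  rw [setLIntegral_eq_of_support_subset hIoo]
  simp_rw [← lintegral_indicator measurableSet_Ioi, ← lintegral_indicator measurableSet_Ioo,
    ← hmem]
  refine lintegral_lintegral_swap (Measurable.aemeasurable ?_)
  exact (hG.comp measurable_swap).indicator
    (measurableSet_lt (by fun_prop) (by fun_prop) : MeasurableSet {p : ℝ × ℝ | |p.1| < p.2})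

theorem lintegral_fun_norm_fun_norm_sub_le {Ψ : ℝ × ℝ → ℝ≥0∞} (hΨ : Measurable Ψ) {e : Space}
    (he : e ≠ 0) :
    ∫⁻ x : Space, Ψ (‖x‖, ‖x - e‖) * ‖x‖ₑ⁻¹ * ‖x - e‖ₑ⁻¹ ≤
      ENNReal.ofReal (2 * Real.pi) * ‖e‖ₑ⁻¹ * ∫⁻ t in Ioi (0 : ℝ), ∫⁻ t' in Ioi (0 : ℝ),
        if |t - t'| ≤ ‖e‖ then Ψ (t, t') else 0 := by
  have hd : 0 < ‖e‖ := norm_pos_iff.2 he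
  have hu : ‖‖e‖⁻¹ • e‖ = 1 := norm_smul_inv_norm he
  have hside := measurable_thirdSide ‖e‖
  let H : ℝ × ℝ → ℝ≥0∞ := fun p => Ψ (p.1, thirdSide ‖e‖ p.1 p.2) * (ENNReal.ofReal p.1)⁻¹ *
    (ENNReal.ofReal (thirdSide ‖e‖ p.1 p.2))⁻¹
  have hH : Measurable H := by fun_prop
  calc ∫⁻ x : Space, Ψ (‖x‖, ‖x - e‖) * ‖x‖ₑ⁻¹ * ‖x - e‖ₑ⁻¹
      = ENNReal.ofReal (2 * Real.pi) *
          ∫⁻ s : ℝ, ∫⁻ r in Ioi |s|, ENNReal.ofReal r * H (r, s) := by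
        rw [← lintegral_fun_norm_inner hH hu]
        refine lintegral_congr fun x => ?_
        have hxe := norm_sub_eq_thirdSide x hd.le hu
        rw [smul_inv_smul₀ hd.ne'] at hxe
        rw [← ofReal_norm, ← ofReal_norm, hxe]
    _ = ENNReal.ofReal (2 * Real.pi) * ∫⁻ r in Ioi (0 : ℝ), ∫⁻ s in Ioo (-r) r,
          ENNReal.ofReal r * H (r, s) := by
        rw [lintegral_lintegral_Ioi_abs_swap (G := fun r s => ENNReal.ofReal r * H (r, s))
          (by fun_prop)]
    _ ≤ ENNReal.ofReal (2 * Real.pi) * ∫⁻ r in Ioi (0 : ℝ), ‖e‖ₑ⁻¹ *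
          ∫⁻ t' in Ioi (0 : ℝ), if |r - t'| ≤ ‖e‖ then Ψ (r, t') else 0 := by
        refine mul_le_mul_right (setLIntegral_mono' measurableSet_Ioi fun r hr => ?_) _
        rw [← ofReal_norm]
        refine le_of_eq_of_le (lintegral_congr fun s => ?_)
          (setLIntegral_Ioo_comp_thirdSide_le hd r fun t => Ψ (r, t))
        simp only [H]
        rw [mul_comm (Ψ _), mul_assoc (_⁻¹), ← mul_assoc, ENNReal.mul_inv_cancel
          (ENNReal.ofReal_pos.2 hr).ne' ENNReal.ofReal_ne_top, one_mul]
    _ = _ := by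
        rw [lintegral_const_mul' _ _ (by simpa using he), mul_assoc]

end BipolarCoordinates

section DualStrichartz

/-- The `L^p_t L^r_x` norm on `(0, ∞) × ℝ³`. -/
def mixedLpNorm (G : ℝ × Space → ℝ≥0∞) (p r : ℝ) : ℝ≥0∞ :=
  eLpNorm' (fun t => eLpNorm' (fun x => G (t, x)) r volume) p (volume.restrict (Ioi 0))

/-- The kernel `1 / |y|`, cut off in the ball of radius `τ`. -/
def invNormCutoff (τ : ℝ) (y : Space) : ℝ≥0∞ := (Metric.ball 0 τ)ᶜ.indicator (fun y => ‖y‖ₑ⁻¹) y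

/-- The superposition of the densities `G`, where `G (t, x)` is spread over the sphere of radius `t`
around `x` as in the advanced fundamental solution of the wave equation on `ℝ³`. -/
def advancedPotential (G : ℝ × Space → ℝ≥0∞) (z : Space) : ℝ≥0∞ :=
  ∫⁻ x, G (‖z - x‖, x) * ‖z - x‖ₑ⁻¹

lemma measurable_eLpNorm'_prodMk {G : ℝ × Space → ℝ≥0∞} (hG : Measurable G) (r : ℝ) :
    Measurable fun t => eLpNorm' (fun x => G (t, x)) r volume := by
  simp only [eLpNorm'_eq_lintegral_enorm, enorm_eq_self]
  exact (Measurable.lintegral_prod_right' (f := fun p => G p ^ r) (by fun_prop)).pow_const _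

@[fun_prop]
lemma measurable_invNormCutoff {X : Type*} [MeasurableSpace X] {τ : X → ℝ} {y : X → Space}
    (hτ : Measurable τ) (hy : Measurable y) : Measurable fun q => invNormCutoff (τ q) (y q) := by
  have hset : MeasurableSet {q | y q ∈ (Metric.ball 0 (τ q))ᶜ} := by
    simpa using measurableSet_le hτ hy.norm
  exact Measurable.ite hset (by fun_prop) measurable_const

lemma invNormCutoff_of_le {τ : ℝ} {y : Space} (h : τ ≤ ‖y‖) : invNormCutoff τ y = ‖y‖ₑ⁻¹ :=
  indicator_of_mem (by simpa using h) _

lemma invNormCutoff_of_lt {τ : ℝ} {y : Space} (h : ‖y‖ < τ) : invNormCutoff τ y = 0 :=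
  indicator_of_notMem (by simpa using h) _

lemma exists_eLpNorm'_invNormCutoff_le {σ : ℝ} (hσ : 3 < σ) :
    ∃ C : ℝ≥0, ∀ τ : ℝ, 0 < τ →
      eLpNorm' (invNormCutoff τ) σ volume ≤ C * ENNReal.ofReal τ ^ (3 / σ - 1) := by
  have hσ0 : 0 < σ := by linarith
  obtain ⟨C, hC⟩ := exists_setLIntegral_compl_ball_enorm_sub_rpow_le
    (volume : Measure Space) (s := σ) (by simpa using hσ)
  refine ⟨C ^ (1 / σ), fun τ hτ => ?_⟩
  have hpow (y : Space) : invNormCutoff τ y ^ σ =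
      (Metric.ball (0 : Space) τ)ᶜ.indicator (fun y => ‖0 - y‖ₑ ^ (-σ)) y := by
    unfold invNormCutoff indicator
    split_ifs
    · simp only [zero_sub, enorm_neg, ENNReal.inv_rpow, ENNReal.rpow_neg]
    · exact ENNReal.zero_rpow_of_pos hσ0
  calc eLpNorm' (invNormCutoff τ) σ volume
      = (∫⁻ y in (Metric.ball (0 : Space) τ)ᶜ, ‖0 - y‖ₑ ^ (-σ)) ^ (1 / σ) := by
        simp only [eLpNorm'_eq_lintegral_enorm, enorm_eq_self, hpow]
        rw [lintegral_indicator measurableSet_ball.compl]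
    _ ≤ (C * ENNReal.ofReal τ ^ (3 - σ)) ^ (1 / σ) := by
        gcongr
        simpa using hC 0 τ hτ
    _ = _ := by
        rw [ENNReal.mul_rpow_of_nonneg _ _ (by positivity), ← ENNReal.rpow_mul,
          ENNReal.coe_rpow_of_nonneg _ (by positivity)]
        congr 2
        field_simp

lemma exists_lintegral_lintegral_mul_invNormCutoff_le {r : ℝ} (hr : 1 < r) (hr' : r < 6 / 5) :
    ∃ C : ℝ≥0, ∀ P Q : Space → ℝ≥0∞, Measurable P → Measurable Q → ∀ τ : ℝ, τ ≠ 0 →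
      ∫⁻ x, ∫⁻ y, P x * Q y * invNormCutoff |τ| (x - y) ≤
        C * (eLpNorm' P r volume * eLpNorm' Q r volume * ‖τ‖ₑ ^ (-(6 / r - 5))) := by
  obtain ⟨σ, hσ⟩ : ∃ σ : ℝ, σ⁻¹ = 2 - 2 * r⁻¹ := ⟨_, inv_inv _⟩
  have hr0 : 0 < r := by linarith
  have hrinv : 5 / 6 < r⁻¹ := by
    rw [lt_inv_comm₀ (by norm_num) hr0]
    norm_num [hr']
  have hσpos : 0 < σ := by
    rw [← inv_pos, hσ]
    linarith [inv_lt_one_of_one_lt₀ hr]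
  have hσ3 : 3 < σ := by
    rw [← inv_lt_inv₀ hσpos (by norm_num), hσ]
    linarith
  obtain ⟨C, hC⟩ := exists_eLpNorm'_invNormCutoff_le hσ3
  refine ⟨C, fun P Q hP hQ τ hτ => ?_⟩
  have hk : Measurable (invNormCutoff |τ|) := by fun_prop
  calc ∫⁻ x, ∫⁻ y, P x * Q y * invNormCutoff |τ| (x - y)
      ≤ eLpNorm' P r volume * eLpNorm' Q r volume * eLpNorm' (invNormCutoff |τ|) σ volume :=
        lintegral_lintegral_mul_mul_sub_le volume hP hQ hk hr.le hr.le
          (by linarith : 1 ≤ σ) (by rw [hσ]; ring)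
    _ ≤ eLpNorm' P r volume * eLpNorm' Q r volume *
          (C * ‖τ‖ₑ ^ (3 / σ - 1)) := by
        gcongr
        rw [Real.enorm_eq_ofReal_abs]
        exact hC |τ| (abs_pos.2 hτ)
    _ = _ := by
        rw [div_eq_mul_inv 3, hσ, (by ring : 3 * (2 - 2 * r⁻¹) - 1 = -(6 / r - 5))]
        ring

lemma lintegral_lintegral_sq {X Y : Type*} [MeasurableSpace X] [MeasurableSpace Y]
    (μ : Measure X) (ν : Measure Y) [SFinite μ] [SFinite ν] {B : Y → X → ℝ≥0∞}
    (hB : Measurable fun p : Y × X => B p.1 p.2) :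
    ∫⁻ y, (∫⁻ x, B y x ∂μ) ^ 2 ∂ν = ∫⁻ x, ∫⁻ x', ∫⁻ y, B y x * B y x' ∂ν ∂μ ∂μ := by
  have hBy (y : Y) : Measurable (B y) := hB.of_uncurry_left
  have hBB : Measurable fun q : Y × X × X => B q.1 q.2.1 * B q.1 q.2.2 :=
    (hB.comp (by fun_prop : Measurable fun q : Y × X × X => (q.1, q.2.1))).mul
      (hB.comp (by fun_prop : Measurable fun q : Y × X × X => (q.1, q.2.2)))
  calc ∫⁻ y, (∫⁻ x, B y x ∂μ) ^ 2 ∂ν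
      = ∫⁻ y, ∫⁻ p, B y p.1 * B y p.2 ∂μ.prod μ ∂ν := by
        refine lintegral_congr fun y => ?_
        rw [lintegral_prod_mul (hBy y).aemeasurable (hBy y).aemeasurable, sq]
    _ = ∫⁻ p, ∫⁻ y, B y p.1 * B y p.2 ∂ν ∂μ.prod μ := lintegral_lintegral_swap hBB.aemeasurable
    _ = _ := lintegral_prod _ (hBB.lintegral_prod_left').aemeasurable

lemma lintegral_lintegral_lintegral_lintegral_swap {X Y : Type*} [MeasurableSpace X]
    [MeasurableSpace Y] (μ : Measure X) (ν : Measure Y) [SFinite μ] [SFinite ν]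
    {K : (X × X) × (Y × Y) → ℝ≥0∞} (hK : Measurable K) :
    ∫⁻ x, ∫⁻ x', ∫⁻ y, ∫⁻ y', K ((x, x'), (y, y')) ∂ν ∂ν ∂μ ∂μ =
      ∫⁻ y, ∫⁻ y', ∫⁻ x, ∫⁻ x', K ((x, x'), (y, y')) ∂μ ∂μ ∂ν ∂ν := by
  calc ∫⁻ x, ∫⁻ x', ∫⁻ y, ∫⁻ y', K ((x, x'), (y, y')) ∂ν ∂ν ∂μ ∂μ
      = ∫⁻ p, ∫⁻ q, K (p, q) ∂ν.prod ν ∂μ.prod μ := by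
        rw [lintegral_prod _ hK.lintegral_prod_right'.aemeasurable]
        refine lintegral_congr fun x => lintegral_congr fun x' => ?_
        exact (lintegral_prod (fun q => K ((x, x'), q))
          (hK.comp measurable_prodMk_left).aemeasurable).symm
    _ = ∫⁻ q, ∫⁻ p, K (p, q) ∂μ.prod μ ∂ν.prod ν := lintegral_lintegral_swap hK.aemeasurable
    _ = _ := by
        rw [lintegral_prod _ hK.lintegral_prod_left'.aemeasurable]
        refine lintegral_congr fun y => lintegral_congr fun y' => ?_
        exact lintegral_prod (fun q => K (q, (y, y')))
          (hK.comp measurable_prodMk_right).aemeasurable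

section

variable {G : ℝ × Space → ℝ≥0∞}

lemma measurable_advancedPotential_integrand (hG : Measurable G) :
    Measurable fun q : Space × Space => G (‖q.1 - q.2‖, q.2) * ‖q.1 - q.2‖ₑ⁻¹ := by
  fun_prop

/-- Two spheres of radii `t, t'` around `x ≠ x'` can only meet if `|t - t'| ≤ |x - x'|`. -/
lemma lintegral_advancedPotential_integrand_mul_le (hG : Measurable G) {x x' : Space}
    (h : x ≠ x') :
    ∫⁻ z, G (‖z - x‖, x) * ‖z - x‖ₑ⁻¹ * (G (‖z - x'‖, x') * ‖z - x'‖ₑ⁻¹) ≤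
      ENNReal.ofReal (2 * Real.pi) * ∫⁻ t in Ioi (0 : ℝ), ∫⁻ t' in Ioi (0 : ℝ),
        G (t, x) * G (t', x') * invNormCutoff |t - t'| (x - x') := by
  have hbipolar := lintegral_fun_norm_fun_norm_sub_le (Ψ := fun p => G (p.1, x) * G (p.2, x'))
    (by fun_prop) (sub_ne_zero.2 h.symm)
  have hcutoff (t t' : ℝ) : (if |t - t'| ≤ ‖x' - x‖ then G (t, x) * G (t', x') else 0) *
      ‖x' - x‖ₑ⁻¹ = G (t, x) * G (t', x') * invNormCutoff |t - t'| (x - x') := by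
    rw [← neg_sub x, norm_neg, enorm_neg]
    split_ifs with ht
    · rw [invNormCutoff_of_le ht]
    · rw [invNormCutoff_of_lt (not_le.1 ht), zero_mul, mul_zero]
  have hinv : ‖x' - x‖ₑ⁻¹ ≠ ∞ := by simpa [sub_eq_zero] using h.symm
  calc ∫⁻ z, G (‖z - x‖, x) * ‖z - x‖ₑ⁻¹ * (G (‖z - x'‖, x') * ‖z - x'‖ₑ⁻¹)
      = ∫⁻ z, G (‖z‖, x) * G (‖z - (x' - x)‖, x') * ‖z‖ₑ⁻¹ * ‖z - (x' - x)‖ₑ⁻¹ := by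
        rw [← lintegral_add_right_eq_self _ x]
        refine lintegral_congr fun z => ?_
        rw [add_sub_cancel_right, (by abel : z + x - x' = z - (x' - x))]
        ring
    _ ≤ _ := hbipolar
    _ = _ := by
        rw [mul_assoc, mul_comm ‖x' - x‖ₑ⁻¹, ← lintegral_mul_const' _ _ hinv]
        simp_rw [← lintegral_mul_const' _ _ hinv, hcutoff]

lemma lintegral_advancedPotential_sq_le (hG : Measurable G) :
    ∫⁻ z, advancedPotential G z ^ 2 ≤
      ENNReal.ofReal (2 * Real.pi) * ∫⁻ t in Ioi (0 : ℝ), ∫⁻ t' in Ioi (0 : ℝ), ∫⁻ x, ∫⁻ x',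
        G (t, x) * G (t', x') * invNormCutoff |t - t'| (x - x') := by
  have hK : Measurable fun q : (Space × Space) × (ℝ × ℝ) => G (q.2.1, q.1.1) * G (q.2.2, q.1.2) *
      invNormCutoff |q.2.1 - q.2.2| (q.1.1 - q.1.2) := by fun_prop
  have hae (x : Space) : ∀ᵐ x' : Space, x ≠ x' := by simp [ae_iff]
  simp only [advancedPotential]
  rw [lintegral_lintegral_sq volume volume (measurable_advancedPotential_integrand hG),
    ← lintegral_lintegral_lintegral_lintegral_swap volume (volume.restrict (Ioi 0)) hK]
  rw [← lintegral_const_mul' _ _ ENNReal.ofReal_ne_top]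
  refine lintegral_mono fun x => ?_
  rw [← lintegral_const_mul' _ _ ENNReal.ofReal_ne_top]
  refine lintegral_mono_ae ((hae x).mono fun x' hx' => ?_)
  exact lintegral_advancedPotential_integrand_mul_le hG hx'

end

lemma eLpNorm'_indicator {X : Type*} [MeasurableSpace X] (μ : Measure X) {s : Set X}
    (hs : MeasurableSet s) {p : ℝ} (hp : 0 < p) (h : X → ℝ≥0∞) :
    eLpNorm' (s.indicator h) p μ = eLpNorm' h p (μ.restrict s) := by
  have hpow : (fun x => s.indicator h x ^ p) = s.indicator fun x => h x ^ p :=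
    (indicator_comp_of_zero (g := fun y : ℝ≥0∞ => y ^ p) (ENNReal.zero_rpow_of_pos hp)).symm
  simp only [eLpNorm'_eq_lintegral_enorm, enorm_eq_self, hpow, lintegral_indicator hs]

lemma exists_lintegral_advancedPotential_sq_le {p r : ℝ} (hr : 1 < r) (hr' : r < 6 / 5)
    (hpr : 1 / p + 3 / r = 7 / 2) :
    ∃ C : ℝ≥0, ∀ G : ℝ × Space → ℝ≥0∞, Measurable G →
      ∫⁻ z, advancedPotential G z ^ 2 ≤ C * mixedLpNorm G p r ^ 2 := by
  have hrinv : 5 < 6 / r := by rw [lt_div_iff₀ (by linarith)]; linarith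
  have hrinv' : 6 / r < 6 := by rw [div_lt_iff₀ (by linarith)]; linarith
  have hp : 0 < p := by
    rw [← one_div_pos]
    linarith [(by ring : 3 / r = 6 / r / 2)]
  obtain ⟨CY, hCY⟩ := exists_lintegral_lintegral_mul_invNormCutoff_le hr hr'
  obtain ⟨CH, hCH⟩ := exists_lintegral_lintegral_mul_enorm_sub_rpow_le (volume : Measure ℝ)
    (α := 6 / r - 5) (p := p) (by linarith) (by simp; linarith)
    (by simp; ring_nf at hpr ⊢; linarith)
  refine ⟨(2 * Real.pi).toNNReal * (CY * CH), fun G hG => ?_⟩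
  let φ : ℝ → ℝ≥0∞ := (Ioi (0 : ℝ)).indicator fun t => eLpNorm' (fun x => G (t, x)) r volume
  have hφ : Measurable φ := (measurable_eLpNorm'_prodMk hG r).indicator measurableSet_Ioi
  have hyoung {t t' : ℝ} (ht : 0 < t) (ht' : 0 < t') (h : t ≠ t') :
      ∫⁻ x, ∫⁻ x', G (t, x) * G (t', x') * invNormCutoff |t - t'| (x - x') ≤
        CY * (φ t * φ t' * ‖t - t'‖ₑ ^ (-(6 / r - 5))) := by
    simp only [φ, indicator_of_mem (mem_Ioi.2 ht), indicator_of_mem (mem_Ioi.2 ht')]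
    exact hCY _ _ (by fun_prop) (by fun_prop) _ (sub_ne_zero.2 h)
  have hne (t : ℝ) : ∀ᵐ t' : ℝ, t ≠ t' := by simp [ae_iff]
  calc ∫⁻ z, advancedPotential G z ^ 2
      ≤ ENNReal.ofReal (2 * Real.pi) * ∫⁻ t in Ioi (0 : ℝ), ∫⁻ t' in Ioi (0 : ℝ),
          CY * (φ t * φ t' * ‖t - t'‖ₑ ^ (-(6 / r - 5))) := by
        refine (lintegral_advancedPotential_sq_le hG).trans ?_
        gcongr ENNReal.ofReal (2 * Real.pi) * ?_
        refine setLIntegral_mono' measurableSet_Ioi fun t ht => ?_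
        exact setLIntegral_mono_ae' measurableSet_Ioi
          ((hne t).mono fun t' hne ht' => hyoung ht ht' hne)
    _ ≤ ENNReal.ofReal (2 * Real.pi) * ∫⁻ t, ∫⁻ t',
          CY * (φ t * φ t' * ‖t - t'‖ₑ ^ (-(6 / r - 5))) := by
        gcongr ENNReal.ofReal (2 * Real.pi) * ?_
        exact (setLIntegral_le_lintegral _ _).trans
          (lintegral_mono fun t => setLIntegral_le_lintegral _ _)
    _ ≤ ENNReal.ofReal (2 * Real.pi) * (CY * (CH * eLpNorm' φ p volume ^ 2)) := by
        simp_rw [lintegral_const_mul' _ _ ENNReal.coe_ne_top]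
        gcongr
        exact hCH φ hφ
    _ = _ := by
        rw [eLpNorm'_indicator volume measurableSet_Ioi hp, ← mixedLpNorm,
          ENNReal.ofReal]
        push_cast
        ring

theorem exists_eLpNorm'_advancedPotential_le {p r : ℝ} (hr : 1 < r) (hr' : r < 6 / 5)
    (hpr : 1 / p + 3 / r = 7 / 2) :
    ∃ C : ℝ≥0, ∀ G : ℝ × Space → ℝ≥0∞, Measurable G →
      eLpNorm' (advancedPotential G) 2 volume ≤ C * mixedLpNorm G p r := by
  obtain ⟨C, hC⟩ := exists_lintegral_advancedPotential_sq_le hr hr' hpr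
  refine ⟨C ^ (1 / 2 : ℝ), fun G hG => ?_⟩
  calc eLpNorm' (advancedPotential G) 2 volume
      = (∫⁻ z, advancedPotential G z ^ 2) ^ (1 / 2 : ℝ) := by
        simp only [eLpNorm'_eq_lintegral_enorm, enorm_eq_self, ENNReal.rpow_ofNat]
    _ ≤ (C * mixedLpNorm G p r ^ 2) ^ (1 / 2 : ℝ) := by
        gcongr
        exact hC G hG
    _ = _ := by
        rw [ENNReal.mul_rpow_of_nonneg _ _ (by norm_num), ← ENNReal.rpow_natCast_mul,
          ENNReal.coe_rpow_of_nonneg _ (by norm_num)]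
        norm_num

end DualStrichartz

section DualBound

/-- Lebesgue measure on `(0, ∞) × ℝ³`. -/
abbrev futureMeasure : Measure (ℝ × Space) := (volume.restrict (Ioi 0)).prod volume

/-- `V` defines by integration a functional of norm at most `K` on `L^p_t L^r_x((0, ∞) × ℝ³)`.
By duality this is how mixed norms are estimated. -/
def HasDualBound (V : ℝ × Space → ℝ≥0∞) (p r : ℝ) (K : ℝ≥0∞) : Prop :=
  ∀ G : ℝ × Space → ℝ≥0∞, Measurable G → ∫⁻ q, G q * V q ∂futureMeasure ≤ K * mixedLpNorm G p r

variable {V W : ℝ × Space → ℝ≥0∞} {p r : ℝ} {K L : ℝ≥0∞}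

lemma HasDualBound.mono (hW : HasDualBound W p r K) (h : ∀ t, 0 < t → ∀ x, V (t, x) ≤ W (t, x)) :
    HasDualBound V p r K := by
  refine fun G hG => (lintegral_mono_ae ?_).trans (hW G hG)
  have hpos : ∀ᵐ q ∂futureMeasure, q.1 ∈ Ioi (0 : ℝ) :=
    Measure.quasiMeasurePreserving_fst.ae (ae_restrict_mem measurableSet_Ioi)
  filter_upwards [hpos] with q hq
  gcongr
  exact h q.1 hq q.2

lemma HasDualBound.mono_const (hV : HasDualBound V p r K) (h : K ≤ L) : HasDualBound V p r L :=
  fun G hG => (hV G hG).trans (by gcongr)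

lemma HasDualBound.add (hV : HasDualBound V p r K) (hW : HasDualBound W p r L)
    (hVm : Measurable V) : HasDualBound (fun q => V q + W q) p r (K + L) := by
  intro G hG
  simp only [mul_add, add_mul]
  rw [lintegral_add_left (by fun_prop)]
  exact add_le_add (hV G hG) (hW G hG)

lemma HasDualBound.const_mul (hV : HasDualBound V p r K) {a : ℝ≥0∞} (ha : a ≠ ∞) :
    HasDualBound (fun q => a * V q) p r (a * K) := by
  intro G hG
  simp_rw [mul_left_comm, lintegral_const_mul' _ _ ha, mul_assoc]
  gcongr
  exact hV G hG

lemma HasDualBound.lintegral {S : Type*} [MeasurableSpace S] (ν : Measure S) [SFinite ν]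
    {V : S → ℝ × Space → ℝ≥0∞} {K : S → ℝ≥0∞} (hV : ∀ᵐ s ∂ν, HasDualBound (V s) p r (K s))
    (hVm : Measurable (Function.uncurry V)) (hK : Measurable K) :
    HasDualBound (fun q => ∫⁻ s, V s q ∂ν) p r (∫⁻ s, K s ∂ν) := by
  intro G hG
  have hGV : Measurable fun z : (ℝ × Space) × S => G z.1 * V z.2 z.1 :=
    (hG.comp measurable_fst).mul (hVm.comp measurable_swap)
  calc ∫⁻ q, G q * ∫⁻ s, V s q ∂ν ∂futureMeasure
      = ∫⁻ q, ∫⁻ s, G q * V s q ∂ν ∂futureMeasure :=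
        lintegral_congr fun q => (lintegral_const_mul _ hVm.of_uncurry_right).symm
    _ = ∫⁻ s, ∫⁻ q, G q * V s q ∂futureMeasure ∂ν := lintegral_lintegral_swap hGV.aemeasurable
    _ ≤ ∫⁻ s, K s * mixedLpNorm G p r ∂ν := lintegral_mono_ae (hV.mono fun s hs => hs G hG)
    _ = _ := lintegral_mul_const _ hK

lemma lintegral_Ioi_comp_div {l : ℝ} (hl : 0 < l) (F : ℝ → ℝ≥0∞) (hF : Measurable F) :
    ∫⁻ t in Ioi (0 : ℝ), F (t / l) = ENNReal.ofReal l * ∫⁻ t in Ioi (0 : ℝ), F t := by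
  have hpre : (fun t : ℝ => l * t) ⁻¹' Ioi 0 = Ioi 0 := by ext t; simp [hl]
  have hscale : volume.restrict (Ioi (0 : ℝ)) =
      ENNReal.ofReal l • (volume.restrict (Ioi (0 : ℝ))).map (fun t => l * t) := by
    conv_lhs => rw [← Real.smul_map_volume_mul_left hl.ne', abs_of_pos hl]
    rw [Measure.restrict_smul, Measure.restrict_map (by fun_prop) measurableSet_Ioi, hpre]
  rw [hscale, lintegral_smul_measure, lintegral_map (by fun_prop) (by fun_prop), smul_eq_mul]
  simp only [mul_div_cancel_left₀ _ hl.ne', ← hscale]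

lemma mixedLpNorm_comp_div {G : ℝ × Space → ℝ≥0∞} (hG : Measurable G) (hp : 0 < p) {l : ℝ}
    (hl : 0 < l) : mixedLpNorm (fun q => G (q.1 / l, q.2)) p r =
      ENNReal.ofReal l ^ (1 / p) * mixedLpNorm G p r := by
  have hm := (measurable_eLpNorm'_prodMk hG r).pow_const p
  simp only [mixedLpNorm, eLpNorm'_eq_lintegral_enorm _ p, enorm_eq_self]
  rw [lintegral_Ioi_comp_div hl (fun t => eLpNorm' (fun x => G (t, x)) r volume ^ p) hm,
    ENNReal.mul_rpow_of_nonneg _ _ (by positivity)]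

lemma HasDualBound.comp_mul (hV : HasDualBound V p r K) (hVm : Measurable V) (hp : 0 < p) {l : ℝ}
    (hl : 0 < l) :
    HasDualBound (fun q => V (l * q.1, q.2)) p r (ENNReal.ofReal l ^ (1 / p - 1) * K) := by
  intro G hG
  have hl0 : ENNReal.ofReal l ≠ 0 := by simpa using hl
  have hGV : Measurable fun q : ℝ × Space => G q * V (l * q.1, q.2) := by fun_prop
  have hscaled := hV (fun q => G (q.1 / l, q.2)) (by fun_prop)
  rw [mixedLpNorm_comp_div hG hp hl, lintegral_prod _ (by fun_prop)] at hscaled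
  have hchange := lintegral_Ioi_comp_div hl (fun t => ∫⁻ x, G (t, x) * V (l * t, x))
    hGV.lintegral_prod_right'
  simp only [mul_div_cancel₀ _ hl.ne'] at hchange
  rw [hchange] at hscaled
  rw [lintegral_prod _ hGV.aemeasurable, ENNReal.rpow_sub _ _ hl0 ENNReal.ofReal_ne_top,
    ENNReal.rpow_one, ENNReal.div_eq_inv_mul, mul_assoc, mul_assoc,
    ← ENNReal.mul_le_iff_le_inv hl0 ENNReal.ofReal_ne_top]
  exact hscaled.trans (by rw [mul_left_comm])

lemma lintegral_Ioi_comp_add (s : ℝ) (F : ℝ → ℝ≥0∞) :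
    ∫⁻ t in Ioi (0 : ℝ), F (t + s) = ∫⁻ t in Ioi s, F t := by
  simpa using (measurePreserving_add_right volume s).setLIntegral_comp_preimage_emb
    (measurableEmbedding_addRight s) F (Ioi s)

lemma mixedLpNorm_comp_add_le (G : ℝ × Space → ℝ≥0∞) (hp : 0 < p) {s : ℝ} (hs : 0 ≤ s) :
    mixedLpNorm (fun q => G (q.1 + s, q.2)) p r ≤ mixedLpNorm G p r := by
  simp only [mixedLpNorm, eLpNorm'_eq_lintegral_enorm _ p, enorm_eq_self]
  rw [lintegral_Ioi_comp_add s fun t => eLpNorm' (fun x => G (t, x)) r volume ^ p]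
  gcongr

lemma HasDualBound.timeShift (hV : HasDualBound V p r K) (hVm : Measurable V) (hp : 0 < p)
    (hV0 : ∀ t ≤ 0, ∀ x, V (t, x) = 0) {s : ℝ} (hs : 0 ≤ s) :
    HasDualBound (fun q => V (q.1 - s, q.2)) p r K := by
  intro G hG
  have hsupp : (Ioi s).indicator (fun t => ∫⁻ x, G (t, x) * V (t - s, x)) =
      fun t => ∫⁻ x, G (t, x) * V (t - s, x) := by
    refine indicator_eq_self.2 (Function.support_subset_iff'.2 fun t ht => ?_)
    simp [hV0 (t - s) (by simpa using ht)]
  calc ∫⁻ q, G q * V (q.1 - s, q.2) ∂futureMeasure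
      = ∫⁻ t in Ioi (0 : ℝ), ∫⁻ x, G (t, x) * V (t - s, x) := lintegral_prod _ (by fun_prop)
    _ ≤ ∫⁻ t, ∫⁻ x, G (t, x) * V (t - s, x) := setLIntegral_le_lintegral _ _
    _ = ∫⁻ t in Ioi s, ∫⁻ x, G (t, x) * V (t - s, x) := by
        rw [← lintegral_indicator measurableSet_Ioi, hsupp]
    _ = ∫⁻ t in Ioi (0 : ℝ), ∫⁻ x, G (t + s, x) * V (t, x) := by
        rw [← lintegral_Ioi_comp_add]
        simp only [add_sub_cancel_right]
    _ = ∫⁻ q, G (q.1 + s, q.2) * V q ∂futureMeasure :=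
        (lintegral_prod (fun q : ℝ × Space => G (q.1 + s, q.2) * V q) (by fun_prop)).symm
    _ ≤ K * mixedLpNorm (fun q => G (q.1 + s, q.2)) p r := hV _ (by fun_prop)
    _ ≤ K * mixedLpNorm G p r := by
        gcongr
        exact mixedLpNorm_comp_add_le G hp hs

section Duality

variable {q ρ : ℝ}

lemma mul_rpow_sub_one {m : ℝ≥0∞} (hm : m ≠ ∞) {s : ℝ} (hs : 0 < s) :
    m * m ^ (s - 1) = m ^ s := by
  rcases eq_or_ne m 0 with rfl | h
  · rw [zero_mul, ENNReal.zero_rpow_of_pos hs]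
  · rw [ENNReal.rpow_sub _ _ h hm, ENNReal.rpow_one, ENNReal.mul_div_cancel h hm]

/-- The function at which the duality between `L^p_t L^r_x` and `L^q_t L^ρ_x` is saturated by
`V`. -/
def dualExtremizer (V : ℝ × Space → ℝ≥0∞) (q ρ : ℝ) (z : ℝ × Space) : ℝ≥0∞ :=
  V z ^ (ρ - 1) * (∫⁻ x, V (z.1, x) ^ ρ) ^ (q / ρ - 1)

lemma measurable_lintegral_rpow (hV : Measurable V) (ρ : ℝ) :
    Measurable fun t => ∫⁻ x, V (t, x) ^ ρ :=
  Measurable.lintegral_prod_right' (f := fun z : ℝ × Space => V z ^ ρ) (by fun_prop)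

lemma measurable_dualExtremizer (hV : Measurable V) (q ρ : ℝ) :
    Measurable (dualExtremizer V q ρ) :=
  (hV.pow_const _).mul (((measurable_lintegral_rpow hV ρ).comp measurable_fst).pow_const _)

lemma lintegral_dualExtremizer_mul (hV : Measurable V) (hq : 0 < q) (hρ : 1 < ρ) {t : ℝ}
    (hfin : ∫⁻ x, V (t, x) ^ ρ ≠ ∞) :
    ∫⁻ x, dualExtremizer V q ρ (t, x) * V (t, x) = eLpNorm' (fun x => V (t, x)) ρ volume ^ q := by
  have hpow (x : Space) : V (t, x) ^ (ρ - 1) * V (t, x) = V (t, x) ^ ρ := by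
    conv_lhs => rw [← ENNReal.rpow_one (V (t, x)), ← ENNReal.rpow_mul, one_mul]
    rw [← ENNReal.rpow_add_of_nonneg _ _ (by linarith) zero_le_one, sub_add_cancel]
  simp only [dualExtremizer, mul_right_comm, hpow, eLpNorm'_eq_lintegral_enorm, enorm_eq_self]
  rw [lintegral_mul_const _ (by fun_prop), mul_rpow_sub_one hfin (div_pos hq (by linarith)),
    ← ENNReal.rpow_mul, one_div_mul_eq_div]

lemma eLpNorm'_dualExtremizer (hV : Measurable V) (hpq : p.HolderConjugate q)
    (hrρ : r.HolderConjugate ρ) {t : ℝ} (hfin : ∫⁻ x, V (t, x) ^ ρ ≠ ∞) :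
    eLpNorm' (fun x => dualExtremizer V q ρ (t, x)) r volume ^ p =
      eLpNorm' (fun x => V (t, x)) ρ volume ^ q := by
  have hexp : r * (q - 1) / ρ = 1 + (q / ρ - 1) * r := by
    have hρ := hrρ.symm.ne_zero
    field_simp
    linear_combination hrρ.mul_eq_add
  have hpow (x : Space) : dualExtremizer V q ρ (t, x) ^ r =
      V (t, x) ^ ρ * (∫⁻ x, V (t, x) ^ ρ) ^ (r * (q - 1) / ρ - 1) := by
    rw [dualExtremizer, ENNReal.mul_rpow_of_nonneg _ _ hrρ.nonneg, ← ENNReal.rpow_mul,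
      ← ENNReal.rpow_mul, hrρ.symm.sub_one_mul_conj, hexp, add_sub_cancel_left]
  have hpos : 0 < r * (q - 1) / ρ :=
    div_pos (mul_pos hrρ.pos hpq.symm.sub_one_pos) hrρ.symm.pos
  simp only [eLpNorm'_eq_lintegral_enorm, enorm_eq_self, hpow]
  rw [lintegral_mul_const _ (by fun_prop), mul_rpow_sub_one hfin hpos, ← ENNReal.rpow_mul,
    ← ENNReal.rpow_mul, ← ENNReal.rpow_mul]
  congr 1
  have hr := hrρ.ne_zero
  field_simp
  rw [hpq.symm.sub_one_mul_conj]

theorem HasDualBound.mixedLpNorm_le (hV : HasDualBound V p r K) (hVm : Measurable V)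
    (hpq : p.HolderConjugate q) (hrρ : r.HolderConjugate ρ)
    (hfin : ∀ t, ∫⁻ x, V (t, x) ^ ρ ≠ ∞) (hfin' : mixedLpNorm V q ρ ≠ ∞) :
    mixedLpNorm V q ρ ≤ K := by
  set X := ∫⁻ t in Ioi (0 : ℝ), eLpNorm' (fun x => V (t, x)) ρ volume ^ q
  have hX : mixedLpNorm V q ρ = X ^ (1 / q) := by
    simp only [mixedLpNorm, eLpNorm'_eq_lintegral_enorm _ q, enorm_eq_self, X]
  have hG := measurable_dualExtremizer hVm q ρ
  have htest : X ≤ K * X ^ (1 / p) := by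
    calc X = ∫⁻ z, dualExtremizer V q ρ z * V z ∂futureMeasure := by
          rw [lintegral_prod _ (by fun_prop)]
          simp only [lintegral_dualExtremizer_mul hVm hpq.symm.pos hrρ.symm.lt (hfin _), X]
      _ ≤ K * mixedLpNorm (dualExtremizer V q ρ) p r := hV _ hG
      _ = K * X ^ (1 / p) := by
          simp only [mixedLpNorm, eLpNorm'_eq_lintegral_enorm _ p, enorm_eq_self,
            eLpNorm'_dualExtremizer hVm hpq hrρ (hfin _), X]
  rcases eq_or_ne X 0 with hX0 | hX0
  · rw [hX, hX0, ENNReal.zero_rpow_of_pos (one_div_pos.2 hpq.symm.pos)]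
    exact bot_le
  have hXtop : X ≠ ∞ := by
    contrapose! hfin'
    rw [hX, hfin', ENNReal.top_rpow_of_pos (one_div_pos.2 hpq.symm.pos)]
  rw [hX, one_div, ← hpq.one_sub_inv, ENNReal.rpow_sub _ _ hX0 hXtop, ENNReal.rpow_one,
    ← one_div]
  exact ENNReal.div_le_of_le_mul htest

end Duality

end DualBound

section SphericalWave

/-- The surface measure of the unit sphere of `ℝ³`. -/
abbrev surfaceMeasure : Measure (Metric.sphere (0 : Space) 1) := (volume : Measure Space).toSphere

/-- Up to the factor `4π`, the solution at `(t, x)` of the free wave equation with initial position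
`0` and initial velocity `h`. -/
def sphericalWave (h : Space → ℝ≥0∞) (q : ℝ × Space) : ℝ≥0∞ :=
  ∫⁻ w, ENNReal.ofReal q.1 * h (q.2 + q.1 • (w : Space)) ∂surfaceMeasure

variable {h : Space → ℝ≥0∞} {p r : ℝ}

lemma measurable_sphericalWave (hh : Measurable h) : Measurable (sphericalWave h) :=
  Measurable.lintegral_prod_right' (f := fun z : (ℝ × Space) × Metric.sphere (0 : Space) 1 =>
    ENNReal.ofReal z.1.1 * h (z.1.2 + z.1.1 • (z.2 : Space))) (by fun_prop)

lemma sphericalWave_of_nonpos {t : ℝ} (ht : t ≤ 0) (x : Space) : sphericalWave h (t, x) = 0 := by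
  simp [sphericalWave, ENNReal.ofReal_of_nonpos ht]

/-- Polar coordinates around `x`. -/
lemma setLIntegral_mul_sphericalWave {F : ℝ → ℝ≥0∞} (hF : Measurable F) (hh : Measurable h)
    (x : Space) :
    ∫⁻ t in Ioi (0 : ℝ), F t * sphericalWave h (t, x) =
      ∫⁻ z, h z * (F ‖z - x‖ * ‖z - x‖ₑ⁻¹) := by
  rw [← lintegral_add_right_eq_self _ x, lintegral_eq_lintegral_toSphere volume (by fun_prop)]
  refine setLIntegral_congr_fun measurableSet_Ioi fun t (ht : 0 < t) => ?_
  have ht0 : ENNReal.ofReal t ≠ 0 := by simpa using ht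
  simp only [sphericalWave, add_sub_cancel_right, norm_smul_sphere ht.le, ← ofReal_norm]
  rw [← lintegral_const_mul _ (by fun_prop), ← lintegral_const_mul _ (by fun_prop)]
  refine lintegral_congr fun w => ?_
  rw [finrank_euclideanSpace_fin, add_comm x]
  calc F t * (ENNReal.ofReal t * h (t • (w : Space) + x))
      = h (t • (w : Space) + x) * F t * ENNReal.ofReal t *
          (ENNReal.ofReal t * (ENNReal.ofReal t)⁻¹) := by
        rw [ENNReal.mul_inv_cancel ht0 ENNReal.ofReal_ne_top]
        ring
    _ = _ := by ring

lemma lintegral_mul_sphericalWave {G : ℝ × Space → ℝ≥0∞} (hG : Measurable G) (hh : Measurable h) :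
    ∫⁻ q, G q * sphericalWave h q ∂futureMeasure = ∫⁻ z, h z * advancedPotential G z := by
  have hW := measurable_sphericalWave hh
  calc ∫⁻ q, G q * sphericalWave h q ∂futureMeasure
      = ∫⁻ x, ∫⁻ t in Ioi (0 : ℝ), G (t, x) * sphericalWave h (t, x) :=
        lintegral_prod_symm _ (by fun_prop)
    _ = ∫⁻ x, ∫⁻ z, h z * (G (‖z - x‖, x) * ‖z - x‖ₑ⁻¹) :=
        lintegral_congr fun x => setLIntegral_mul_sphericalWave (by fun_prop) hh x
    _ = ∫⁻ z, ∫⁻ x, h z * (G (‖z - x‖, x) * ‖z - x‖ₑ⁻¹) := lintegral_lintegral_swap (by fun_prop)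
    _ = _ := lintegral_congr fun z => lintegral_const_mul _ (by fun_prop)

lemma measurable_advancedPotential {G : ℝ × Space → ℝ≥0∞} (hG : Measurable G) :
    Measurable (advancedPotential G) :=
  (measurable_advancedPotential_integrand hG).lintegral_prod_right'

theorem exists_hasDualBound_sphericalWave (hr : 1 < r) (hr' : r < 6 / 5)
    (hpr : 1 / p + 3 / r = 7 / 2) :
    ∃ C : ℝ≥0, ∀ h : Space → ℝ≥0∞, Measurable h →
      HasDualBound (sphericalWave h) p r (C * eLpNorm' h 2 volume) := by
  obtain ⟨C, hC⟩ := exists_eLpNorm'_advancedPotential_le hr hr' hpr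
  refine ⟨C, fun h hh G hG => ?_⟩
  have hcs : ∫⁻ z, h z * advancedPotential G z ≤
      eLpNorm' h 2 volume * eLpNorm' (advancedPotential G) 2 volume := by
    simpa only [eLpNorm'_eq_lintegral_enorm, enorm_eq_self, Pi.mul_apply] using
      ENNReal.lintegral_mul_le_Lp_mul_Lq volume Real.HolderConjugate.two_two hh.aemeasurable
        (measurable_advancedPotential hG).aemeasurable
  calc ∫⁻ q, G q * sphericalWave h q ∂futureMeasure
      = ∫⁻ z, h z * advancedPotential G z := lintegral_mul_sphericalWave hG hh
    _ ≤ eLpNorm' h 2 volume * (C * mixedLpNorm G p r) := hcs.trans (by gcongr; exact hC G hG)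
    _ = C * eLpNorm' h 2 volume * mixedLpNorm G p r := by ring

lemma exponent_pos (hr : 1 < r) (hpr : 1 / p + 3 / r = 7 / 2) : 0 < p := by
  have hr3 : 3 / r < 3 := by rw [div_lt_iff₀ (by linarith)]; linarith
  exact one_div_pos.1 (by linarith)

theorem exists_hasDualBound_duhamel (hr : 1 < r) (hr' : r < 6 / 5) (hpr : 1 / p + 3 / r = 7 / 2) :
    ∃ C : ℝ≥0, ∀ Q : ℝ × Space → ℝ≥0∞, Measurable Q →
      HasDualBound (fun q => ∫⁻ s in Ioo 0 q.1, sphericalWave (fun x => Q (s, x)) (q.1 - s, q.2))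
        p r (C * ∫⁻ s in Ioi (0 : ℝ), eLpNorm' (fun x => Q (s, x)) 2 volume) := by
  obtain ⟨C, hC⟩ := exists_hasDualBound_sphericalWave hr hr' hpr
  refine ⟨C, fun Q hQ => ?_⟩
  have hQs (s : ℝ) : Measurable fun x => Q (s, x) := by fun_prop
  have hbound : ∀ᵐ s ∂volume.restrict (Ioi (0 : ℝ)), HasDualBound
      (fun q => sphericalWave (fun x => Q (s, x)) (q.1 - s, q.2)) p r
        (C * eLpNorm' (fun x => Q (s, x)) 2 volume) := by
    filter_upwards [ae_restrict_mem measurableSet_Ioi] with s hs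
    exact (hC _ (hQs s)).timeShift (measurable_sphericalWave (hQs s)) (exponent_pos hr hpr)
      (fun t ht x => sphericalWave_of_nonpos ht x) (mem_Ioi.1 hs).le
  have hmeas : Measurable (Function.uncurry fun (s : ℝ) (q : ℝ × Space) =>
      sphericalWave (fun x => Q (s, x)) (q.1 - s, q.2)) :=
    Measurable.lintegral_prod_right' (f := fun z : (ℝ × ℝ × Space) × Metric.sphere (0 : Space) 1 =>
      ENNReal.ofReal (z.1.2.1 - z.1.1) * Q (z.1.1, z.1.2.2 + (z.1.2.1 - z.1.1) • (z.2 : Space)))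
      (by fun_prop)
  have hnorm := measurable_eLpNorm'_prodMk hQ 2
  rw [← lintegral_const_mul _ hnorm]
  exact (HasDualBound.lintegral _ hbound hmeas (hnorm.const_mul _)).mono
    fun t _ x => lintegral_mono_set Ioo_subset_Ioi_self

lemma setLIntegral_Ioi_one_rpow_ne_top {a : ℝ} (ha : a < -1) :
    ∫⁻ l in Ioi (1 : ℝ), ENNReal.ofReal l ^ a ≠ ∞ := by
  have hint := ((integrableOn_Ioi_rpow_iff one_pos).2 ha).lintegral_lt_top.ne
  rwa [← setLIntegral_congr_fun measurableSet_Ioi fun l (hl : 1 < l) =>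
    ENNReal.ofReal_rpow_of_pos (p := a) (one_pos.trans hl)] at hint

/-- A Hardy-type bound for initial positions: the fundamental theorem of calculus along rays
dominates spherical means by a superposition of dilated spherical waves. -/
theorem exists_hasDualBound_lintegral_sphere (hr : 1 < r) (hr' : r < 6 / 5)
    (hpr : 1 / p + 3 / r = 7 / 2) :
    ∃ C : ℝ≥0, ∀ e b : Space → ℝ≥0∞, Measurable b →
      (∀ (x : Space) (t : ℝ), 0 < t → ∀ w : Metric.sphere (0 : Space) 1, e (x + t • (w : Space)) ≤
        ∫⁻ l in Ioi (1 : ℝ), ENNReal.ofReal t * b (x + (l * t) • (w : Space))) →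
      HasDualBound (fun q => ∫⁻ w, e (q.2 + q.1 • (w : Space)) ∂surfaceMeasure) p r
        (C * eLpNorm' b 2 volume) := by
  obtain ⟨C, hC⟩ := exists_hasDualBound_sphericalWave hr hr' hpr
  have hr3 : 5 / 2 < 3 / r := by rw [lt_div_iff₀ (by linarith)]; linarith
  have hfin : ∫⁻ l in Ioi (1 : ℝ), ENNReal.ofReal l ^ (1 / p - 2) ≠ ∞ :=
    setLIntegral_Ioi_one_rpow_ne_top (by linarith)
  refine ⟨(∫⁻ l in Ioi (1 : ℝ), ENNReal.ofReal l ^ (1 / p - 2)).toNNReal * C,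
    fun e b hb heb => ?_⟩
  have hbw := measurable_sphericalWave hb
  have hle (t : ℝ) (ht : 0 < t) (x : Space) : ∫⁻ w, e (x + t • (w : Space)) ∂surfaceMeasure ≤
      ∫⁻ l in Ioi (1 : ℝ), (ENNReal.ofReal l)⁻¹ * sphericalWave b (l * t, x) := by
    refine (lintegral_mono fun w => heb x t ht w).trans_eq ?_
    rw [lintegral_lintegral_swap (by fun_prop)]
    refine setLIntegral_congr_fun measurableSet_Ioi fun l (hl : 1 < l) => ?_
    have hl0 : 0 < l := one_pos.trans hl
    have hinv : (ENNReal.ofReal l)⁻¹ * ENNReal.ofReal (l * t) = ENNReal.ofReal t := by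
      rw [ENNReal.ofReal_mul hl0.le, ← mul_assoc,
        ENNReal.inv_mul_cancel (by simpa using hl0) ENNReal.ofReal_ne_top, one_mul]
    simp only [sphericalWave, ← hinv, mul_assoc]
    exact lintegral_const_mul _ (by fun_prop)
  have hbound : ∀ᵐ l ∂volume.restrict (Ioi (1 : ℝ)), HasDualBound
      (fun q => (ENNReal.ofReal l)⁻¹ * sphericalWave b (l * q.1, q.2)) p r
        (ENNReal.ofReal l ^ (1 / p - 2) * (C * eLpNorm' b 2 volume)) := by
    filter_upwards [ae_restrict_mem measurableSet_Ioi] with l (hl : 1 < l)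
    have hl0 : ENNReal.ofReal l ≠ 0 := by simpa using one_pos.trans hl
    refine (((hC b hb).comp_mul hbw (exponent_pos hr hpr) (one_pos.trans hl)).const_mul
      (ENNReal.inv_ne_top.2 hl0)).mono_const (le_of_eq ?_)
    rw [← mul_assoc, ← ENNReal.rpow_neg_one, ← ENNReal.rpow_add _ _ hl0 ENNReal.ofReal_ne_top]
    ring_nf
  refine ((HasDualBound.lintegral _ hbound (by fun_prop) (by fun_prop)).mono hle).mono_const
    (le_of_eq ?_)
  rw [lintegral_mul_const _ (by fun_prop), ENNReal.coe_mul, ENNReal.coe_toNNReal hfin, mul_assoc]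

variable {q ρ : ℝ}

theorem exists_mixedLpNorm_le_of_le_sphericalWave (hr : 1 < r) (hr' : r < 6 / 5)
    (hpr : 1 / p + 3 / r = 7 / 2) (hpq : p.HolderConjugate q) (hrρ : r.HolderConjugate ρ) :
    ∃ C : ℝ≥0, ∀ (V Q : ℝ × Space → ℝ≥0∞) (a b e : Space → ℝ≥0∞),
      Measurable V → Measurable Q → Measurable a → Measurable b → Measurable e →
      (∀ t, 0 < t → ∀ x, surfaceMeasure univ * V (t, x) ≤
        sphericalWave a (t, x) + sphericalWave b (t, x) +
        ∫⁻ w, e (x + t • (w : Space)) ∂surfaceMeasure +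
        ∫⁻ s in Ioo 0 t, sphericalWave (fun y => Q (s, y)) (t - s, x)) →
      (∀ (x : Space) (t : ℝ), 0 < t → ∀ w : Metric.sphere (0 : Space) 1, e (x + t • (w : Space)) ≤
        ∫⁻ l in Ioi (1 : ℝ), ENNReal.ofReal t * b (x + (l * t) • (w : Space))) →
      (∀ t, ∫⁻ x, V (t, x) ^ ρ ≠ ∞) → mixedLpNorm V q ρ ≠ ∞ →
      mixedLpNorm V q ρ ≤ C * (eLpNorm' a 2 volume + eLpNorm' b 2 volume +
        ∫⁻ s in Ioi (0 : ℝ), eLpNorm' (fun x => Q (s, x)) 2 volume) := by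
  obtain ⟨C₁, hC₁⟩ := exists_hasDualBound_sphericalWave hr hr' hpr
  obtain ⟨C₂, hC₂⟩ := exists_hasDualBound_lintegral_sphere hr hr' hpr
  obtain ⟨C₃, hC₃⟩ := exists_hasDualBound_duhamel hr hr' hpr
  have hσ₀ : surfaceMeasure univ ≠ 0 :=
    Measure.measure_univ_ne_zero.2 (Measure.toSphere_ne_zero _)
  have hσ := ENNReal.inv_ne_top.2 hσ₀
  refine ⟨(surfaceMeasure univ)⁻¹.toNNReal * (C₁ + C₂ + C₃),
    fun V Q a b e hV hQ ha hb he hle heb hfin hfin' => ?_⟩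
  have haw := measurable_sphericalWave ha
  have hbw := measurable_sphericalWave hb
  have hew : Measurable fun q : ℝ × Space => ∫⁻ w, e (q.2 + q.1 • (w : Space)) ∂surfaceMeasure :=
    Measurable.lintegral_prod_right' (f := fun z : (ℝ × Space) × Metric.sphere (0 : Space) 1 =>
      e (z.1.2 + z.1.1 • (z.2 : Space))) (by fun_prop)
  have hbound := (((((hC₁ a ha).add (hC₁ b hb) haw).add (hC₂ e b hb heb) (haw.add hbw)).add
    (hC₃ Q hQ) ((haw.add hbw).add hew)).const_mul hσ).mono (V := V) fun t ht x => by
      rw [← ENNReal.mul_le_iff_le_inv hσ₀ (measure_ne_top _ _)]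
      exact hle t ht x
  refine (hbound.mixedLpNorm_le hV hpq hrρ hfin hfin').trans ?_
  rw [ENNReal.coe_mul, ENNReal.coe_toNNReal hσ, mul_assoc, ENNReal.coe_add, ENNReal.coe_add,
    add_mul, add_mul, ← mul_add]
  gcongr (surfaceMeasure univ)⁻¹ * ?_
  exact add_le_add (add_le_add (mul_le_mul' le_rfl le_self_add)
    (mul_le_mul' le_rfl (le_add_self.trans le_self_add))) (mul_le_mul' le_rfl le_add_self)

end SphericalWave

section SphereRotation

open scoped Pointwise

lemma intervalIntegral_integral_swap_of_continuousOn {X : Type*} [TopologicalSpace X]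
    [CompactSpace X] [T2Space X] [SecondCountableTopology X] [MeasurableSpace X]
    [OpensMeasurableSpace X]
    (μ : Measure X) [IsFiniteMeasure μ] {a b : ℝ} {F : ℝ → X → ℝ}
    (hF : ContinuousOn (Function.uncurry F) (uIcc a b ×ˢ univ)) :
    ∫ s in a..b, ∫ w, F s w ∂μ = ∫ w, (∫ s in a..b, F s w) ∂μ := by
  have hint := (hF.integrableOn_compact (μ := (volume : Measure ℝ).prod μ)
    (isCompact_uIcc.prod isCompact_univ)).mono_set (prod_mono uIoc_subset_uIcc subset_rfl)
  refine intervalIntegral_integral_swap ?_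
  rwa [IntegrableOn, ← Measure.prod_restrict, Measure.restrict_univ] at hint

variable {E : Type*} [NormedAddCommGroup E] [InnerProductSpace ℝ E] [FiniteDimensional ℝ E]

lemma norm_exp_smul_apply {B : E →L[ℝ] E} (hB : ∀ y, inner ℝ (B y) y = 0) (θ : ℝ) (y : E) :
    ‖NormedSpace.exp (θ • B) y‖ = ‖y‖ := by
  have hder (θ : ℝ) : HasDerivAt (fun θ : ℝ => NormedSpace.exp (θ • B) y)
      (B (NormedSpace.exp (θ • B) y)) θ := by
    simpa using (hasDerivAt_exp_smul_const' B θ).clm_apply (hasDerivAt_const θ y)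
  have hsq (θ : ℝ) : HasDerivAt (fun θ : ℝ => ‖NormedSpace.exp (θ • B) y‖ ^ 2) 0 θ := by
    simpa [real_inner_comm (B _), hB] using (hder θ).norm_sq
  have hconst := is_const_of_deriv_eq_zero (fun θ => (hsq θ).differentiableAt)
    (fun θ => (hsq θ).deriv) θ 0
  simpa using hconst

variable [MeasurableSpace E] [BorelSpace E]

lemma integral_toSphere_comp_linearIsometryEquiv {F : Type*} [NormedAddCommGroup F]
    [NormedSpace ℝ F] (A : E ≃ₗᵢ[ℝ] E) (φ : E → F) :
    ∫ w, φ (A (w : E)) ∂(volume : Measure E).toSphere =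
      ∫ w, φ (w : E) ∂(volume : Measure E).toSphere := by
  have hval : MeasurableEmbedding ((↑) : Metric.sphere (0 : E) 1 → E) :=
    .subtype_coe Metric.isClosed_sphere.measurableSet
  have hA : MeasurePreserving A.toMeasurableEquiv
      ((volume : Measure E).toSphere.map ((↑) : Metric.sphere (0 : E) 1 → E))
      ((volume : Measure E).toSphere.map ((↑) : Metric.sphere (0 : E) 1 → E)) := by
    refine ⟨A.toMeasurableEquiv.measurable, Measure.ext fun s hs => ?_⟩
    have hcone : Ioo (0 : ℝ) 1 • (Metric.sphere (0 : E) 1 ∩ A ⁻¹' s) =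
        A ⁻¹' (Ioo (0 : ℝ) 1 • (Metric.sphere (0 : E) 1 ∩ s)) := by
      ext y
      simp only [mem_smul, mem_inter_iff, mem_sphere_zero_iff_norm, mem_preimage]
      constructor
      · rintro ⟨r, hr, z, ⟨hz, hzs⟩, rfl⟩
        exact ⟨r, hr, A z, ⟨by simpa using hz, hzs⟩, by simp⟩
      · rintro ⟨r, hr, z, ⟨hz, hzs⟩, hy⟩
        exact ⟨r, hr, A.symm z, ⟨by simpa using hz, by simpa using hzs⟩,
          A.injective (by simpa using hy)⟩
    rw [A.toMeasurableEquiv.map_apply, hval.map_apply, hval.map_apply,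
      Measure.toSphere_apply' _ (hval.measurable (A.toMeasurableEquiv.measurable hs)),
      Measure.toSphere_apply' _ (hval.measurable hs), Subtype.image_preimage_coe,
      Subtype.image_preimage_coe]
    congr 1
    rw [show A.toMeasurableEquiv ⁻¹' s = A ⁻¹' s from rfl, hcone]
    exact A.measurePreserving.measure_preimage_equiv (f := A.toMeasurableEquiv) _
  rw [← hval.integral_map, ← hval.integral_map (g := fun y => φ (A y))]
  exact hA.integral_comp' φ

/-- The rotations generated by `B` preserve the surface measure. -/
lemma integral_toSphere_fderiv_apply_eq_zero {B : E →L[ℝ] E} (hB : ∀ y, inner ℝ (B y) y = 0)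
    {φ : E → ℝ} (hφ : ContDiff ℝ 1 φ) :
    ∫ w, fderiv ℝ φ (w : E) (B w) ∂(volume : Measure E).toSphere = 0 := by
  let R (θ : ℝ) : E ≃ₗᵢ[ℝ] E :=
    LinearIsometry.toLinearIsometryEquiv
      ⟨(NormedSpace.exp (θ • B) : E →L[ℝ] E).toLinearMap, norm_exp_smul_apply hB θ⟩ rfl
  have hRc : Continuous fun q : ℝ × E => R q.1 q.2 := by
    have hexp : Continuous fun θ : ℝ => NormedSpace.exp (θ • B) :=
      continuous_iff_continuousAt.2 fun θ => (hasDerivAt_exp_smul_const B θ).continuousAt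
    exact (hexp.comp continuous_fst).clm_apply continuous_snd
  have hDc : Continuous fun y => fderiv ℝ φ y (B y) :=
    (hφ.continuous_fderiv one_ne_zero).clm_apply B.continuous
  have hder (y : E) (θ : ℝ) :
      HasDerivAt (fun θ => φ (R θ y)) (fderiv ℝ φ (R θ y) (B (R θ y))) θ := by
    have hR : HasDerivAt (fun θ => R θ y) (B (R θ y)) θ := by
      simpa [R] using (hasDerivAt_exp_smul_const' B θ).clm_apply (hasDerivAt_const θ y)
    exact (hφ.differentiable one_ne_zero _).hasFDerivAt.comp_hasDerivAt θ hR
  have hftc (y : E) :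
      ∫ θ in (0 : ℝ)..1, fderiv ℝ φ (R θ y) (B (R θ y)) = φ (R 1 y) - φ (R 0 y) :=
    intervalIntegral.integral_eq_sub_of_hasDerivAt (fun θ _ => hder y θ)
      ((hDc.comp (hRc.comp (by fun_prop : Continuous fun θ => (θ, y)))).intervalIntegrable _ _)
  have hint (θ : ℝ) : Integrable (fun w : Metric.sphere (0 : E) 1 => φ (R θ w))
      (volume : Measure E).toSphere :=
    Continuous.integrable_of_hasCompactSupport
      (hφ.continuous.comp ((R θ).continuous.comp continuous_subtype_val))
      (HasCompactSupport.of_compactSpace _)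
  have hswap := intervalIntegral_integral_swap_of_continuousOn (a := 0) (b := 1)
    (F := fun θ (w : Metric.sphere (0 : E) 1) => fderiv ℝ φ (R θ w) (B (R θ w)))
    (volume : Measure E).toSphere
    (hDc.comp (hRc.comp (by fun_prop : Continuous fun q : ℝ × Metric.sphere (0 : E) 1 =>
      (q.1, (q.2 : E))))).continuousOn
  simpa [hftc, integral_sub (hint 1) (hint 0), integral_toSphere_comp_linearIsometryEquiv (R _),
    integral_toSphere_comp_linearIsometryEquiv (R _) fun y => fderiv ℝ φ y (B y)] using hswap

end SphereRotation

section SphereLaplacian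

/-- The infinitesimal rotation `yᵢ ∂ⱼ - yⱼ ∂ᵢ`. -/
def rotationGenerator (i j : Fin 3) : Space →L[ℝ] Space :=
  (EuclideanSpace.proj i).smulRight (EuclideanSpace.single j 1) -
    (EuclideanSpace.proj j).smulRight (EuclideanSpace.single i 1)

lemma rotationGenerator_apply (i j : Fin 3) (y : Space) : rotationGenerator i j y =
    y i • EuclideanSpace.single j (1 : ℝ) - y j • EuclideanSpace.single i (1 : ℝ) := by
  simp [rotationGenerator]

lemma inner_rotationGenerator_self (i j : Fin 3) (y : Space) :
    inner ℝ (rotationGenerator i j y) y = 0 := by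
  simp [rotationGenerator_apply, inner_sub_left, inner_smul_left, EuclideanSpace.inner_single_left,
    mul_comm]

lemma eq_sum_smul_single (y : Space) :
    y = y 0 • EuclideanSpace.single 0 (1 : ℝ) + y 1 • EuclideanSpace.single 1 (1 : ℝ) +
      y 2 • EuclideanSpace.single 2 (1 : ℝ) := by
  ext i
  fin_cases i <;> simp

lemma sum_rotationGenerator_rotationGenerator (y : Space) :
    ∑ i, ∑ j, rotationGenerator i j (rotationGenerator i j y) = -(4 : ℝ) • y := by
  ext k
  fin_cases k <;> simp [rotationGenerator_apply, Fin.sum_univ_three] <;> ring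

lemma sum_apply_rotationGenerator (H : Space →L[ℝ] Space →L[ℝ] ℝ) (y : Space) :
    ∑ i, ∑ j, H (rotationGenerator i j y) (rotationGenerator i j y) =
      2 * (‖y‖ ^ 2 * ∑ i, H (EuclideanSpace.single i 1) (EuclideanSpace.single i 1) - H y y) := by
  have hH : H y y = ∑ i, ∑ j, y i * y j *
      H (EuclideanSpace.single i 1) (EuclideanSpace.single j 1) := by
    conv_lhs => rw [eq_sum_smul_single y]
    simp [Fin.sum_univ_three]
    ring
  rw [hH, EuclideanSpace.real_norm_sq_eq]
  simp only [rotationGenerator_apply, Fin.sum_univ_three, map_sub, map_smul, FunLike.coe_sub,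
    FunLike.coe_smul, Pi.sub_apply, Pi.smul_apply, smul_eq_mul]
  ring

lemma lap_eq_sum_fderiv_fderiv {h : Space → ℝ} (hh : ContDiff ℝ 2 h) (y : Space) :
    lap h y = ∑ i, fderiv ℝ (fderiv ℝ h) y (EuclideanSpace.single i 1)
      (EuclideanSpace.single i 1) := by
  have hd : ContDiff ℝ 1 (fderiv ℝ h) := hh.fderiv_right (by norm_num)
  refine Finset.sum_congr rfl fun i _ => ?_
  rw [((hd.differentiable one_ne_zero y).hasFDerivAt.clm_apply (hasFDerivAt_const _ y)).fderiv]
  simp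

lemma integral_sphere_fderiv_rotationGenerator (i j : Fin 3) {φ : Space → ℝ}
    (hφ : ContDiff ℝ 2 φ) :
    ∫ w, (fderiv ℝ (fderiv ℝ φ) (w : Space) (rotationGenerator i j w) (rotationGenerator i j w) +
      fderiv ℝ φ (w : Space) (rotationGenerator i j (rotationGenerator i j w))) ∂surfaceMeasure =
      0 := by
  have hd : ContDiff ℝ 1 (fderiv ℝ φ) := hφ.fderiv_right (by norm_num)
  have hfderiv (y : Space) :=
    ((hd.differentiable one_ne_zero y).hasFDerivAt.clm_apply
      (rotationGenerator i j).hasFDerivAt).fderiv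
  simpa [hfderiv, add_comm] using integral_toSphere_fderiv_apply_eq_zero
    (inner_rotationGenerator_self i j) (hd.clm_apply (rotationGenerator i j).contDiff)

/-- The sum over all `i, j` of the rotational identities is the decomposition of the Laplacian into
radial and spherical parts, integrated over the sphere. -/
lemma integral_sphere_lap_eq_zero {φ : Space → ℝ} (hφ : ContDiff ℝ 2 φ) :
    ∫ w, (fderiv ℝ (fderiv ℝ φ) (w : Space) w w + 2 * fderiv ℝ φ (w : Space) w -
      lap φ (w : Space)) ∂surfaceMeasure = 0 := by
  have hd : ContDiff ℝ 1 (fderiv ℝ φ) := hφ.fderiv_right (by norm_num)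
  have hdc := hd.continuous
  have hint (i j : Fin 3) : Integrable (fun w : Metric.sphere (0 : Space) 1 =>
      fderiv ℝ (fderiv ℝ φ) (w : Space) (rotationGenerator i j w) (rotationGenerator i j w) +
        fderiv ℝ φ (w : Space) (rotationGenerator i j (rotationGenerator i j w)))
      surfaceMeasure :=
    Continuous.integrable_of_hasCompactSupport (by fun_prop) (HasCompactSupport.of_compactSpace _)
  have hsum : ∫ w, ∑ i, ∑ j, (fderiv ℝ (fderiv ℝ φ) (w : Space) (rotationGenerator i j w)
      (rotationGenerator i j w) + fderiv ℝ φ (w : Space)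
        (rotationGenerator i j (rotationGenerator i j w))) ∂surfaceMeasure = 0 := by
    rw [integral_finsetSum _ fun i _ => integrable_finsetSum _ fun j _ => hint i j]
    simp only [integral_finsetSum _ fun j _ => hint _ j,
      integral_sphere_fderiv_rotationGenerator _ _ hφ, Finset.sum_const_zero]
  rw [← mul_eq_zero_iff_left (by norm_num : (-2 : ℝ) ≠ 0), ← hsum, ← integral_const_mul]
  congr 1 with w
  simp only [Finset.sum_add_distrib, sum_apply_rotationGenerator, ← map_sum,
    sum_rotationGenerator_rotationGenerator, lap_eq_sum_fderiv_fderiv hφ, norm_eq_of_mem_sphere]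
  simp only [map_smul, smul_eq_mul]
  ring

lemma integral_sphere_lap_comp_eq_zero {h : Space → ℝ} (hh : ContDiff ℝ 2 h) (x : Space) {r : ℝ}
    (hr : r ≠ 0) :
    ∫ w, (r * fderiv ℝ (fderiv ℝ h) (x + r • (w : Space)) w w +
      2 * fderiv ℝ h (x + r • (w : Space)) w - r * lap h (x + r • (w : Space))) ∂surfaceMeasure =
      0 := by
  have hcomp : ContDiff ℝ 2 fun y => h (x + r • y) := hh.comp (by fun_prop)
  have hd : fderiv ℝ (fun y => h (x + r • y)) = fun y => r • fderiv ℝ h (x + r • y) := by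
    ext1 y
    rw [fderiv_comp_smul (f := fun y => h (x + y)), fderiv_comp_add_left]
  have hdiff : Differentiable ℝ fun y => fderiv ℝ h (x + r • y) :=
    ((hh.fderiv_right (m := 1) (by norm_num)).differentiable one_ne_zero).comp (by fun_prop)
  have hdd (y : Space) : fderiv ℝ (fun y => r • fderiv ℝ h (x + r • y)) y =
      r • r • fderiv ℝ (fderiv ℝ h) (x + r • y) := by
    rw [fderiv_fun_const_smul (hdiff y),
      fderiv_comp_smul (f := fun y => fderiv ℝ h (x + y)), fderiv_comp_add_left]
  have hzero := integral_sphere_lap_eq_zero hcomp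
  simp only [lap_eq_sum_fderiv_fderiv hcomp, hd, hdd] at hzero
  rw [← mul_eq_zero_iff_left hr, ← hzero, ← integral_const_mul]
  congr 1 with w
  simp only [lap_eq_sum_fderiv_fderiv hh, FunLike.coe_smul, Pi.smul_apply, smul_eq_mul,
    ← Finset.mul_sum]
  ring

end SphereLaplacian

section SpaceTimeDerivatives

open Function

variable {u : ℝ → Space → ℝ} {I : Set ℝ} {s : ℝ}

lemma hasDerivAt_clm_apply_const {E F G : Type*} [NormedAddCommGroup E] [NormedSpace ℝ E]
    [NormedAddCommGroup F] [NormedSpace ℝ F] [NormedAddCommGroup G] [NormedSpace ℝ G]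
    {D : E → F →L[ℝ] G} {D' : E →L[ℝ] F →L[ℝ] G} {γ : ℝ → E} {γ' : E}
    (hD : HasFDerivAt D D' (γ s)) (hγ : HasDerivAt γ γ' s) (e : F) :
    HasDerivAt (fun s => D (γ s) e) (D' γ' e) s := by
  simpa using (hD.comp_hasDerivAt s hγ).clm_apply (hasDerivAt_const s e)

lemma hasFDerivAt_uncurry (hI : IsOpen I) (hu : ContDiffOn ℝ 2 (uncurry u) (I ×ˢ univ))
    (hs : s ∈ I) (y : Space) :
    HasFDerivAt (uncurry u) (fderiv ℝ (uncurry u) (s, y)) (s, y) :=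
  ((hu.contDiffAt ((hI.prod isOpen_univ).mem_nhds ⟨hs, trivial⟩)).differentiableAt
    two_ne_zero).hasFDerivAt

lemma contDiffOn_fderiv_uncurry (hI : IsOpen I) (hu : ContDiffOn ℝ 2 (uncurry u) (I ×ˢ univ)) :
    ContDiffOn ℝ 1 (fderiv ℝ (uncurry u)) (I ×ˢ univ) :=
  hu.fderiv_of_isOpen (hI.prod isOpen_univ) (by norm_num)

lemma continuousOn_fderiv_fderiv_uncurry (hI : IsOpen I)
    (hu : ContDiffOn ℝ 2 (uncurry u) (I ×ˢ univ)) :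
    ContinuousOn (fderiv ℝ (fderiv ℝ (uncurry u))) (I ×ˢ univ) :=
  (contDiffOn_fderiv_uncurry hI hu).continuousOn_fderiv_of_isOpen (hI.prod isOpen_univ) le_rfl

lemma hasFDerivAt_fderiv_uncurry (hI : IsOpen I) (hu : ContDiffOn ℝ 2 (uncurry u) (I ×ˢ univ))
    (hs : s ∈ I) (y : Space) :
    HasFDerivAt (fderiv ℝ (uncurry u)) (fderiv ℝ (fderiv ℝ (uncurry u)) (s, y)) (s, y) :=
  (((contDiffOn_fderiv_uncurry hI hu).contDiffAt
    ((hI.prod isOpen_univ).mem_nhds ⟨hs, trivial⟩)).differentiableAt one_ne_zero).hasFDerivAt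

lemma contDiff_slice {n : ℕ∞} (hI : IsOpen I) (hu : ContDiffOn ℝ n (uncurry u) (I ×ˢ univ))
    (hs : s ∈ I) : ContDiff ℝ n (u s) :=
  contDiff_iff_contDiffAt.2 fun y =>
    (hu.contDiffAt ((hI.prod isOpen_univ).mem_nhds ⟨hs, trivial⟩)).comp (f := fun y => (s, y)) y
      (contDiffAt_const.prodMk contDiffAt_id)

lemma fderiv_slice (hI : IsOpen I) (hu : ContDiffOn ℝ 2 (uncurry u) (I ×ˢ univ)) (hs : s ∈ I)
    (y : Space) :
    fderiv ℝ (u s) y = (fderiv ℝ (uncurry u) (s, y)).comp (ContinuousLinearMap.inr ℝ ℝ Space) :=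
  ((hasFDerivAt_uncurry hI hu hs y).comp y (hasFDerivAt_prodMk_right s y)).fderiv

lemma fderiv_fderiv_slice_apply (hI : IsOpen I) (hu : ContDiffOn ℝ 2 (uncurry u) (I ×ˢ univ))
    (hs : s ∈ I) (y a b : Space) :
    fderiv ℝ (fderiv ℝ (u s)) y a b = fderiv ℝ (fderiv ℝ (uncurry u)) (s, y) (0, a) (0, b) := by
  have hcomp := ((hasFDerivAt_fderiv_uncurry hI hu hs y).comp y
    (hasFDerivAt_prodMk_right s y)).clm_comp
      (hasFDerivAt_const (ContinuousLinearMap.inr ℝ ℝ Space) y)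
  have hfderiv := hcomp.fderiv
  simp only [Function.comp_def] at hfderiv
  rw [funext (fderiv_slice hI hu hs), hfderiv]
  simp

lemma dt1_eq (hI : IsOpen I) (hu : ContDiffOn ℝ 2 (uncurry u) (I ×ˢ univ)) (hs : s ∈ I)
    (y : Space) : dt1 u s y = fderiv ℝ (uncurry u) (s, y) (1, 0) := by
  have hline : HasDerivAt (fun s => (s, y)) (1, 0) s :=
    (hasDerivAt_id s).prodMk (hasDerivAt_const s y)
  exact ((hasFDerivAt_uncurry hI hu hs y).comp_hasDerivAt s hline).deriv

lemma dt2_eq (hI : IsOpen I) (hu : ContDiffOn ℝ 2 (uncurry u) (I ×ˢ univ)) (hs : s ∈ I)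
    (y : Space) : dt2 u s y = fderiv ℝ (fderiv ℝ (uncurry u)) (s, y) (1, 0) (1, 0) := by
  have hdt1 : (fun s => dt1 u s y) =ᶠ[𝓝 s] fun s => fderiv ℝ (uncurry u) (s, y) (1, 0) := by
    filter_upwards [hI.mem_nhds hs] with s' hs' using dt1_eq hI hu hs' y
  rw [dt2, hdt1.deriv_eq]
  exact (hasDerivAt_clm_apply_const (hasFDerivAt_fderiv_uncurry hI hu hs y)
    ((hasDerivAt_id s).prodMk (hasDerivAt_const s y)) _).deriv

end SpaceTimeDerivatives

section Kirchhoff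

open Function

variable {u : ℝ → Space → ℝ} {I : Set ℝ} {s t : ℝ}

/-- The outgoing null derivative `(∂ₜ + ∂ᵣ)(r u)`, with `r = t - s`, at the point reached at time
`s` by the backward light ray from `(t, x)` in the direction `w`. -/
def outgoingDeriv (u : ℝ → Space → ℝ) (t : ℝ) (x : Space) (s : ℝ) (w : Space) : ℝ :=
  (t - s) * fderiv ℝ (uncurry u) (s, x + (t - s) • w) (1, w) + u s (x + (t - s) • w)

/-- The radial wave operator `(∂ₜ - ∂ᵣ)(∂ₜ + ∂ᵣ)(r u)`, with `r = t - s`, at the same point as in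
`outgoingDeriv`. -/
def radialWaveOp (u : ℝ → Space → ℝ) (t : ℝ) (x : Space) (s : ℝ) (w : Space) : ℝ :=
  (t - s) * fderiv ℝ (fderiv ℝ (uncurry u)) (s, x + (t - s) • w) (1, -w) (1, w) -
    2 * fderiv ℝ (uncurry u) (s, x + (t - s) • w) (0, w)

lemma hasDerivAt_outgoingDeriv (hI : IsOpen I) (hu : ContDiffOn ℝ 2 (uncurry u) (I ×ˢ univ))
    (hs : s ∈ I) (t : ℝ) (x w : Space) :
    HasDerivAt (fun s => outgoingDeriv u t x s w) (radialWaveOp u t x s w) s := by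
  have hsub : HasDerivAt (fun s => t - s) (-1) s := (hasDerivAt_id s).const_sub t
  have hray : HasDerivAt (fun s => (s, x + (t - s) • w)) (1, -w) s := by
    simpa using (hasDerivAt_id s).prodMk ((hsub.smul_const w).const_add x)
  have hder := (hsub.mul (hasDerivAt_clm_apply_const
    (hasFDerivAt_fderiv_uncurry hI hu hs _) hray (1, w))).add
      ((hasFDerivAt_uncurry hI hu hs _).comp_hasDerivAt s hray)
  have hsplit (D : ℝ × Space →L[ℝ] ℝ) : -1 * D (1, w) + D (1, -w) = -2 * D (0, w) := by
    rw [neg_one_mul, neg_add_eq_sub, ← map_sub, ← smul_eq_mul, ← map_smul]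
    simp [two_smul, sub_eq_add_neg]
  refine hder.congr_deriv ?_
  rw [radialWaveOp]
  linear_combination hsplit (fderiv ℝ (uncurry u) (s, x + (t - s) • w))

lemma continuousOn_comp_backwardRay {E : Type*} [TopologicalSpace E] {Φ : ℝ × Space → E}
    (hΦ : ContinuousOn Φ (I ×ˢ univ)) (t : ℝ) (x : Space) :
    ContinuousOn (fun p : ℝ × Metric.sphere (0 : Space) 1 => Φ (p.1, x + (t - p.1) • (p.2 : Space)))
      (I ×ˢ univ) :=
  hΦ.comp (by fun_prop) fun _ hp => ⟨hp.1, trivial⟩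

lemma continuousOn_outgoingDeriv (hI : IsOpen I) (hu : ContDiffOn ℝ 2 (uncurry u) (I ×ˢ univ))
    (t : ℝ) (x : Space) :
    ContinuousOn (uncurry fun s (w : Metric.sphere (0 : Space) 1) => outgoingDeriv u t x s w)
      (I ×ˢ univ) := by
  have hD := continuousOn_comp_backwardRay (contDiffOn_fderiv_uncurry hI hu).continuousOn t x
  exact (ContinuousOn.mul (by fun_prop) (hD.clm_apply (by fun_prop))).add
    (continuousOn_comp_backwardRay hu.continuousOn t x)

lemma continuousOn_radialWaveOp (hI : IsOpen I) (hu : ContDiffOn ℝ 2 (uncurry u) (I ×ˢ univ))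
    (t : ℝ) (x : Space) :
    ContinuousOn (uncurry fun s (w : Metric.sphere (0 : Space) 1) => radialWaveOp u t x s w)
      (I ×ˢ univ) := by
  have hD := continuousOn_comp_backwardRay (contDiffOn_fderiv_uncurry hI hu).continuousOn t x
  have hD2 := continuousOn_comp_backwardRay (continuousOn_fderiv_fderiv_uncurry hI hu) t x
  exact (ContinuousOn.mul (by fun_prop) ((hD2.clm_apply (by fun_prop)).clm_apply
    (by fun_prop))).sub (continuousOn_const.mul (hD.clm_apply (by fun_prop)))

lemma integrable_slice_of_continuousOn {F : ℝ → Metric.sphere (0 : Space) 1 → ℝ}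
    (hF : ContinuousOn (uncurry F) (I ×ˢ univ)) (hs : s ∈ I) :
    Integrable (F s) surfaceMeasure := by
  have hcont : Continuous (F s) :=
    hF.comp_continuous (f := fun w => (s, w)) (by fun_prop) fun _ => ⟨hs, trivial⟩
  exact hcont.integrable_of_hasCompactSupport (HasCompactSupport.of_compactSpace _)

lemma integral_radialWaveOp (hI : IsOpen I) (hu : ContDiffOn ℝ 2 (uncurry u) (I ×ˢ univ))
    (hs : s ∈ I) (hst : s ≠ t) (x : Space) :
    ∫ w, radialWaveOp u t x s (w : Space) ∂surfaceMeasure =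
      ∫ w, (t - s) * (dt2 u s (x + (t - s) • (w : Space)) -
        lap (u s) (x + (t - s) • (w : Space))) ∂surfaceMeasure := by
  have hus : ContDiff ℝ 2 (u s) := contDiff_slice (n := 2) hI hu hs
  have hlap := integral_sphere_lap_comp_eq_zero hus x (sub_ne_zero.2 hst.symm)
  have hint : Integrable (fun w : Metric.sphere (0 : Space) 1 =>
      (t - s) * fderiv ℝ (fderiv ℝ (u s)) (x + (t - s) • (w : Space)) w w +
        2 * fderiv ℝ (u s) (x + (t - s) • (w : Space)) w -
        (t - s) * lap (u s) (x + (t - s) • (w : Space))) surfaceMeasure := by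
    have hus' : ContDiff ℝ 1 (fderiv ℝ (u s)) := hus.fderiv_right (by norm_num)
    have := hus'.continuous
    have := hus'.continuous_fderiv one_ne_zero
    refine Continuous.integrable_of_hasCompactSupport ?_ (HasCompactSupport.of_compactSpace _)
    simp only [lap_eq_sum_fderiv_fderiv hus]
    fun_prop
  rw [← add_zero (∫ w, radialWaveOp u t x s (w : Space) ∂surfaceMeasure), ← hlap,
    ← integral_add (integrable_slice_of_continuousOn (continuousOn_radialWaveOp hI hu t x) hs) hint]
  refine integral_congr_ae (.of_forall fun w => ?_)
  have hsymm := ((hu.contDiffAt ((hI.prod isOpen_univ).mem_nhds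
    ⟨hs, trivial⟩)).isSymmSndFDerivAt (by simp)).eq ((0 : ℝ), (w : Space)) (1, 0)
    (x := (s, x + (t - s) • (w : Space)))
  have hin : ((1 : ℝ), -(w : Space)) = (1, 0) - (0, (w : Space)) := by simp
  have hout : ((1 : ℝ), (w : Space)) = (1, 0) + (0, (w : Space)) := by simp
  simp only [radialWaveOp, fderiv_fderiv_slice_apply hI hu hs, fderiv_slice hI hu hs,
    dt2_eq hI hu hs, hin, hout, map_sub, map_add, FunLike.coe_sub, Pi.sub_apply,
    ContinuousLinearMap.comp_apply, ContinuousLinearMap.inr_apply]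
  linear_combination -(t - s) * hsymm

/-- Kirchhoff's formula, by integrating the radial wave operator along backward rays. -/
lemma integral_const_eq_integral_outgoingDeriv_add (hI : IsOpen I)
    (hu : ContDiffOn ℝ 2 (uncurry u) (I ×ˢ univ)) (ht : uIcc 0 t ⊆ I) (x : Space) :
    ∫ _, u t x ∂surfaceMeasure = ∫ w, outgoingDeriv u t x 0 (w : Space) ∂surfaceMeasure +
      ∫ s in 0..t, ∫ w, (t - s) * (dt2 u s (x + (t - s) • (w : Space)) -
        lap (u s) (x + (t - s) • (w : Space))) ∂surfaceMeasure := by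
  have hcont := (continuousOn_radialWaveOp hI hu t x).mono (prod_mono ht subset_rfl)
  have hftc (w : Metric.sphere (0 : Space) 1) :
      ∫ s in 0..t, radialWaveOp u t x s (w : Space) =
        outgoingDeriv u t x t (w : Space) - outgoingDeriv u t x 0 (w : Space) := by
    refine intervalIntegral.integral_eq_sub_of_hasDerivAt
      (fun s hs => hasDerivAt_outgoingDeriv hI hu (ht hs) t x w)
      (ContinuousOn.intervalIntegrable ?_)
    exact hcont.comp (f := fun s => (s, w)) (by fun_prop) fun _ hs => ⟨hs, trivial⟩
  have hsource : ∫ s in 0..t, ∫ w, (t - s) * (dt2 u s (x + (t - s) • (w : Space)) -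
      lap (u s) (x + (t - s) • (w : Space))) ∂surfaceMeasure =
      ∫ s in 0..t, ∫ w, radialWaveOp u t x s (w : Space) ∂surfaceMeasure := by
    refine intervalIntegral.integral_congr_ae ?_
    filter_upwards [Measure.ae_ne volume t] with s hst hs
    exact (integral_radialWaveOp hI hu (ht (uIoc_subset_uIcc hs)) hst x).symm
  rw [hsource, intervalIntegral_integral_swap_of_continuousOn _ hcont]
  simp only [hftc]
  have hvertex (w : Metric.sphere (0 : Space) 1) : outgoingDeriv u t x t (w : Space) = u t x := by
    simp [outgoingDeriv]
  simp only [hvertex]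
  rw [integral_sub (integrable_const _) (integrable_slice_of_continuousOn
    (continuousOn_outgoingDeriv hI hu t x) (ht left_mem_uIcc))]
  ring

lemma enorm_outgoingDeriv_zero_le (hI : IsOpen I) (hu : ContDiffOn ℝ 2 (uncurry u) (I ×ˢ univ))
    (h0 : 0 ∈ I) (ht : 0 ≤ t) (x : Space) (w : Metric.sphere (0 : Space) 1) :
    ‖outgoingDeriv u t x 0 (w : Space)‖ₑ ≤
      ENNReal.ofReal t * ‖dt1 u 0 (x + t • (w : Space))‖ₑ +
        ENNReal.ofReal t * ‖fderiv ℝ (u 0) (x + t • (w : Space))‖ₑ +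
          ‖u 0 (x + t • (w : Space))‖ₑ := by
  have hsplit : outgoingDeriv u t x 0 (w : Space) = t * dt1 u 0 (x + t • (w : Space)) +
      t * fderiv ℝ (u 0) (x + t • (w : Space)) w + u 0 (x + t • (w : Space)) := by
    rw [outgoingDeriv, fderiv_slice hI hu h0, dt1_eq hI hu h0, sub_zero, ← mul_add,
      ContinuousLinearMap.comp_apply, ← map_add]
    simp
  have hw : ‖(w : Space)‖ₑ = 1 := by rw [← ofReal_norm, norm_eq_of_mem_sphere, ENNReal.ofReal_one]
  rw [hsplit, ← Real.enorm_eq_ofReal ht]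
  refine (enorm_add_le _ _).trans (add_le_add_left ((enorm_add_le _ _).trans ?_) _)
  rw [enorm_mul, enorm_mul]
  gcongr
  simpa [hw] using (fderiv ℝ (u 0) (x + t • (w : Space))).le_opENorm (w : Space)

lemma surfaceMeasure_univ_mul_enorm_le (hI : IsOpen I)
    (hu : ContDiffOn ℝ 2 (uncurry u) (I ×ˢ univ)) {q : ℝ → Space → ℝ}
    (hq : ∀ s ∈ I, ∀ y, dt2 u s y - lap (u s) y = q s y) (h0 : 0 < t) (ht : Icc 0 t ⊆ I)
    (x : Space) :
    surfaceMeasure univ * ‖u t x‖ₑ ≤ sphericalWave (fun y => ‖dt1 u 0 y‖ₑ) (t, x) +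
      sphericalWave (fun y => ‖fderiv ℝ (u 0) y‖ₑ) (t, x) +
      ∫⁻ w, ‖u 0 (x + t • (w : Space))‖ₑ ∂surfaceMeasure +
      ∫⁻ s in Ioo 0 t, sphericalWave (fun y => ‖q s y‖ₑ) (t - s, x) := by
  have h0I : 0 ∈ I := ht (left_mem_Icc.2 h0.le)
  have hu0 : ContDiff ℝ 2 (u 0) := contDiff_slice (n := 2) hI hu h0I
  have hmeas : Measurable fun w : Metric.sphere (0 : Space) 1 => ‖u 0 (x + t • (w : Space))‖ₑ := by
    have := hu0.continuous
    exact Continuous.measurable (by fun_prop)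
  have hmeas' : Measurable fun w : Metric.sphere (0 : Space) 1 =>
      ENNReal.ofReal t * ‖fderiv ℝ (u 0) (x + t • (w : Space))‖ₑ := by
    have := hu0.continuous_fderiv two_ne_zero
    fun_prop
  have hmean : surfaceMeasure univ * ‖u t x‖ₑ = ‖∫ _, u t x ∂surfaceMeasure‖ₑ := by
    rw [integral_const, enorm_smul, measureReal_def, Real.enorm_eq_ofReal ENNReal.toReal_nonneg,
      ENNReal.ofReal_toReal (measure_ne_top _ _)]
  rw [hmean, integral_const_eq_integral_outgoingDeriv_add hI hu (uIcc_of_le h0.le ▸ ht) x]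
  refine (enorm_add_le _ _).trans (add_le_add ?_ ?_)
  · simp only [sphericalWave]
    rw [← lintegral_add_right _ hmeas', ← lintegral_add_right _ hmeas]
    exact (enorm_integral_le_lintegral_enorm _).trans
      (lintegral_mono (enorm_outgoingDeriv_zero_le hI hu h0I h0.le x))
  · rw [intervalIntegral.integral_of_le h0.le, integral_Ioc_eq_integral_Ioo]
    refine (enorm_integral_le_lintegral_enorm _).trans
      (setLIntegral_mono' measurableSet_Ioo fun s hs => ?_)
    refine (enorm_integral_le_lintegral_enorm _).trans (lintegral_mono fun w => ?_)
    rw [enorm_mul, Real.enorm_eq_ofReal (sub_nonneg.2 hs.2.le),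
      hq s (ht (Ioo_subset_Icc_self hs))]

end Kirchhoff

section SobolevEmbedding

variable {E : Type*} [NormedAddCommGroup E] [NormedSpace ℝ E]

lemma enorm_add_smul_le_lintegral_Ioi {h : E → ℝ} (hh : ContDiff ℝ 1 h) (hs : HasCompactSupport h)
    (x : E) {v : E} (hv : v ≠ 0) (r : ℝ) :
    ‖h (x + r • v)‖ₑ ≤ ∫⁻ l in Ioi r, ‖fderiv ℝ h (x + l • v)‖ₑ * ‖v‖ₑ := by
  have hline : Topology.IsClosedEmbedding fun l : ℝ => x + (-l) • v :=
    ((Homeomorph.addLeft x).isClosedEmbedding.comp (isClosedEmbedding_smul_left hv)).comp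
      (Homeomorph.neg ℝ).isClosedEmbedding
  have hderiv (l : ℝ) : ‖deriv (fun l : ℝ => h (x + (-l) • v)) l‖ₑ ≤
      ‖fderiv ℝ h (x + (-l) • v)‖ₑ * ‖v‖ₑ := by
    have hline' : HasDerivAt (fun l : ℝ => x + (-l) • v) (-v) l := by
      simpa using ((hasDerivAt_id l).neg.smul_const v).const_add x
    have hcomp := (hh.differentiable one_ne_zero _).hasFDerivAt.comp_hasDerivAt l hline'
    rw [Function.comp_def] at hcomp
    rw [hcomp.deriv, ← enorm_neg v]
    exact ContinuousLinearMap.le_opENorm _ _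
  calc ‖h (x + r • v)‖ₑ
      ≤ ∫⁻ l in Iic (-r), ‖deriv (fun l : ℝ => h (x + (-l) • v)) l‖ₑ := by
        simpa [Function.comp_def] using HasCompactSupport.enorm_le_lintegral_Ici_deriv
          (hh.comp (by fun_prop : ContDiff ℝ 1 fun l : ℝ => x + (-l) • v))
          (hs.comp_isClosedEmbedding hline) (-r)
    _ ≤ ∫⁻ l in Neg.neg ⁻¹' Ioi r, ‖fderiv ℝ h (x + (-l) • v)‖ₑ * ‖v‖ₑ := by
        rw [neg_preimage, neg_Ioi, setLIntegral_congr Iio_ae_eq_Iic.symm]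
        exact lintegral_mono hderiv
    _ = _ := (Measure.measurePreserving_neg volume).setLIntegral_comp_preimage_emb
        (Homeomorph.neg ℝ).measurableEmbedding (fun l => ‖fderiv ℝ h (x + l • v)‖ₑ * ‖v‖ₑ) (Ioi r)

lemma enorm_add_smul_sphere_le {h : E → ℝ} (hh : ContDiff ℝ 1 h) (hs : HasCompactSupport h)
    (x : E) {t : ℝ} (ht : 0 < t) (w : Metric.sphere (0 : E) 1) :
    ‖h (x + t • (w : E))‖ₑ ≤
      ∫⁻ l in Ioi 1, ENNReal.ofReal t * ‖fderiv ℝ h (x + (l * t) • (w : E))‖ₑ := by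
  have htw : ‖t • (w : E)‖ = t := norm_smul_sphere ht.le w
  have htw0 : t • (w : E) ≠ 0 := by rw [← norm_ne_zero_iff, htw]; exact ht.ne'
  simpa only [one_mul, smul_smul, ← ofReal_norm (t • (w : E)), htw,
    mul_comm (ENNReal.ofReal t)] using
    enorm_add_smul_le_lintegral_Ioi hh hs x htw0 1

variable [FiniteDimensional ℝ E] [MeasurableSpace E] [BorelSpace E] (μ : Measure E)
  [μ.IsAddHaarMeasure]

lemma toSphere_univ_mul_enorm_le [Nontrivial E] {h : E → ℝ} (hh : ContDiff ℝ 1 h)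
    (hs : HasCompactSupport h) (x : E) :
    μ.toSphere univ * ‖h x‖ₑ ≤
      ∫⁻ y, ‖fderiv ℝ h y‖ₑ * ‖x - y‖ₑ ^ (-(Module.finrank ℝ E - 1 : ℝ)) ∂μ := by
  have := (hh.continuous_fderiv one_ne_zero).measurable
  have hdim : ((Module.finrank ℝ E - 1 : ℕ) : ℝ) = Module.finrank ℝ E - 1 :=
    Nat.cast_pred Module.finrank_pos
  have hray (w : Metric.sphere (0 : E) 1) :
      ‖h x‖ₑ ≤ ∫⁻ r in Ioi (0 : ℝ), ‖fderiv ℝ h (x + r • (w : E))‖ₑ := by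
    have hw : ‖(w : E)‖ₑ = 1 := by
      rw [← ofReal_norm, norm_eq_of_mem_sphere, ENNReal.ofReal_one]
    have hw0 : (w : E) ≠ 0 := by rw [← enorm_ne_zero, hw]; exact one_ne_zero
    simpa [hw] using enorm_add_smul_le_lintegral_Ioi hh hs x hw0 0
  calc μ.toSphere univ * ‖h x‖ₑ
      = ∫⁻ _, ‖h x‖ₑ ∂μ.toSphere := by rw [lintegral_const, mul_comm]
    _ ≤ ∫⁻ w, (∫⁻ r in Ioi (0 : ℝ), ‖fderiv ℝ h (x + r • (w : E))‖ₑ) ∂μ.toSphere :=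
        lintegral_mono hray
    _ = ∫⁻ r in Ioi (0 : ℝ), ∫⁻ w, ‖fderiv ℝ h (x + r • (w : E))‖ₑ ∂μ.toSphere := by
        have hmeas : Measurable fun q : Metric.sphere (0 : E) 1 × ℝ =>
            ‖fderiv ℝ h (x + q.2 • (q.1 : E))‖ₑ := by fun_prop
        exact lintegral_lintegral_swap hmeas.aemeasurable
    _ = ∫⁻ y, ‖fderiv ℝ h (x + y)‖ₑ * ‖y‖ₑ ^ (-(Module.finrank ℝ E - 1 : ℝ)) ∂μ := by
        rw [lintegral_eq_lintegral_toSphere μ (by fun_prop)]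
        refine setLIntegral_congr_fun measurableSet_Ioi fun r (hr : 0 < r) => ?_
        have hr0 : ENNReal.ofReal r ≠ 0 := (ENNReal.ofReal_pos.2 hr).ne'
        have hcancel : ENNReal.ofReal r ^ (Module.finrank ℝ E - 1) *
            ENNReal.ofReal r ^ (-(Module.finrank ℝ E - 1 : ℝ)) = 1 := by
          rw [← ENNReal.rpow_natCast, hdim, ← ENNReal.rpow_add _ _ hr0 ENNReal.ofReal_ne_top,
            add_neg_cancel, ENNReal.rpow_zero]
        simp only [← ofReal_norm (r • _), norm_smul_sphere hr.le]
        rw [lintegral_mul_const _ (by fun_prop), mul_left_comm, hcancel, mul_one]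
    _ = _ := by
        simpa using lintegral_add_left_eq_self (μ := μ)
          (fun y => ‖fderiv ℝ h y‖ₑ * ‖x - y‖ₑ ^ (-(Module.finrank ℝ E - 1 : ℝ))) x

variable {μ} in
omit [μ.IsAddHaarMeasure] in
lemma setLIntegral_enorm_mul_enorm_sub_rpow_le {F : Type*} [NormedAddCommGroup F]
    [MeasurableSpace F] [OpensMeasurableSpace F] {D : E → F} (hD : Measurable D) {p q s : ℝ}
    (hpq : p.HolderConjugate q) (A : Set E) (x : E) {C : ℝ≥0∞}
    (hC : ∫⁻ y in A, ‖x - y‖ₑ ^ (-(s * q)) ∂μ ≤ C) :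
    ∫⁻ y in A, ‖D y‖ₑ * ‖x - y‖ₑ ^ (-s) ∂μ ≤ eLpNorm' D p μ * C ^ (1 / q) := by
  have hholder := ENNReal.lintegral_mul_le_Lp_mul_Lq (μ.restrict A) hpq
    (f := fun y => ‖D y‖ₑ) (g := fun y => ‖x - y‖ₑ ^ (-s)) (by fun_prop) (by fun_prop)
  simp only [Pi.mul_apply, ← ENNReal.rpow_mul, neg_mul] at hholder
  refine hholder.trans ?_
  rw [eLpNorm'_eq_lintegral_enorm]
  have := hpq.nonneg
  have := hpq.symm.nonneg
  gcongr
  exact Measure.restrict_le_self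

/-- The kernel `|x - y| ^ (1 - d)` is in `L^p'` near `x` since `p > d`, and in `L^q'` away from `x`
since `q < d`. -/
theorem exists_enorm_le_mul_eLpNorm'_fderiv_add {p q : ℝ} (hp : Module.finrank ℝ E < p)
    (hq : 1 < q) (hq' : q < Module.finrank ℝ E) :
    ∃ C : ℝ≥0, ∀ h : E → ℝ, ContDiff ℝ 1 h → HasCompactSupport h → ∀ x,
      ‖h x‖ₑ ≤ C * (eLpNorm' (fderiv ℝ h) p μ + eLpNorm' (fderiv ℝ h) q μ) := by
  set d : ℝ := (Module.finrank ℝ E : ℝ)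
  have hd1 : 1 < d := hq.trans hq'
  have hp1 : 1 < p := hd1.trans hp
  have : Nontrivial E := Module.nontrivial_of_finrank_pos (R := ℝ) (by
    have : (1 : ℝ) < Module.finrank ℝ E := hd1
    exact_mod_cast zero_lt_one.trans this)
  have hnear : (d - 1) * p.conjExponent < d := by
    rw [Real.conjExponent, mul_div_assoc', div_lt_iff₀ (by linarith)]; linarith
  have hfar : d < (d - 1) * q.conjExponent := by
    rw [Real.conjExponent, mul_div_assoc', lt_div_iff₀ (by linarith)]; linarith
  obtain ⟨K, hK⟩ := exists_setLIntegral_ball_enorm_sub_rpow_le μ hnear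
  obtain ⟨L, hL⟩ := exists_setLIntegral_compl_ball_enorm_sub_rpow_le μ hfar
  have hσ0 : μ.toSphere univ ≠ 0 := Measure.measure_univ_ne_zero.2 μ.toSphere_ne_zero
  have hσ : μ.toSphere univ ≠ ∞ := measure_ne_top _ _
  set a := 1 / p.conjExponent
  set b := 1 / q.conjExponent
  have ha : 0 ≤ a := (Real.HolderConjugate.conjExponent hp1).symm.one_div_nonneg
  have hb : 0 ≤ b := (Real.HolderConjugate.conjExponent hq).symm.one_div_nonneg
  have hfin : (μ.toSphere univ)⁻¹ * (K ^ a + L ^ b) ≠ ∞ := by finiteness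
  refine ⟨((μ.toSphere univ)⁻¹ * (K ^ a + L ^ b)).toNNReal, fun h hh hs x => ?_⟩
  have hD : Measurable (fderiv ℝ h) := (hh.continuous_fderiv one_ne_zero).measurable
  have hKx := hK x 1 one_pos
  have hLx := hL x 1 one_pos
  rw [ENNReal.ofReal_one, ENNReal.one_rpow, mul_one] at hKx hLx
  rw [ENNReal.coe_toNNReal hfin, mul_assoc, ← ENNReal.mul_le_iff_le_inv hσ0 hσ]
  calc μ.toSphere univ * ‖h x‖ₑ
      ≤ ∫⁻ y, ‖fderiv ℝ h y‖ₑ * ‖x - y‖ₑ ^ (-(d - 1)) ∂μ := toSphere_univ_mul_enorm_le μ hh hs x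
    _ = (∫⁻ y in Metric.ball x 1, ‖fderiv ℝ h y‖ₑ * ‖x - y‖ₑ ^ (-(d - 1)) ∂μ) +
          ∫⁻ y in (Metric.ball x 1)ᶜ, ‖fderiv ℝ h y‖ₑ * ‖x - y‖ₑ ^ (-(d - 1)) ∂μ :=
        (lintegral_add_compl _ measurableSet_ball).symm
    _ ≤ eLpNorm' (fderiv ℝ h) p μ * K ^ a + eLpNorm' (fderiv ℝ h) q μ * L ^ b :=
        add_le_add
          (setLIntegral_enorm_mul_enorm_sub_rpow_le hD (.conjExponent hp1) _ x hKx)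
          (setLIntegral_enorm_mul_enorm_sub_rpow_le hD (.conjExponent hq) _ x hLx)
    _ ≤ (K ^ a + L ^ b) * (eLpNorm' (fderiv ℝ h) p μ + eLpNorm' (fderiv ℝ h) q μ) := by
        rw [mul_add, mul_comm _ (_ ^ a), mul_comm _ (_ ^ b)]
        gcongr
        exacts [le_self_add, le_add_self]

theorem exists_eLpNorm'_six_le_mul_fderiv (F : Type*) [NormedAddCommGroup F] [NormedSpace ℝ F]
    [FiniteDimensional ℝ F] :
    ∃ C : ℝ≥0, ∀ u : Space → F, ContDiff ℝ 1 u → HasCompactSupport u →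
      eLpNorm' u 6 volume ≤ C * eLpNorm' (fderiv ℝ u) 2 volume := by
  refine ⟨SNormLESNormFDerivOfEqConst F (volume : Measure Space) 2, fun u hu hs => ?_⟩
  have h := eLpNorm_le_eLpNorm_fderiv_of_eq (volume : Measure Space) hu hs (p := 2) (p' := 6)
    one_le_two (by simp) (by rw [finrank_euclideanSpace_fin]; norm_num)
  rwa [eLpNorm_nnreal_eq_eLpNorm' (by norm_num), eLpNorm_nnreal_eq_eLpNorm' two_ne_zero] at h

theorem exists_enorm_le_mul_eLpNorm'_two_fderiv :
    ∃ C : ℝ≥0, ∀ h : Space → ℝ, ContDiff ℝ 2 h → HasCompactSupport h → ∀ x,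
      ‖h x‖ₑ ≤ C * (eLpNorm' (fderiv ℝ (fderiv ℝ h)) 2 volume +
        eLpNorm' (fderiv ℝ h) 2 volume) := by
  obtain ⟨C, hC⟩ := exists_eLpNorm'_six_le_mul_fderiv (Space →L[ℝ] ℝ)
  obtain ⟨L, hL⟩ := exists_enorm_le_mul_eLpNorm'_fderiv_add (volume : Measure Space) (p := 6)
    (q := 2) (by simp; norm_num) one_lt_two (by simp; norm_num)
  refine ⟨L * (C + 1), fun h hh hs x => ?_⟩
  calc ‖h x‖ₑ ≤ L * (eLpNorm' (fderiv ℝ h) 6 volume + eLpNorm' (fderiv ℝ h) 2 volume) :=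
        hL h (hh.of_le one_le_two) hs x
    _ ≤ L * (C * eLpNorm' (fderiv ℝ (fderiv ℝ h)) 2 volume + eLpNorm' (fderiv ℝ h) 2 volume) := by
        gcongr
        exact hC _ (hh.fderiv_right (by norm_num)) (hs.fderiv ℝ)
    _ ≤ L * ((C + 1) * eLpNorm' (fderiv ℝ (fderiv ℝ h)) 2 volume +
          (C + 1) * eLpNorm' (fderiv ℝ h) 2 volume) := by
        gcongr
        · exact le_self_add
        · rw [add_mul, one_mul]; exact le_add_self
    _ = _ := by push_cast; ring

lemma eLpNorm'_eq_ofReal {G : Type*} [NormedAddCommGroup G] {φ : Space → G} {p : ℝ}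
    (hp : 0 < p) (hφ : Continuous φ) (hs : HasCompactSupport φ) :
    eLpNorm' φ p volume = ENNReal.ofReal ((∫ x, ‖φ x‖ ^ p) ^ (1 / p)) := by
  have hp0 : ENNReal.ofReal p ≠ 0 := by simpa using hp
  have hmem : MemLp φ (ENNReal.ofReal p) volume := hφ.memLp_of_hasCompactSupport hs
  have hnorm := hmem.eLpNorm_eq_integral_rpow_norm hp0 ENNReal.ofReal_ne_top
  rw [eLpNorm_eq_eLpNorm' hp0 ENNReal.ofReal_ne_top] at hnorm
  simpa only [ENNReal.toReal_ofReal hp.le, one_div] using hnorm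

lemma eLpNorm'_two_eq_ofReal {G : Type*} [NormedAddCommGroup G] {φ : Space → G}
    (hφ : Continuous φ) (hs : HasCompactSupport φ) :
    eLpNorm' φ 2 volume = ENNReal.ofReal ((∫ x, ‖φ x‖ ^ 2) ^ (1 / 2 : ℝ)) := by
  simpa only [Real.rpow_two] using eLpNorm'_eq_ofReal two_pos hφ hs

lemma norm_gradient (h : Space → ℝ) (x : Space) : ‖gradient h x‖ = ‖fderiv ℝ h x‖ := by
  rw [gradient, LinearIsometryEquiv.norm_map]

lemma ofReal_H2tildeNorm {h : Space → ℝ} (hh : ContDiff ℝ 2 h) (hs : HasCompactSupport h) :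
    ENNReal.ofReal (H2tildeNorm h) =
      eLpNorm' (fderiv ℝ (fderiv ℝ h)) 2 volume + eLpNorm' (fderiv ℝ h) 2 volume := by
  have hD : ContDiff ℝ 1 (fderiv ℝ h) := hh.fderiv_right (by norm_num)
  have hhess (x : Space) : ‖iteratedFDeriv ℝ 2 h x‖ = ‖fderiv ℝ (fderiv ℝ h) x‖ := by
    rw [← norm_iteratedFDeriv_fderiv, norm_iteratedFDeriv_one]
  rw [eLpNorm'_two_eq_ofReal (hD.continuous_fderiv one_ne_zero) ((hs.fderiv ℝ).fderiv ℝ),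
    eLpNorm'_two_eq_ofReal hD.continuous (hs.fderiv ℝ),
    ← ENNReal.ofReal_add (by positivity) (by positivity), H2tildeNorm]
  simp only [norm_gradient, hhess]

theorem exists_abs_le_mul_H2tildeNorm :
    ∃ K : ℝ, 1 ≤ K ∧ ∀ h : Space → ℝ, ContDiff ℝ 2 h → HasCompactSupport h → ∀ x,
      |h x| ≤ K * H2tildeNorm h := by
  obtain ⟨C, hC⟩ := exists_enorm_le_mul_eLpNorm'_two_fderiv
  refine ⟨max 1 C, le_max_left _ _, fun h hh hs x => ?_⟩
  have hpos : 0 ≤ H2tildeNorm h := by unfold H2tildeNorm; positivity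
  have hbound := hC h hh hs x
  rw [← ofReal_H2tildeNorm hh hs, ← ofReal_norm, Real.norm_eq_abs,
    ← ENNReal.ofReal_coe_nnreal, ← ENNReal.ofReal_mul C.coe_nonneg,
    ENNReal.ofReal_le_ofReal_iff (by positivity)] at hbound
  exact hbound.trans (by gcongr; exact le_max_right _ _)

end SobolevEmbedding

section Nonlinearity

lemma one_lt_log_ten_add_sq (u : ℝ) : 1 < Real.log (10 + u ^ 2) := by
  rw [Real.lt_log_iff_exp_lt (by positivity)]
  linarith [Real.exp_one_lt_d9, sq_nonneg u]

lemma log_log_ten_add_sq_pos (u : ℝ) : 0 < Real.log (Real.log (10 + u ^ 2)) :=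
  Real.log_pos (one_lt_log_ten_add_sq u)

lemma log_log_ten_add_sq_le {u v : ℝ} (h : |u| ≤ |v|) :
    Real.log (Real.log (10 + u ^ 2)) ≤ Real.log (Real.log (10 + v ^ 2)) := by
  have := sq_le_sq.2 h
  have := one_lt_log_ten_add_sq u
  gcongr

lemma log_log_ten_add_mul_sq_le {K : ℝ} (hK : 1 ≤ K) (M : ℝ) :
    Real.log (Real.log (10 + (K * M) ^ 2)) ≤
      Real.log (1 + 2 * Real.log K) + Real.log (Real.log (10 + M ^ 2)) := by
  have hlogK : 0 ≤ Real.log K := Real.log_nonneg hK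
  have hM := one_lt_log_ten_add_sq M
  have hKM := one_lt_log_ten_add_sq (K * M)
  have hlog : Real.log (10 + (K * M) ^ 2) ≤ (1 + 2 * Real.log K) * Real.log (10 + M ^ 2) :=
    calc Real.log (10 + (K * M) ^ 2) ≤ Real.log (K ^ 2 * (10 + M ^ 2)) := by
          gcongr
          nlinarith
      _ = 2 * Real.log K + Real.log (10 + M ^ 2) := by
          rw [Real.log_mul (by positivity) (by positivity), Real.log_pow, Nat.cast_ofNat]
      _ ≤ (1 + 2 * Real.log K) * Real.log (10 + M ^ 2) := by nlinarith
  rw [← Real.log_mul (by positivity) (by positivity)]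
  gcongr

lemma g_pos (c u : ℝ) : 0 < g c u := Real.rpow_pos_of_pos (log_log_ten_add_sq_pos u) c

lemma g_le_g {c : ℝ} (hc : 0 ≤ c) {u v : ℝ} (h : |u| ≤ |v|) : g c u ≤ g c v :=
  Real.rpow_le_rpow (log_log_ten_add_sq_pos u).le (log_log_ten_add_sq_le h) hc

lemma exists_g_mul_le {c : ℝ} (hc : 0 ≤ c) {K : ℝ} (hK : 1 ≤ K) :
    ∃ C > 0, ∀ M, g c (K * M) ≤ C * g c M := by
  set L := Real.log (Real.log (10 + (0 : ℝ) ^ 2))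
  set k := Real.log (1 + 2 * Real.log K)
  have hL : 0 < L := log_log_ten_add_sq_pos 0
  have hk : 0 ≤ k := Real.log_nonneg (by linarith [Real.log_nonneg hK])
  have hC : 0 < 1 + k / L := by positivity
  refine ⟨(1 + k / L) ^ c, by positivity, fun M => ?_⟩
  have hLM : L ≤ Real.log (Real.log (10 + M ^ 2)) := log_log_ten_add_sq_le (by simp)
  rw [g, g, ← Real.mul_rpow hC.le (log_log_ten_add_sq_pos M).le]
  refine Real.rpow_le_rpow (log_log_ten_add_sq_pos _).le ?_ hc
  calc Real.log (Real.log (10 + (K * M) ^ 2))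
      ≤ k / L * L + Real.log (Real.log (10 + M ^ 2)) := by
        rw [div_mul_cancel₀ k hL.ne']
        exact log_log_ten_add_mul_sq_le hK M
    _ ≤ k / L * Real.log (Real.log (10 + M ^ 2)) + Real.log (Real.log (10 + M ^ 2)) := by gcongr
    _ = (1 + k / L) * Real.log (Real.log (10 + M ^ 2)) := by ring

lemma continuous_f (c : ℝ) : Continuous (f c) := by
  refine (continuous_pow 5).mul (Continuous.rpow_const (.log (.log (by fun_prop) ?_) ?_) ?_)
  · exact fun u => by positivity
  · exact fun u => (zero_lt_one.trans (one_lt_log_ten_add_sq u)).ne'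
  · exact fun u => .inl (log_log_ten_add_sq_pos u).ne'

lemma Fpot_nonneg (c u : ℝ) : 0 ≤ Fpot c u := by
  rcases le_total 0 u with h | h
  · exact intervalIntegral.integral_nonneg h fun v hv =>
      mul_nonneg (pow_nonneg hv.1 5) (g_pos c v).le
  · rw [Fpot, intervalIntegral.integral_symm, ← intervalIntegral.integral_neg]
    refine intervalIntegral.integral_nonneg h fun v hv => neg_nonneg.2 ?_
    exact mul_nonpos_of_nonpos_of_nonneg (Odd.pow_nonpos (by decide) hv.2) (g_pos c v).le

lemma nnnorm_f_le {c : ℝ} (hc : 0 ≤ c) {N v : ℝ} (h : |v| ≤ N) :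
    ‖f c v‖₊ ≤ (g c N).toNNReal * ‖‖v‖ ^ (4 : ℝ) * v‖₊ := by
  rw [← NNReal.coe_le_coe, NNReal.coe_mul, Real.coe_toNNReal _ (g_pos c N).le, coe_nnnorm,
    coe_nnnorm, f, norm_mul, norm_mul, norm_pow, Real.norm_of_nonneg (g_pos c v).le, mul_comm]
  refine mul_le_mul (g_le_g hc (h.trans (le_abs_self N))) (le_of_eq ?_) (by positivity)
    (g_pos c N).le
  rw [Real.rpow_ofNat, norm_pow, norm_norm, pow_succ]

variable {α : Type*} [MeasurableSpace α] {μ : Measure α} {h : α → ℝ} {N : ℝ}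

lemma eLpNorm'_norm_rpow_four_mul_le (hm : AEStronglyMeasurable h μ) :
    eLpNorm' (fun x => ‖h x‖ ^ (4 : ℝ) * h x) 2 μ ≤ eLpNorm' h 12 μ ^ 4 * eLpNorm' h 6 μ := by
  have hpow : AEStronglyMeasurable (fun x => ‖h x‖ ^ (4 : ℝ)) μ :=
    (hm.norm.aemeasurable.pow_const 4).aestronglyMeasurable
  have holder := eLpNorm'_le_eLpNorm'_mul_eLpNorm' (p := 3) (q := 6) (r := 2) hpow hm (· * ·) 1
    (.of_forall fun x => by rw [nnnorm_mul, one_mul]) two_pos (by norm_num) (by norm_num)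
  rwa [eLpNorm'_norm_rpow h 3 4 four_pos, ENNReal.coe_one, one_mul, ENNReal.rpow_ofNat,
    show (3 : ℝ) * 4 = 12 by norm_num] at holder

lemma eLpNorm'_f_le {c : ℝ} (hc : 0 ≤ c) (hm : AEStronglyMeasurable h μ) (hN : ∀ x, |h x| ≤ N) :
    eLpNorm' (fun x => f c (h x)) 2 μ ≤
      ENNReal.ofReal (g c N) * (eLpNorm' h 12 μ ^ 4 * eLpNorm' h 6 μ) :=
  calc eLpNorm' (fun x => f c (h x)) 2 μ
      ≤ (g c N).toNNReal • eLpNorm' (fun x => ‖h x‖ ^ (4 : ℝ) * h x) 2 μ :=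
        eLpNorm'_le_nnreal_smul_eLpNorm'_of_ae_le_mul
          (.of_forall fun x => nnnorm_f_le hc (hN x)) two_pos
    _ ≤ ENNReal.ofReal (g c N) * (eLpNorm' h 12 μ ^ 4 * eLpNorm' h 6 μ) := by
        rw [ENNReal.smul_def, smul_eq_mul, ENNReal.ofReal]
        gcongr
        exact eLpNorm'_norm_rpow_four_mul_le hm

lemma eLpNorm'_le_of_abs_le {p r : ℝ} (hp : 0 < p) (hpr : p ≤ r) (hN : ∀ x, |h x| ≤ N) :
    eLpNorm' h r μ ≤ (ENNReal.ofReal N ^ (r - p) * eLpNorm' h p μ ^ p) ^ (1 / r) := by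
  have hr : 0 < r := hp.trans_le hpr
  rw [eLpNorm'_eq_lintegral_enorm h p, ← ENNReal.rpow_mul, one_div_mul_cancel hp.ne',
    ENNReal.rpow_one, eLpNorm'_eq_lintegral_enorm, ← lintegral_const_mul' _ _ (by finiteness)]
  gcongr with x
  calc ‖h x‖ₑ ^ r = ‖h x‖ₑ ^ (r - p) * ‖h x‖ₑ ^ p := by
        rw [← ENNReal.rpow_add_of_nonneg _ _ (sub_nonneg.2 hpr) hp.le, sub_add_cancel]
    _ ≤ ENNReal.ofReal N ^ (r - p) * ‖h x‖ₑ ^ p := by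
        gcongr
        rw [Real.enorm_eq_ofReal_abs]
        exact ENNReal.ofReal_le_ofReal (hN x)

end Nonlinearity

section SlabTruncation

open Function

/-- `|w|` on the slab `J × ℝ³`, extended by zero. -/
def slabTrunc (J : Set ℝ) (w : ℝ → Space → ℝ) : ℝ × Space → ℝ≥0∞ :=
  (J ×ˢ univ).indicator fun p => ‖uncurry w p‖ₑ

variable {J : Set ℝ} {w : ℝ → Space → ℝ} {p r t : ℝ}

lemma slabTrunc_of_mem (ht : t ∈ J) (x : Space) : slabTrunc J w (t, x) = ‖w t x‖ₑ :=
  indicator_of_mem (mk_mem_prod ht (mem_univ x)) _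

lemma slabTrunc_of_notMem (ht : t ∉ J) (x : Space) : slabTrunc J w (t, x) = 0 :=
  indicator_of_notMem (fun h => ht h.1) _

lemma measurable_slabTrunc (hJ : MeasurableSet J) (hw : ContinuousOn (uncurry w) (J ×ˢ univ)) :
    Measurable (slabTrunc J w) := by
  classical
  rw [slabTrunc, ← piecewise_eq_indicator]
  exact hw.enorm.measurable_piecewise continuousOn_const (hJ.prod .univ)

lemma eLpNorm'_slabTrunc (hr : 0 < r) :
    (fun t => eLpNorm' (fun x => slabTrunc J w (t, x)) r volume) =
      J.indicator fun t => eLpNorm' (w t) r volume := by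
  ext t
  by_cases ht : t ∈ J
  · simp only [slabTrunc_of_mem ht, indicator_of_mem ht, eLpNorm'_eq_lintegral_enorm, enorm_enorm]
  · simp only [slabTrunc_of_notMem ht, indicator_of_notMem ht]
    exact eLpNorm'_zero hr

lemma aemeasurable_eLpNorm'_slice (hJ : MeasurableSet J)
    (hw : ContinuousOn (uncurry w) (J ×ˢ univ)) (hr : 0 < r) :
    AEMeasurable (fun t => eLpNorm' (w t) r volume) (volume.restrict J) := by
  rw [← aemeasurable_indicator_iff hJ, ← eLpNorm'_slabTrunc hr]
  exact (measurable_eLpNorm'_prodMk (measurable_slabTrunc hJ hw) r).aemeasurable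

lemma mixedLpNorm_slabTrunc (hJ : MeasurableSet J) (hJ0 : J ⊆ Ioi 0) (hp : 0 < p) (hr : 0 < r) :
    mixedLpNorm (slabTrunc J w) p r =
      eLpNorm' (fun t => eLpNorm' (w t) r volume) p (volume.restrict J) := by
  rw [mixedLpNorm, eLpNorm'_slabTrunc hr, eLpNorm'_indicator _ hJ hp, Measure.restrict_restrict hJ,
    inter_eq_left.2 hJ0]

lemma lintegral_eLpNorm'_slabTrunc (hJ : MeasurableSet J) (hJ0 : J ⊆ Ioi 0) (hr : 0 < r) :
    ∫⁻ t in Ioi 0, eLpNorm' (fun x => slabTrunc J w (t, x)) r volume =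
      ∫⁻ t in J, eLpNorm' (w t) r volume := by
  rw [eLpNorm'_slabTrunc hr, setLIntegral_indicator hJ, inter_eq_left.2 hJ0]

end SlabTruncation

section ForwardEstimate

open Function

/-- The scattering size `‖u‖⁴` in `L⁴_t L¹²_x (J × ℝ³)`. -/
def scatteringSize (u : ℝ → Space → ℝ) (J : Set ℝ) : ℝ≥0∞ :=
  ∫⁻ t in J, eLpNorm' (u t) 12 volume ^ 4

/-- A classical solution on the open time set `I` which is bounded by `N`, and whose gradient at all
times and velocity at time `0` are at most `R` in `L²`. -/
structure IsBoundedSol (c : ℝ) (I : Set ℝ) (u : ℝ → Space → ℝ) (N : ℝ) (R : ℝ≥0) : Prop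
    extends IsClassicalSol c I u where
  isOpen : IsOpen I
  abs_le : ∀ t ∈ I, ∀ x, |u t x| ≤ N
  eLpNorm'_fderiv_le : ∀ t ∈ I, eLpNorm' (fderiv ℝ (u t)) 2 volume ≤ R
  eLpNorm'_dt1_le : eLpNorm' (dt1 u 0) 2 volume ≤ R

variable {c N : ℝ} {R : ℝ≥0} {I J : Set ℝ} {u : ℝ → Space → ℝ} {t τ : ℝ}

lemma mixedLpNorm_slabTrunc_eq_scatteringSize (hJ : MeasurableSet J) (hJ0 : J ⊆ Ioi 0) :
    mixedLpNorm (slabTrunc J u) 4 12 = scatteringSize u J ^ (1 / 4 : ℝ) := by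
  rw [mixedLpNorm_slabTrunc hJ hJ0 four_pos (by norm_num), eLpNorm'_eq_lintegral_enorm _ (4 : ℝ)]
  simp only [scatteringSize, enorm_eq_self, ENNReal.rpow_ofNat]

lemma IsClassicalSol.contDiffOn (hu : IsClassicalSol c I u) :
    ContDiffOn ℝ 2 (uncurry u) (I ×ˢ univ) :=
  hu.smooth.of_le (by norm_cast)

lemma IsClassicalSol.contDiff (hu : IsClassicalSol c I u) (hI : IsOpen I) (ht : t ∈ I) :
    ContDiff ℝ 2 (u t) :=
  contDiff_slice (n := 2) hI hu.contDiffOn ht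

lemma IsClassicalSol.continuous_dt1 (hu : IsClassicalSol c I u) (hI : IsOpen I) (ht : t ∈ I) :
    Continuous (dt1 u t) := by
  rw [funext (dt1_eq hI hu.contDiffOn ht)]
  have := (contDiffOn_fderiv_uncurry hI hu.contDiffOn).continuousOn.comp_continuous
    (f := fun y : Space => (t, y)) (by fun_prop) fun y => ⟨ht, mem_univ y⟩
  fun_prop

namespace IsBoundedSol

lemma enorm_le (hu : IsBoundedSol c I u N R) (hτ : Icc 0 τ ⊆ I) (ht : 0 < t) (htτ : t < τ)
    (x : Space) :
    surfaceMeasure univ * ‖u t x‖ₑ ≤ sphericalWave (fun y => ‖dt1 u 0 y‖ₑ) (t, x) +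
      sphericalWave (fun y => ‖fderiv ℝ (u 0) y‖ₑ) (t, x) +
      ∫⁻ w, ‖u 0 (x + t • (w : Space))‖ₑ ∂surfaceMeasure +
      ∫⁻ s in Ioo 0 t,
        sphericalWave (fun y => slabTrunc (Ioo 0 τ) (fun s y => f c (u s y)) (s, y))
          (t - s, x) := by
  refine (surfaceMeasure_univ_mul_enorm_le hu.isOpen hu.contDiffOn hu.eqn ht
    ((Icc_subset_Icc_right htτ.le).trans hτ) x).trans (add_le_add_right (le_of_eq ?_) _)
  refine setLIntegral_congr_fun measurableSet_Ioo fun s hs => ?_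
  simp only [slabTrunc_of_mem (Ioo_subset_Ioo_right htτ.le hs), enorm_neg]

lemma exists_eLpNorm'_six_le : ∃ S : ℝ≥0, ∀ {c I u N R},
    IsBoundedSol c I u N R → ∀ t ∈ I, eLpNorm' (u t) 6 volume ≤ S * R := by
  obtain ⟨S, hS⟩ := exists_eLpNorm'_six_le_mul_fderiv ℝ
  refine ⟨S, fun hu t ht => (hS _ ?_ (hu.compactSpt t ht)).trans ?_⟩
  · exact (hu.contDiff hu.isOpen ht).of_le one_le_two
  · gcongr
    exact hu.eLpNorm'_fderiv_le t ht

lemma exists_eLpNorm'_twelve_le (hu : IsBoundedSol c I u N R) :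
    ∃ B ≠ ∞, ∀ t ∈ I, eLpNorm' (u t) 12 volume ≤ B := by
  obtain ⟨S, hS⟩ := exists_eLpNorm'_six_le
  refine ⟨(ENNReal.ofReal N ^ (12 - 6 : ℝ) * (S * R) ^ (6 : ℝ)) ^ (1 / 12 : ℝ), by finiteness,
    fun t ht => ?_⟩
  refine (eLpNorm'_le_of_abs_le (p := 6) (by simp) (by norm_num) (hu.abs_le t ht)).trans ?_
  gcongr
  exact hS hu t ht

lemma scatteringSize_ne_top (hu : IsBoundedSol c I u N R) (hτ : Ioo 0 τ ⊆ I) :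
    scatteringSize u (Ioo 0 τ) ≠ ∞ := by
  obtain ⟨B, hB, hle⟩ := hu.exists_eLpNorm'_twelve_le
  refine ((setLIntegral_mono' (g := fun _ => B ^ 4) measurableSet_Ioo fun t ht => ?_).trans_lt
    ?_).ne
  · exact pow_le_pow_left' (hle t (hτ ht)) 4
  · rw [setLIntegral_const, Real.volume_Ioo]
    finiteness

lemma lintegral_slabTrunc_rpow_ne_top (hu : IsBoundedSol c I u N R) (hτ : Ioo 0 τ ⊆ I) (t : ℝ) :
    ∫⁻ x, slabTrunc (Ioo 0 τ) u (t, x) ^ (12 : ℝ) ≠ ∞ := by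
  by_cases ht : t ∈ Ioo 0 τ
  · obtain ⟨B, hB, hle⟩ := hu.exists_eLpNorm'_twelve_le
    simp only [slabTrunc_of_mem ht]
    exact (lintegral_rpow_enorm_lt_top_of_eLpNorm'_lt_top (by norm_num)
      ((hle t (hτ ht)).trans_lt hB.lt_top)).ne
  · simp [slabTrunc_of_notMem ht]

lemma lintegral_eLpNorm'_f_le (hu : IsBoundedSol c I u N R) (hc : 0 ≤ c) (hτ : Ioo 0 τ ⊆ I)
    {B : ℝ≥0} (hB : ∀ t ∈ I, eLpNorm' (u t) 6 volume ≤ B) :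
    ∫⁻ s in Ioo 0 τ, eLpNorm' (fun x => f c (u s x)) 2 volume ≤
      ENNReal.ofReal (g c N) * B * scatteringSize u (Ioo 0 τ) := by
  rw [scatteringSize, ← lintegral_const_mul' _ _ (by finiteness)]
  refine setLIntegral_mono' measurableSet_Ioo fun s hs => ?_
  have hcont : Continuous (u s) := (hu.contDiff hu.isOpen (hτ hs)).continuous
  calc eLpNorm' (fun x => f c (u s x)) 2 volume
      ≤ ENNReal.ofReal (g c N) * (eLpNorm' (u s) 12 volume ^ 4 * eLpNorm' (u s) 6 volume) :=
        eLpNorm'_f_le hc hcont.aestronglyMeasurable (hu.abs_le s (hτ hs))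
    _ ≤ ENNReal.ofReal (g c N) * (eLpNorm' (u s) 12 volume ^ 4 * B) := by
        gcongr
        exact hB s (hτ hs)
    _ = ENNReal.ofReal (g c N) * B * eLpNorm' (u s) 12 volume ^ 4 := by ring

end IsBoundedSol

lemma exists_strichartz_le : ∃ C : ℝ≥0, ∀ {c I u N R τ}, IsBoundedSol c I u N R → 0 < τ →
    Icc 0 τ ⊆ I → scatteringSize u (Ioo 0 τ) ^ (1 / 4 : ℝ) ≤
      C * (2 * R + ∫⁻ s in Ioo 0 τ, eLpNorm' (fun x => f c (u s x)) 2 volume) := by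
  obtain ⟨C, hC⟩ := exists_mixedLpNorm_le_of_le_sphericalWave (p := 4 / 3) (q := 4) (r := 12 / 11)
    (ρ := 12) (by norm_num) (by norm_num) (by norm_num) (by constructor <;> norm_num)
    (by constructor <;> norm_num)
  refine ⟨C, fun {c I u N R τ} hu hτ0 hτ => ?_⟩
  have hsub : Ioo 0 τ ⊆ I := Ioo_subset_Icc_self.trans hτ
  have h0 : (0 : ℝ) ∈ I := hτ (left_mem_Icc.2 hτ0.le)
  have hcont : ContinuousOn (uncurry u) (Ioo 0 τ ×ˢ univ) :=
    hu.smooth.continuousOn.mono (prod_mono hsub subset_rfl)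
  have hu0 : ContDiff ℝ 1 (u 0) := (hu.contDiff hu.isOpen h0).of_le one_le_two
  have hV := mixedLpNorm_slabTrunc_eq_scatteringSize (u := u) (J := Ioo 0 τ) measurableSet_Ioo
    Ioo_subset_Ioi_self
  have hfin := ENNReal.rpow_ne_top_of_nonneg (y := 1 / 4) (by norm_num)
    (hu.scatteringSize_ne_top hsub)
  have hbound := hC (slabTrunc (Ioo 0 τ) u) (slabTrunc (Ioo 0 τ) fun s y => f c (u s y))
    (fun y => ‖dt1 u 0 y‖ₑ) (fun y => ‖fderiv ℝ (u 0) y‖ₑ) (fun y => ‖u 0 y‖ₑ)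
    (measurable_slabTrunc measurableSet_Ioo hcont)
    (measurable_slabTrunc measurableSet_Ioo ((continuous_f c).comp_continuousOn hcont))
    (hu.continuous_dt1 hu.isOpen h0).enorm.measurable
    (hu0.continuous_fderiv one_ne_zero).enorm.measurable hu0.continuous.enorm.measurable
    (fun t ht x => ?_) (fun x t ht w => enorm_add_smul_sphere_le hu0 (hu.compactSpt 0 h0) x ht w)
    (hu.lintegral_slabTrunc_rpow_ne_top hsub) (hV ▸ hfin)
  · rw [hV, lintegral_eLpNorm'_slabTrunc measurableSet_Ioo Ioo_subset_Ioi_self two_pos] at hbound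
    refine hbound.trans ?_
    rw [two_mul]
    gcongr
    · exact eLpNorm'_enorm.trans_le hu.eLpNorm'_dt1_le
    · exact eLpNorm'_enorm.trans_le (hu.eLpNorm'_fderiv_le 0 h0)
  · by_cases htτ : t < τ
    · rw [slabTrunc_of_mem (mem_Ioo.2 ⟨ht, htτ⟩)]
      exact hu.enorm_le hτ ht htτ x
    · simp [slabTrunc_of_notMem fun h : t ∈ Ioo 0 τ => htτ h.2]

theorem exists_scatteringSize_rpow_le : ∃ K : ℝ≥0, ∀ {c I u N R τ}, 0 ≤ c →
    IsBoundedSol c I u N R → 0 < τ → Icc 0 τ ⊆ I → scatteringSize u (Ioo 0 τ) ^ (1 / 4 : ℝ) ≤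
      K * R * (1 + ENNReal.ofReal (g c N) * scatteringSize u (Ioo 0 τ)) := by
  obtain ⟨C, hC⟩ := exists_strichartz_le
  obtain ⟨S, hS⟩ := IsBoundedSol.exists_eLpNorm'_six_le
  refine ⟨C * (2 + S), fun {c I u N R τ} hc hu hτ0 hτ => ?_⟩
  have hf := hu.lintegral_eLpNorm'_f_le hc (Ioo_subset_Icc_self.trans hτ) (B := S * R)
    fun t ht => by exact_mod_cast hS hu t ht
  set X := scatteringSize u (Ioo 0 τ)
  set G := ENNReal.ofReal (g c N)
  calc X ^ (1 / 4 : ℝ)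
      ≤ C * (2 * R + ∫⁻ s in Ioo 0 τ, eLpNorm' (fun x => f c (u s x)) 2 volume) := hC hu hτ0 hτ
    _ ≤ C * (2 * R + G * (S * R) * X) := by
        gcongr
        exact_mod_cast hf
    _ ≤ C * (2 * R + G * (S * R) * X) + C * (S * R + 2 * R * (G * X)) := le_self_add
    _ = (C * (2 + S) : ℝ≥0) * R * (1 + G * X) := by push_cast; ring

end ForwardEstimate

section ContinuityMethod

open Function

variable {φ : ℝ → ℝ≥0∞} {a b : ℝ} {S : ℝ≥0∞}

lemma exists_setLIntegral_Ioo_eq (hab : a ≤ b) (hφ : AEMeasurable φ (volume.restrict (Ioo a b)))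
    (hfin : ∫⁻ t in Ioo a b, φ t ≠ ∞) (hS : S ≤ ∫⁻ t in Ioo a b, φ t) :
    ∃ σ ∈ Icc a b, ∫⁻ t in Ioo a σ, φ t = S := by
  have hle : ∀ σ ∈ Icc a b, ∫⁻ t in Ioo a σ, φ t ≠ ∞ := fun σ hσ =>
    ne_top_of_le_ne_top hfin (lintegral_mono_set (Ioo_subset_Ioo_right hσ.2))
  have hint : IntegrableOn (fun t => (φ t).toReal) (Icc a b) := by
    rw [integrableOn_Icc_iff_integrableOn_Ioo]
    exact integrable_toReal_of_lintegral_ne_top hφ hfin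
  have hval : ∀ σ ∈ Icc a b, ∫ t in Ioc a σ, (φ t).toReal = (∫⁻ t in Ioo a σ, φ t).toReal := by
    intro σ hσ
    have hm := hφ.mono_measure (Measure.restrict_mono (Ioo_subset_Ioo_right hσ.2) le_rfl)
    rw [integral_Ioc_eq_integral_Ioo, integral_toReal hm (ae_lt_top' hm (hle σ hσ))]
  obtain ⟨σ, hσ, h⟩ := intermediate_value_Icc hab (intervalIntegral.continuousOn_primitive hint)
    (show S.toReal ∈ Icc _ _ by
      rw [hval b (right_mem_Icc.2 hab)]
      exact ⟨by simp, ENNReal.toReal_mono hfin hS⟩)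
  refine ⟨σ, hσ, (ENNReal.toReal_eq_toReal_iff' (hle σ hσ) (ne_top_of_le_ne_top hfin hS)).1 ?_⟩
  exact (hval σ hσ).symm.trans h

lemma setLIntegral_Ioo_le_of_forall_mem_Ioo (h : ∀ τ ∈ Ioo a b, ∫⁻ t in Ioo a τ, φ t ≤ S) :
    ∫⁻ t in Ioo a b, φ t ≤ S := by
  rcases le_or_gt b a with hba | hab
  · simp [Ioo_eq_empty hba.not_gt]
  obtain ⟨τ, hτ, hmem, hlim⟩ := exists_seq_strictMono_tendsto' hab
  have hmono : Monotone fun n => Ioo a (τ n) := fun m n hmn =>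
    Ioo_subset_Ioo_right (hτ.monotone hmn)
  have hunion : Ioo a b = ⋃ n, Ioo a (τ n) := by
    refine Subset.antisymm (fun t ht => ?_) (iUnion_subset fun n =>
      Ioo_subset_Ioo_right (hmem n).2.le)
    obtain ⟨n, hn⟩ := (hlim.eventually_const_lt ht.2).exists
    exact mem_iUnion.2 ⟨n, ht.1, hn⟩
  rw [hunion, setLIntegral_iUnion_of_directed _ hmono.directed_le]
  exact iSup_le fun n => h _ (hmem n)

/- The value `(2 * A) ^ 4` is forbidden for the continuous function
`X σ = ∫⁻ t in Ioo a σ, φ t`, as it would give `2 * A ≤ A * (1 + G * (2 * A) ^ 4) < 2 * A`. -/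
theorem setLIntegral_Ioo_le_of_rpow_le {A G : ℝ≥0} (hsmall : G * (2 * A) ^ 4 < 1)
    (hφ : AEMeasurable φ (volume.restrict (Ioo a b)))
    (hfin : ∀ τ ∈ Ioo a b, ∫⁻ t in Ioo a τ, φ t ≠ ∞)
    (h : ∀ τ ∈ Ioo a b,
      (∫⁻ t in Ioo a τ, φ t) ^ (1 / 4 : ℝ) ≤ A * (1 + G * ∫⁻ t in Ioo a τ, φ t)) :
    ∫⁻ t in Ioo a b, φ t ≤ (2 * A) ^ 4 := by
  refine setLIntegral_Ioo_le_of_forall_mem_Ioo fun τ hτ => ?_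
  rcases eq_or_ne A 0 with rfl | hA
  · have := h τ hτ
    simp_all
  by_contra! hlt
  obtain ⟨σ, hσ, hX⟩ := exists_setLIntegral_Ioo_eq hτ.1.le
    (hφ.mono_measure (Measure.restrict_mono (Ioo_subset_Ioo_right hτ.2.le) le_rfl)) (hfin τ hτ)
    hlt.le
  have haσ : a < σ := hσ.1.lt_of_ne fun haσ => by
    rw [← haσ, Ioo_self, Measure.restrict_empty, lintegral_zero_measure] at hX
    exact pow_ne_zero 4 (by simpa using hA) hX.symm
  have hσ' := h σ ⟨haσ, hσ.2.trans_lt hτ.2⟩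
  rw [hX, ← ENNReal.rpow_ofNat, ← ENNReal.rpow_mul] at hσ'
  norm_num at hσ'
  have hle : 2 * A ≤ A * (1 + G * (2 * A) ^ 4) := by exact_mod_cast hσ'
  have hlt' : A * (1 + G * (2 * A) ^ 4) < A * (1 + 1) := by gcongr
  exact (hle.trans_lt hlt').ne (by ring)

theorem exists_scatteringSize_le : ∃ K : ℝ≥0, ∀ {c I u N} {R : ℝ≥0} {β : ℝ}, 0 ≤ c →
    IsBoundedSol c I u N R → Ico 0 β ⊆ I → (g c N).toNNReal * (K * R) ^ 4 < 1 →
    scatteringSize u (Ioo 0 β) ≤ (K * R) ^ 4 := by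
  obtain ⟨K, hK⟩ := exists_scatteringSize_rpow_le
  refine ⟨2 * K, fun {c I u N R β} hc hu hβ hsmall => ?_⟩
  have hIoo : Ioo 0 β ⊆ I := Ioo_subset_Ico_self.trans hβ
  have hsub : ∀ {τ}, τ ∈ Ioo 0 β → Icc 0 τ ⊆ I := fun hτ =>
    (Icc_subset_Ico_right hτ.2).trans hβ
  have hcont : ContinuousOn (uncurry u) (Ioo 0 β ×ˢ univ) :=
    hu.smooth.continuousOn.mono (prod_mono hIoo subset_rfl)
  refine (setLIntegral_Ioo_le_of_rpow_le (A := K * R) (by rwa [← mul_assoc])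
    ((aemeasurable_eLpNorm'_slice measurableSet_Ioo hcont (by norm_num)).pow_const 4)
    (fun τ hτ => hu.scatteringSize_ne_top (Ioo_subset_Icc_self.trans (hsub hτ)))
    fun τ hτ => ?_).trans_eq (by push_cast; ring)
  exact_mod_cast hK hc hu hτ.1 (hsub hτ)

end ContinuityMethod

section TimeChange

open Function

variable {c a e t₁ t₂ : ℝ} {J : Set ℝ} {u : ℝ → Space → ℝ}

lemma deriv_comp_add_mul (F : ℝ → ℝ) (a e s : ℝ) :
    deriv (fun s => F (a + e * s)) s = e * deriv F (a + e * s) := by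
  rw [deriv_comp_mul_left e (fun y => F (a + y)), deriv_comp_const_add, smul_eq_mul]

lemma dt1_comp_add_mul (u : ℝ → Space → ℝ) (a e s : ℝ) :
    dt1 (fun s => u (a + e * s)) s = e • dt1 u (a + e * s) :=
  funext fun x => deriv_comp_add_mul (fun r => u r x) a e s

lemma dt2_comp_add_mul (u : ℝ → Space → ℝ) (a e s : ℝ) :
    dt2 (fun s => u (a + e * s)) s = (e * e) • dt2 u (a + e * s) := by
  funext x
  simp only [dt2, dt1_comp_add_mul, Pi.smul_apply, smul_eq_mul]
  rw [deriv_const_mul_field, deriv_comp_add_mul (fun r => dt1 u r x), mul_assoc]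

lemma IsClassicalSol.comp_add_mul (hu : IsClassicalSol c J u) (a : ℝ) (he : |e| = 1) :
    IsClassicalSol c ((fun s => a + e * s) ⁻¹' J) fun s => u (a + e * s) where
  smooth := hu.smooth.comp (f := fun p : ℝ × Space => (a + e * p.1, p.2)) (by fun_prop)
    fun _ hp => ⟨hp.1, trivial⟩
  compactSpt s hs := hu.compactSpt _ hs
  eqn s hs x := by
    rw [dt2_comp_add_mul, ← abs_mul_abs_self, he, one_mul, one_smul]
    exact hu.eqn _ hs x

lemma IsClassicalSol.mono {I : Set ℝ} (hu : IsClassicalSol c J u) (hIJ : I ⊆ J) :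
    IsClassicalSol c I u :=
  ⟨hu.smooth.mono (prod_mono hIJ subset_rfl), fun t ht => hu.compactSpt t (hIJ ht),
    fun t ht => hu.eqn t (hIJ ht)⟩

lemma scatteringSize_comp_add_mul (u : ℝ → Space → ℝ) (a : ℝ) (he : |e| = 1) (J : Set ℝ) :
    scatteringSize (fun s => u (a + e * s)) J =
      scatteringSize u ((fun s => a + e * s) '' J) := by
  have he0 : e ≠ 0 := by simp [← abs_pos, he]
  have hmul : MeasurePreserving fun s => e * s :=
    ⟨measurable_const_mul e, by simp [Real.map_volume_mul_left he0, abs_inv, he]⟩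
  exact ((measurePreserving_add_left volume a).comp hmul).setLIntegral_comp_emb
    ((measurableEmbedding_addLeft a).comp (measurableEmbedding_mulLeft₀ he0))
    (fun t => eLpNorm' (u t) 12 volume ^ 4) J

/- By Baire, the supports of `u t` are bounded uniformly in `t` near some time `a`. -/
lemma IsClassicalSol.exists_hasCompactSupport_dt1 (hu : IsClassicalSol c J u) (hJ : IsOpen J)
    (hne : J.Nonempty) : ∃ a ∈ J, HasCompactSupport (dt1 u a) := by
  have := hJ.baireSpace
  have := hne.to_subtype
  have hclosed : ∀ n : ℕ, IsClosed {t : J | ∀ x : Space, (n : ℝ) < ‖x‖ → u t x = 0} := by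
    intro n
    simp only [ofPred_forall]
    refine isClosed_iInter fun x => isClosed_iInter fun _ => isClosed_eq ?_ continuous_const
    exact hu.smooth.continuousOn.comp_continuous (f := fun t : J => ((t : ℝ), x)) (by fun_prop)
      fun t => ⟨t.2, trivial⟩
  have hcover : ⋃ n : ℕ, {t : J | ∀ x : Space, (n : ℝ) < ‖x‖ → u t x = 0} = univ := by
    refine eq_univ_of_forall fun t => mem_iUnion.2 ?_
    obtain ⟨r, hr⟩ := (hu.compactSpt t t.2).isCompact.isBounded.subset_closedBall 0
    obtain ⟨n, hn⟩ := exists_nat_ge r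
    refine ⟨n, fun x hx => image_eq_zero_of_notMem_tsupport fun hxt => ?_⟩
    exact (hn.trans_lt hx).not_ge (mem_closedBall_zero_iff.1 (hr hxt))
  obtain ⟨n, a, ha⟩ := nonempty_interior_of_iUnion_of_closed hclosed hcover
  refine ⟨a, a.2, .intro (isCompact_closedBall (0 : Space) n) fun x hx => ?_⟩
  rw [mem_closedBall_zero_iff, not_le] at hx
  have hzero : (fun s => u s x) =ᶠ[𝓝 (a : ℝ)] fun _ => 0 := by
    rw [Filter.EventuallyEq, ← map_nhds_subtype_coe_eq_nhds a.2 (hJ.mem_nhds a.2),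
      Filter.eventually_map]
    have hnhds := mem_interior_iff_mem_nhds.1 ha
    filter_upwards [hnhds] with t ht using ht x hx
  rw [dt1, hzero.deriv_eq, deriv_const]

end TimeChange

section SmallEnergy

variable {c E N a e t₁ t₂ : ℝ} {R : ℝ≥0} {J : Set ℝ} {u : ℝ → Space → ℝ}

lemma IsClassicalSol.isBoundedSol_comp_add_mul (hu : IsClassicalSol c J u) (hJ : IsOpen J)
    (hN : ∀ t ∈ J, ∀ x, |u t x| ≤ N) (hR : ∀ t ∈ J, eLpNorm' (fderiv ℝ (u t)) 2 volume ≤ R)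
    (hRa : eLpNorm' (dt1 u a) 2 volume ≤ R) (he : |e| = 1) :
    IsBoundedSol c ((fun s => a + e * s) ⁻¹' J) (fun s => u (a + e * s)) N R where
  toIsClassicalSol := hu.comp_add_mul a he
  isOpen := hJ.preimage (by fun_prop)
  abs_le _ hs := hN _ hs
  eLpNorm'_fderiv_le _ hs := hR _ hs
  eLpNorm'_dt1_le := by
    rw [dt1_comp_add_mul, eLpNorm'_const_smul _ two_pos, mul_zero, add_zero,
      Real.enorm_eq_ofReal_abs, he, ENNReal.ofReal_one, one_mul]
    exact hRa

theorem exists_scatteringSize_Ioo_le : ∃ K : ℝ≥0, ∀ {c N a t₁ t₂ u} {R : ℝ≥0}, 0 ≤ c →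
    IsClassicalSol c (Ioo t₁ t₂) u → a ∈ Ioo t₁ t₂ → (∀ t ∈ Ioo t₁ t₂, ∀ x, |u t x| ≤ N) →
    (∀ t ∈ Ioo t₁ t₂, eLpNorm' (fderiv ℝ (u t)) 2 volume ≤ R) →
    eLpNorm' (dt1 u a) 2 volume ≤ R → (g c N).toNNReal * (K * R) ^ 4 < 1 →
    scatteringSize u (Ioo t₁ t₂) ≤ 2 * (K * R) ^ 4 := by
  obtain ⟨K, hK⟩ := exists_scatteringSize_le
  refine ⟨K, fun {c N a t₁ t₂ u R} hc hu ha hN hR hRa hsmall => ?_⟩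
  have hforward := hK (β := t₂ - a) hc
    (hu.isBoundedSol_comp_add_mul isOpen_Ioo hN hR hRa (e := 1) (by simp))
    (fun s hs => ⟨by linarith [ha.1, hs.1], by linarith [hs.2]⟩) hsmall
  have hbackward := hK (β := a - t₁) hc
    (hu.isBoundedSol_comp_add_mul isOpen_Ioo hN hR hRa (e := -1) (by simp))
    (fun s hs => ⟨by linarith [hs.2], by linarith [ha.2, hs.1]⟩) hsmall
  rw [scatteringSize_comp_add_mul u a (by simp)] at hforward hbackward
  simp only [one_mul, neg_one_mul, ← sub_eq_add_neg, image_const_add_Ioo, image_const_sub_Ioo,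
    add_sub_cancel, add_zero, sub_sub_cancel, sub_zero] at hforward hbackward
  rw [← Ioo_union_Ico_eq_Ioo ha.1 ha.2.le, two_mul]
  refine (lintegral_union_le _ _ _).trans (add_le_add hbackward ?_)
  rwa [setLIntegral_congr Ioo_ae_eq_Ico.symm]

lemma integral_add_integral_le_of_energy_le {t : ℝ} (h : energy c u t ≤ E) :
    (∫ x, ‖dt1 u t x‖ ^ 2) + ∫ x, ‖fderiv ℝ (u t) x‖ ^ 2 ≤ 2 * E := by
  have hF : 0 ≤ ∫ x, Fpot c (u t x) := integral_nonneg fun x => Fpot_nonneg c _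
  simp only [energy, norm_gradient] at h
  simp only [Real.norm_eq_abs, sq_abs]
  linarith

lemma eLpNorm'_dt1_le_of_energy_le {t : ℝ} (hcont : Continuous (dt1 u t))
    (hs : HasCompactSupport (dt1 u t)) (h : energy c u t ≤ E) :
    eLpNorm' (dt1 u t) 2 volume ≤ ENNReal.ofReal (√(2 * E)) := by
  rw [eLpNorm'_two_eq_ofReal hcont hs, ← Real.sqrt_eq_rpow]
  have hgrad : 0 ≤ ∫ x, ‖fderiv ℝ (u t) x‖ ^ 2 := by positivity
  gcongr
  linarith [integral_add_integral_le_of_energy_le h]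

lemma eLpNorm'_fderiv_le_of_energy_le {t : ℝ} (hu : ContDiff ℝ 1 (u t))
    (hs : HasCompactSupport (u t)) (h : energy c u t ≤ E) :
    eLpNorm' (fderiv ℝ (u t)) 2 volume ≤ ENNReal.ofReal (√(2 * E)) := by
  rw [eLpNorm'_two_eq_ofReal (hu.continuous_fderiv one_ne_zero) (hs.fderiv ℝ),
    ← Real.sqrt_eq_rpow]
  have hdt1 : 0 ≤ ∫ x, ‖dt1 u t x‖ ^ 2 := by positivity
  gcongr
  linarith [integral_add_integral_le_of_energy_le h]

theorem exists_scatteringSize_Ioo_le_of_energy_le : ∃ K : ℝ≥0, ∀ {c N E t₁ t₂ u}, 0 ≤ c →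
    IsClassicalSol c (Ioo t₁ t₂) u → (∀ t ∈ Ioo t₁ t₂, ∀ x, |u t x| ≤ N) →
    (∀ t ∈ Ioo t₁ t₂, energy c u t ≤ E) → g c N * (K * √(2 * E)) ^ 4 < 1 →
    scatteringSize u (Ioo t₁ t₂) ≤ ENNReal.ofReal (2 * (g c 0)⁻¹) := by
  obtain ⟨K, hK⟩ := exists_scatteringSize_Ioo_le
  refine ⟨K, fun {c N E t₁ t₂ u} hc hu hN hE hsmall => ?_⟩
  rcases (Ioo t₁ t₂).eq_empty_or_nonempty with hempty | hne
  · simp [scatteringSize, hempty]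
  obtain ⟨a, ha, hs⟩ := hu.exists_hasCompactSupport_dt1 isOpen_Ioo hne
  have hcoe : (√(2 * E)).toNNReal = √(2 * E) := Real.coe_toNNReal _ (Real.sqrt_nonneg _)
  refine (hK hc hu ha hN (fun t ht => eLpNorm'_fderiv_le_of_energy_le
    ((hu.contDiff isOpen_Ioo ht).of_le one_le_two) (hu.compactSpt t ht) (hE t ht))
    (eLpNorm'_dt1_le_of_energy_le (hu.continuous_dt1 isOpen_Ioo ha) hs (hE a ha)) ?_).trans ?_
  · rw [← NNReal.coe_lt_coe]
    push_cast
    rwa [Real.coe_toNNReal _ (g_pos c N).le, hcoe]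
  · have hle : (K * √(2 * E)) ^ 4 ≤ (g c 0)⁻¹ := by
      rw [← one_div, le_div_iff₀' (g_pos c 0)]
      refine le_trans ?_ hsmall.le
      gcongr
      exact g_le_g hc (by simp)
    have : 2 * (K * (√(2 * E)).toNNReal) ^ 4 ≤ (2 * (g c 0)⁻¹).toNNReal :=
      NNReal.le_toNNReal_of_coe_le (by push_cast; rw [hcoe]; gcongr)
    rw [ENNReal.ofReal]
    exact_mod_cast this

lemma LxNorm_nonneg (r : ℝ) (h : Space → ℝ) : 0 ≤ LxNorm r h := by
  unfold LxNorm
  positivity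

lemma LtLxNorm_four_pow_four (r : ℝ) (J : Set ℝ) (u : ℝ → Space → ℝ) :
    LtLxNorm 4 r J u ^ 4 = ∫ t in J, LxNorm r (u t) ^ 4 := by
  have hint : 0 ≤ ∫ t in J, LxNorm r (u t) ^ (4 : ℝ) :=
    integral_nonneg fun t => Real.rpow_nonneg (LxNorm_nonneg r _) _
  rw [LtLxNorm, ← Real.rpow_mul_natCast hint]
  norm_num

lemma LtLxNorm_four_pow_four_le {B : ℝ} (hB : 0 ≤ B) (hcont : ∀ t ∈ Ioo t₁ t₂, Continuous (u t))
    (hs : ∀ t ∈ Ioo t₁ t₂, HasCompactSupport (u t))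
    (h : scatteringSize u (Ioo t₁ t₂) ≤ ENNReal.ofReal B) :
    LtLxNorm 4 12 (Icc t₁ t₂) u ^ 4 ≤ B := by
  rw [LtLxNorm_four_pow_four, ← ENNReal.ofReal_le_ofReal_iff hB, integral_Icc_eq_integral_Ioo]
  refine (Real.ofReal_le_enorm _).trans ((enorm_integral_le_lintegral_enorm _).trans
    (h.trans_eq' (setLIntegral_congr_fun measurableSet_Ioo fun t ht => ?_)))
  rw [enorm_pow, eLpNorm'_eq_ofReal (by norm_num) (hcont t ht) (hs t ht),
    Real.enorm_of_nonneg (LxNorm_nonneg 12 _)]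
  rfl

lemma exists_pos_forall_g_mul_lt_one (hc : 0 ≤ c) {L : ℝ} (hL : 1 ≤ L) (K : ℝ) :
    ∃ c₀ > 0, ∀ M, g c (L * M) * (K * √(2 * (c₀ * g c M ^ (-(1 / 2) : ℝ)))) ^ 4 < 1 := by
  obtain ⟨C, hC, hg⟩ := exists_g_mul_le hc hL
  obtain ⟨d, hd, hlt⟩ := exists_pos_mul_lt one_pos (4 * C * K ^ 4)
  refine ⟨√d, Real.sqrt_pos.2 hd, fun M => ?_⟩
  have hgM := g_pos c M
  have hsq : (g c M ^ (-(1 / 2) : ℝ)) ^ 2 = (g c M)⁻¹ := by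
    rw [← Real.rpow_mul_natCast hgM.le, ← Real.rpow_neg_one]
    norm_num
  have hpow : √(2 * (√d * g c M ^ (-(1 / 2) : ℝ))) ^ 4 = 4 * d * (g c M)⁻¹ := by
    rw [show 4 = 2 * 2 by rfl, pow_mul, Real.sq_sqrt (by positivity), mul_pow, mul_pow, hsq,
      Real.sq_sqrt hd.le]
    ring
  calc g c (L * M) * (K * √(2 * (√d * g c M ^ (-(1 / 2) : ℝ)))) ^ 4
      ≤ C * g c M * (K * √(2 * (√d * g c M ^ (-(1 / 2) : ℝ)))) ^ 4 := by gcongr; exact hg M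
    _ = 4 * C * K ^ 4 * d := by rw [mul_pow, hpow]; field_simp
    _ < 1 := hlt

end SmallEnergy

theorem longtime_small_energy_general {c : ℝ} (hc : 0 ≤ c) :
    ∃ c₀ > (0 : ℝ), ∃ CL0 > (0 : ℝ), ∀ (t₁ t₂ : ℝ) (u : ℝ → Space → ℝ) (E M : ℝ),
      IsClassicalSol c (Icc t₁ t₂) u → (∀ t ∈ Icc t₁ t₂, energy c u t ≤ E) →
      (∀ t ∈ Icc t₁ t₂, H2tildeNorm (u t) ≤ M) → E ≤ c₀ * g c M ^ (-(1 / 2) : ℝ) →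
      LtLxNorm 4 12 (Icc t₁ t₂) u ^ 4 ≤ CL0 := by
  obtain ⟨L, hL, hsob⟩ := exists_abs_le_mul_H2tildeNorm
  obtain ⟨K, hK⟩ := exists_scatteringSize_Ioo_le_of_energy_le
  obtain ⟨c₀, hc₀, hsmall⟩ := exists_pos_forall_g_mul_lt_one hc hL K
  have hg0 := g_pos c 0
  refine ⟨c₀, hc₀, 2 * (g c 0)⁻¹, by positivity, fun t₁ t₂ u E M hu hE hM hEM => ?_⟩
  have hsub : Ioo t₁ t₂ ⊆ Icc t₁ t₂ := Ioo_subset_Icc_self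
  have hsol := hu.mono hsub
  have hC2 : ∀ t ∈ Ioo t₁ t₂, ContDiff ℝ 2 (u t) := fun t ht => hsol.contDiff isOpen_Ioo ht
  refine LtLxNorm_four_pow_four_le (by positivity) (fun t ht => (hC2 t ht).continuous)
    hsol.compactSpt (hK hc hsol (N := L * M) (fun t ht x => ?_)
      (fun t ht => (hE t (hsub ht)).trans hEM) (hsmall M))
  refine (hsob _ (hC2 t ht) (hsol.compactSpt t ht) x).trans ?_
  gcongr
  exact hM t (hsub ht)

/-- Long time estimate, small energy regime. -/
theorem longtime_small_energy (c : ℝ) (hc : 0 < c) (hc' : c < 8 / 225) :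
    ∃ c₀ > (0:ℝ), ∃ CL0 > (0:ℝ),
      ∀ (t₁ t₂ : ℝ) (u : ℝ → Space → ℝ) (E M : ℝ),
        t₁ ≤ t₂ →
        IsClassicalSol c (Set.Icc t₁ t₂) u →
        (∀ t ∈ Set.Icc t₁ t₂, energy c u t = E) →
        (∀ t ∈ Set.Icc t₁ t₂, H2tildeNorm (u t) ≤ M) →
        E ≤ c₀ * (g c M) ^ (-(1/2) : ℝ) →
        (LtLxNorm 4 12 (Set.Icc t₁ t₂) u) ^ (4:ℕ) ≤ CL0 := by
  obtain ⟨c₀, hc₀, CL0, hCL0, h⟩ := longtime_small_energy_general hc.le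
  exact ⟨c₀, hc₀, CL0, hCL0, fun t₁ t₂ u E M _ hu hE => h t₁ t₂ u E M hu fun t ht => (hE t ht).le⟩
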